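/- arXiv:2507.18991 — 2 statements merged into one kernel-verified Lean document; each statement's English description precedes it below -/
import Mathlib

section
/- Let n ≥ 2 and N₀ > 0. Then there exist constants C > 0 and α > 0, depending only on n and N₀, with the following property: for every pair of harmonic functions u, v on the unit ball B₁ ⊂ ℝⁿ with u(0) = 0, N(0,u,r) ≤ N₀ for every r ∈ (0,1), ∫_{B_{1/2}} u² dx = 1, and Z(u) ⊆ Z(v), and for every r ∈ (0, 7/8), one has sup_{B_{r/2} ∖ Z(u)} |v/u| ≤ C·(r^{−α} ∫_{B_r} v² dx)^{1/2}. -/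
open MeasureTheory Metric Filter

/-- The Laplacian of `u : ℝⁿ → ℝ` at `x`, as the sum of second partial derivatives. -/
noncomputable def lapl {n : ℕ} (u : EuclideanSpace ℝ (Fin n) → ℝ)
    (x : EuclideanSpace ℝ (Fin n)) : ℝ :=
  ∑ i, fderiv ℝ (fun y => fderiv ℝ u y (EuclideanSpace.single i 1)) x (EuclideanSpace.single i 1)

/-- `u` is harmonic on all of ℝⁿ: it is C² and its Laplacian vanishes identically. -/
def HarmonicFn {n : ℕ} (u : EuclideanSpace ℝ (Fin n) → ℝ) : Prop :=
  ContDiff ℝ 2 u ∧ ∀ x, lapl u x = 0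

/-- `u` is harmonic on the (open) set `Ω`: it is C² on `Ω` and its Laplacian vanishes on `Ω`. -/
def HarmonicFnOn {n : ℕ} (u : EuclideanSpace ℝ (Fin n) → ℝ)
    (Ω : Set (EuclideanSpace ℝ (Fin n))) : Prop :=
  ContDiffOn ℝ 2 u Ω ∧ ∀ x ∈ Ω, lapl u x = 0

/-- The Dirichlet integral `D(x₀,u,r) = ∫_{B_r(x₀)} |∇u|² dx`. -/
noncomputable def DInt {n : ℕ} (u : EuclideanSpace ℝ (Fin n) → ℝ)
    (x₀ : EuclideanSpace ℝ (Fin n)) (r : ℝ) : ℝ :=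
  ∫ x in Metric.ball x₀ r, ‖gradient u x‖ ^ 2

/-- The height `H(x₀,u,r) = ∫_{∂B_r(x₀)} u² dσ`, with respect to the
`(n-1)`-dimensional Hausdorff measure on the sphere. -/
noncomputable def HInt {n : ℕ} (u : EuclideanSpace ℝ (Fin n) → ℝ)
    (x₀ : EuclideanSpace ℝ (Fin n)) (r : ℝ) : ℝ :=
  ∫ x in Metric.sphere x₀ r, (u x) ^ 2 ∂ μH[(n : ℝ) - 1]

/-- The Almgren frequency `N(x₀,u,r) = r · D(x₀,u,r) / H(x₀,u,r)`. -/
noncomputable def freqN {n : ℕ} (u : EuclideanSpace ℝ (Fin n) → ℝ)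
    (x₀ : EuclideanSpace ℝ (Fin n)) (r : ℝ) : ℝ :=
  r * DInt u x₀ r / HInt u x₀ r

/-!
Averages over spheres are replaced by averages `F(x, t)` of `u²(x + t y)` against a smooth weight
vanishing on the unit sphere. For harmonic `u` the identities `F' = 2 Q / t` and `Q' = 2 B / t`,
with energies satisfying `Q² ≤ B F` by Cauchy–Schwarz, say that `log F` is convex in `log t`. The
frequency bound at the origin limits the growth of `F(0, ·)`; comparing overlapping balls at the
largest scale and using convexity, `u` is doubling with a lower bound `F(x, t) ≥ c t ^ κ` near every
point `x`.

The nodal hypothesis enters only through one fact: as `v = 0` wherever `u = 0`, the function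
`(|v| - M |u| - δ)₊³` is `C²` and subharmonic. Suppose `|v| ≤ M |u| + A` on a ball. By a
Paley–Zygmund argument, doubling prevents `u` from being small on a fixed fraction of the ball, so
after a slight increase of `M` the mean value inequality improves `A` by a fixed factor at the
centre. Iterating on shrinking balls drives `A` to `0` while `M` stays bounded. The initial `A` is
the mean value bound for `v`, and the lower bound of `F` produces the power `r ^ (-α)`.
-/

open scoped Topology

local notation "𝔼" n:max => EuclideanSpace ℝ (Fin n)

/-! ### Partial derivatives and the Laplacian -/

section Laplacian

variable {n : ℕ} {f g : 𝔼 n → ℝ} {x : 𝔼 n}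

/-- The `i`-th partial derivative, as a function on the whole space, so that `lapl` is the sum
of its iterates. -/
noncomputable def pderiv (i : Fin n) (f : 𝔼 n → ℝ) (x : 𝔼 n) : ℝ :=
  fderiv ℝ f x (EuclideanSpace.single i 1)

lemma lapl_eq_sum_pderiv (f : 𝔼 n → ℝ) (x : 𝔼 n) : lapl f x = ∑ i, pderiv i (pderiv i f) x := rfl

lemma contDiff_pderiv {k m : WithTop ℕ∞} (hf : ContDiff ℝ k f) (hmk : m + 1 ≤ k) (i : Fin n) :
    ContDiff ℝ m (pderiv i f) :=
  (hf.fderiv_right hmk).clm_apply contDiff_const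

lemma differentiable_pderiv (hf : ContDiff ℝ 2 f) (i : Fin n) : Differentiable ℝ (pderiv i f) :=
  (contDiff_pderiv (m := 1) hf one_add_one_eq_two.le i).differentiable one_ne_zero

lemma continuous_pderiv (hf : ContDiff ℝ 1 f) (i : Fin n) : Continuous (pderiv i f) :=
  (contDiff_pderiv (m := 0) hf (zero_add 1).le i).continuous

lemma fderiv_apply_eq_sum_pderiv (f : 𝔼 n → ℝ) (x z : 𝔼 n) :
    fderiv ℝ f x z = ∑ i, z i * pderiv i f x := by
  conv_lhs => rw [← (EuclideanSpace.basisFun (Fin n) ℝ).sum_repr z]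
  simp [pderiv]

lemma norm_gradient_sq (f : 𝔼 n → ℝ) (x : 𝔼 n) : ‖gradient f x‖ ^ 2 = ∑ i, pderiv i f x ^ 2 := by
  rw [EuclideanSpace.norm_sq_eq]
  refine Finset.sum_congr rfl fun i _ => ?_
  have h : inner ℝ (gradient f x) (EuclideanSpace.single i 1) = pderiv i f x :=
    InnerProductSpace.toDual_symm_apply
  rw [← h, EuclideanSpace.inner_single_right]
  simp

lemma lapl_congr_of_eventuallyEq (h : f =ᶠ[𝓝 x] g) : lapl f x = lapl g x := by
  simp only [lapl_eq_sum_pderiv, pderiv]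
  refine Finset.sum_congr rfl fun i _ => ?_
  rw [Filter.EventuallyEq.fderiv_eq]
  filter_upwards [h.fderiv (𝕜 := ℝ)] with y hy using by rw [pderiv, pderiv, hy]

lemma hasFDerivAt_comp_add_smul (hf : Differentiable ℝ f) (x : 𝔼 n) (t : ℝ) (y : 𝔼 n) :
    HasFDerivAt (fun y => f (x + t • y)) (t • fderiv ℝ f (x + t • y)) y := by
  have h : HasFDerivAt (fun y : 𝔼 n => x + t • y) (t • ContinuousLinearMap.id ℝ (𝔼 n)) y :=
    ((hasFDerivAt_id y).const_smul t).const_add x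
  simpa [Function.comp_def] using (hf (x + t • y)).hasFDerivAt.comp y h

lemma hasDerivAt_comp_add_smul (hf : Differentiable ℝ f) (x : 𝔼 n) (t : ℝ) (y : 𝔼 n) :
    HasDerivAt (fun t : ℝ => f (x + t • y)) (fderiv ℝ f (x + t • y) y) t := by
  have h : HasDerivAt (fun t : ℝ => x + t • y) y t := by
    simpa using ((hasDerivAt_id t).smul_const y).const_add x
  exact (hf (x + t • y)).hasFDerivAt.comp_hasDerivAt t h

lemma pderiv_comp_add_smul (hf : Differentiable ℝ f) (x : 𝔼 n) (t : ℝ) (i : Fin n) :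
    pderiv i (fun y => f (x + t • y)) = fun y => t * pderiv i f (x + t • y) := by
  ext y
  simp [pderiv, (hasFDerivAt_comp_add_smul hf x t y).fderiv]

lemma lapl_comp_add_smul (hf : ContDiff ℝ 2 f) (x : 𝔼 n) (t : ℝ) (y : 𝔼 n) :
    lapl (fun y => f (x + t • y)) y = t ^ 2 * lapl f (x + t • y) := by
  simp only [lapl_eq_sum_pderiv, Finset.mul_sum]
  refine Finset.sum_congr rfl fun i _ => ?_
  have hd : HasFDerivAt (fun y => t * pderiv i f (x + t • y)) _ y :=
    (hasFDerivAt_comp_add_smul (differentiable_pderiv hf i) x t y).const_mul t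
  rw [pderiv_comp_add_smul (hf.differentiable two_ne_zero), pderiv, hd.fderiv]
  simp [pderiv, sq, mul_assoc]

lemma lapl_comp {ψ ψ' ψ'' : ℝ → ℝ} (hψ : ∀ t, HasDerivAt ψ (ψ' t) t)
    (hψ' : ∀ t, HasDerivAt ψ' (ψ'' t) t) (hf : ContDiff ℝ 2 f) (x : 𝔼 n) :
    lapl (fun y => ψ (f y)) x
      = ψ'' (f x) * ∑ i, pderiv i f x ^ 2 + ψ' (f x) * lapl f x := by
  have hd (y : 𝔼 n) : HasFDerivAt f (fderiv ℝ f y) y :=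
    (hf.differentiable two_ne_zero y).hasFDerivAt
  simp only [lapl_eq_sum_pderiv, Finset.mul_sum, ← Finset.sum_add_distrib]
  refine Finset.sum_congr rfl fun i _ => ?_
  have hfirst : pderiv i (fun y => ψ (f y)) = fun y => ψ' (f y) * pderiv i f y := by
    ext y
    have h : HasFDerivAt (fun y => ψ (f y)) _ y := (hψ (f y)).comp_hasFDerivAt y (hd y)
    simp [pderiv, h.fderiv]
  have hsecond : HasFDerivAt (fun y => ψ' (f y) * pderiv i f y) _ x :=
    ((hψ' (f x)).comp_hasFDerivAt x (hd x)).mul (differentiable_pderiv hf i x).hasFDerivAt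
  rw [hfirst, pderiv, hsecond.fderiv]
  simp [pderiv]
  ring

lemma lapl_sub_const_mul_sub_const (hf : ContDiff ℝ 2 f) (hg : ContDiff ℝ 2 g) (a b c : ℝ)
    (x : 𝔼 n) : lapl (fun y => a * f y - b * g y - c) x = a * lapl f x - b * lapl g x := by
  simp only [lapl_eq_sum_pderiv, Finset.mul_sum, ← Finset.sum_sub_distrib]
  refine Finset.sum_congr rfl fun i _ => ?_
  have hfirst : pderiv i (fun y => a * f y - b * g y - c)
      = fun y => a * pderiv i f y - b * pderiv i g y := by
    ext y
    have h : HasFDerivAt (fun y => a * f y - b * g y - c) _ y :=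
      (((hf.differentiable two_ne_zero y).hasFDerivAt.const_mul a).sub
        ((hg.differentiable two_ne_zero y).hasFDerivAt.const_mul b)).sub_const c
    simp [pderiv, h.fderiv]
  have hsecond : HasFDerivAt (fun y => a * pderiv i f y - b * pderiv i g y) _ x :=
    ((differentiable_pderiv hf i x).hasFDerivAt.const_mul a).sub
      ((differentiable_pderiv hg i x).hasFDerivAt.const_mul b)
  rw [hfirst, pderiv, hsecond.fderiv]
  simp [pderiv]

lemma lapl_sq_of_lapl_eq_zero (hf : ContDiff ℝ 2 f) (hx : lapl f x = 0) :
    lapl (fun y => f y ^ 2) x = 2 * ∑ i, pderiv i f x ^ 2 := by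
  have hψ (t : ℝ) : HasDerivAt (fun t : ℝ => t ^ 2) (2 * t) t := by
    simpa using hasDerivAt_pow 2 t
  have hψ' (t : ℝ) : HasDerivAt (fun t : ℝ => 2 * t) 2 t := by
    simpa using (hasDerivAt_id t).const_mul (2 : ℝ)
  rw [lapl_comp hψ hψ' hf, hx, mul_zero, add_zero]

lemma exists_contDiff_eqOn_ball {k : ℕ∞} {R R' : ℝ} (hf : ContDiffOn ℝ k f (ball x R'))
    (hR : 0 < R) (hRR' : R < R') :
    ∃ g : 𝔼 n → ℝ, ContDiff ℝ k g ∧ Set.EqOn g f (ball x R) := by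
  let b : ContDiffBump x := ⟨R, (R + R') / 2, hR, by linarith⟩
  refine ⟨fun y => b y * f y, contDiff_iff_contDiffAt.2 fun y => ?_, fun y hy => ?_⟩
  · by_cases hy : y ∈ ball x R'
    · exact b.contDiffAt.mul (hf.contDiffAt (isOpen_ball.mem_nhds hy))
    · have hy' : y ∈ (closedBall x ((R + R') / 2))ᶜ := by
        simp only [mem_ball, not_lt, Set.mem_compl_iff, mem_closedBall, not_le] at hy ⊢
        linarith
      refine (contDiffAt_const (c := 0)).congr_of_eventuallyEq ?_
      filter_upwards [isClosed_closedBall.isOpen_compl.mem_nhds hy'] with z hz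
      simp only [Set.mem_compl_iff, mem_closedBall, not_le] at hz
      rw [b.zero_of_le_dist hz.le, zero_mul]
  · simp only [b.one_of_mem_closedBall (ball_subset_closedBall hy), one_mul]

end Laplacian

/-! ### Weighted averages over balls -/

section Kernel

lemma hasDerivAt_max_zero_pow (k : ℕ) (t : ℝ) :
    HasDerivAt (fun t : ℝ => max t 0 ^ (k + 2)) ((k + 2) * max t 0 ^ (k + 1)) t := by
  have hneg {t : ℝ} (ht : t ≤ 0) : HasDerivWithinAt (fun t : ℝ => max t 0 ^ (k + 2))
      ((k + 2) * max t 0 ^ (k + 1)) (Set.Iic 0) t := by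
    rw [max_eq_right ht, zero_pow k.succ_ne_zero, mul_zero]
    refine (hasDerivWithinAt_const t (Set.Iic 0) (0 : ℝ)).congr (fun y hy => ?_) ?_
    · rw [max_eq_right hy, zero_pow (by lia)]
    · rw [max_eq_right ht, zero_pow (by lia)]
  have hpos {t : ℝ} (ht : 0 ≤ t) : HasDerivWithinAt (fun t : ℝ => max t 0 ^ (k + 2))
      ((k + 2) * max t 0 ^ (k + 1)) (Set.Ici 0) t := by
    rw [max_eq_left ht]
    have h := (hasDerivAt_pow (k + 2) t).hasDerivWithinAt (s := Set.Ici 0)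
    push_cast at h
    exact h.congr (fun y hy => by rw [max_eq_left hy]) (by rw [max_eq_left ht])
  rcases lt_trichotomy t 0 with h | rfl | h
  · exact (hneg h.le).hasDerivAt (Iic_mem_nhds h)
  · simpa [Set.Iic_union_Ici] using (hneg le_rfl).union (hpos le_rfl)
  · exact (hpos h.le).hasDerivAt (Ici_mem_nhds h)

lemma contDiff_max_zero_pow (k : ℕ) : ContDiff ℝ k fun t : ℝ => max t 0 ^ (k + 1) := by
  induction k with
  | zero => simpa using continuous_id.max continuous_const
  | succ k ih =>
    rw [Nat.cast_add, Nat.cast_one, contDiff_succ_iff_deriv]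
    refine ⟨fun t => (hasDerivAt_max_zero_pow k t).differentiableAt, by simp, ?_⟩
    rw [funext fun t => (hasDerivAt_max_zero_pow k t).deriv]
    exact contDiff_const.mul ih

variable {n : ℕ} {f : 𝔼 n → ℝ}

/-- The weight `(1 - |y|²)₊³` against which the Dirichlet energy is averaged. -/
noncomputable def energyKernel (y : 𝔼 n) : ℝ := max (1 - ‖y‖ ^ 2) 0 ^ 3

/-- The weight `6 (1 - |y|²)₊²` against which the height is averaged; it is chosen so that
`∇ energyKernel = - heightKernel • y`. -/
noncomputable def heightKernel (y : 𝔼 n) : ℝ := 6 * max (1 - ‖y‖ ^ 2) 0 ^ 2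

lemma energyKernel_nonneg (y : 𝔼 n) : 0 ≤ energyKernel y := by
  unfold energyKernel
  positivity

lemma heightKernel_nonneg (y : 𝔼 n) : 0 ≤ heightKernel y := by
  unfold heightKernel
  positivity

lemma heightKernel_le (y : 𝔼 n) : heightKernel y ≤ 6 := by
  have h : max (1 - ‖y‖ ^ 2) 0 ≤ 1 := max_le (by linarith [sq_nonneg ‖y‖]) zero_le_one
  have := pow_le_one₀ (n := 2) (le_max_right (1 - ‖y‖ ^ 2) 0) h
  unfold heightKernel
  linarith

lemma le_heightKernel {y : 𝔼 n} {θ : ℝ} (hy : ‖y‖ ≤ θ) (hθ : θ ≤ 1) :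
    6 * (1 - θ ^ 2) ^ 2 ≤ heightKernel y := by
  have h : 1 - θ ^ 2 ≤ max (1 - ‖y‖ ^ 2) 0 := le_max_of_le_left (by gcongr)
  have h0 : 0 ≤ 1 - θ ^ 2 := by nlinarith [norm_nonneg y]
  unfold heightKernel
  gcongr

lemma energyKernel_eq_zero {y : 𝔼 n} (hy : 1 ≤ ‖y‖) : energyKernel y = 0 := by
  rw [energyKernel, max_eq_right (by nlinarith), zero_pow three_ne_zero]

lemma heightKernel_eq_zero {y : 𝔼 n} (hy : 1 ≤ ‖y‖) : heightKernel y = 0 := by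
  rw [heightKernel, max_eq_right (by nlinarith), zero_pow two_ne_zero, mul_zero]

lemma heightKernel_pos {y : 𝔼 n} (hy : ‖y‖ < 1) : 0 < heightKernel y := by
  have : 0 < 1 - ‖y‖ ^ 2 := by nlinarith [norm_nonneg y]
  rw [heightKernel, max_eq_left this.le]
  positivity

lemma contDiff_energyKernel : ContDiff ℝ 2 (energyKernel (n := n)) :=
  (contDiff_max_zero_pow 2).comp (contDiff_const.sub (contDiff_norm_sq ℝ))

lemma continuous_energyKernel : Continuous (energyKernel (n := n)) :=
  contDiff_energyKernel.continuous

lemma continuous_heightKernel : Continuous (heightKernel (n := n)) := by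
  unfold heightKernel
  fun_prop

lemma fderiv_energyKernel (y z : 𝔼 n) :
    fderiv ℝ energyKernel y z = -(heightKernel y * inner ℝ y z) := by
  have hnorm : HasFDerivAt (fun y : 𝔼 n => 1 - ‖y‖ ^ 2) (0 - 2 • innerSL ℝ y) y :=
    (hasFDerivAt_const (1 : ℝ) y).sub (hasStrictFDerivAt_norm_sq y).hasFDerivAt
  have h := (hasDerivAt_max_zero_pow 1 (1 - ‖y‖ ^ 2)).comp_hasFDerivAt y hnorm
  have hkernel : HasFDerivAt energyKernel _ y := h
  rw [hkernel.fderiv]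
  simp [heightKernel]
  ring

lemma hasCompactSupport_energyKernel : HasCompactSupport (energyKernel (n := n)) :=
  HasCompactSupport.intro (isCompact_closedBall 0 1) fun x hx =>
    energyKernel_eq_zero (by simpa using (not_le.1 (by simpa using hx)).le)

lemma hasCompactSupport_heightKernel : HasCompactSupport (heightKernel (n := n)) :=
  HasCompactSupport.intro (isCompact_closedBall 0 1) fun x hx =>
    heightKernel_eq_zero (by simpa using (not_le.1 (by simpa using hx)).le)

lemma integrable_mul_energyKernel (hf : Continuous f) :
    Integrable fun y => f y * energyKernel y :=
  (hf.mul continuous_energyKernel).integrable_of_hasCompactSupport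
    hasCompactSupport_energyKernel.mul_left

lemma integrable_mul_heightKernel (hf : Continuous f) :
    Integrable fun y => f y * heightKernel y :=
  (hf.mul continuous_heightKernel).integrable_of_hasCompactSupport
    hasCompactSupport_heightKernel.mul_left

end Kernel

section Green

variable {n : ℕ} {f g : 𝔼 n → ℝ} {x : 𝔼 n} {t R : ℝ}

lemma integral_pderiv_mul_energyKernel (hf : ContDiff ℝ 1 f) (i : Fin n) :
    ∫ y, pderiv i f y * energyKernel y = ∫ y, f y * y i * heightKernel y := by
  have hkernel (y : 𝔼 n) : fderiv ℝ energyKernel y (EuclideanSpace.single i 1)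
      = -(y i * heightKernel y) := by
    rw [fderiv_energyKernel, EuclideanSpace.inner_single_right]
    simp [mul_comm]
  have h := integral_mul_fderiv_eq_neg_fderiv_mul_of_integrable (μ := volume) (f := f)
    (g := energyKernel) (v := EuclideanSpace.single i 1)
    (integrable_mul_energyKernel (continuous_pderiv hf i)) ?_
    (integrable_mul_energyKernel hf.continuous)
    (fun y _ => hf.differentiable one_ne_zero y)
    (fun y _ => contDiff_energyKernel.differentiable two_ne_zero y)
  · simp only [hkernel, mul_neg, integral_neg, neg_inj, ← mul_assoc] at h
    exact h.symm
  · simpa only [hkernel, mul_neg, ← mul_assoc, Pi.neg_def] using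
      (integrable_mul_heightKernel (f := fun y => f y * y i)
        (hf.continuous.mul (by fun_prop))).neg

/-- The kernels are related by `∇ energyKernel = - heightKernel • y`, so this is the divergence
theorem for `g ∇f`. -/
lemma integral_fderiv_self_mul_heightKernel (hf : ContDiff ℝ 2 f) (hg : ContDiff ℝ 1 g) :
    ∫ y, fderiv ℝ f y y * g y * heightKernel y
      = ∫ y, (∑ i, pderiv i f y * pderiv i g y + g y * lapl f y) * energyKernel y := by
  have hcont (i : Fin n) : ContDiff ℝ 1 fun y => pderiv i f y * g y :=
    (contDiff_pderiv hf one_add_one_eq_two.le i).mul hg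
  have hprod (i : Fin n) (y : 𝔼 n) : pderiv i (fun y => pderiv i f y * g y) y
      = pderiv i f y * pderiv i g y + g y * pderiv i (pderiv i f) y := by
    have h : HasFDerivAt (fun y => pderiv i f y * g y) _ y :=
      (differentiable_pderiv hf i y).hasFDerivAt.mul
        (hg.differentiable one_ne_zero y).hasFDerivAt
    rw [pderiv, h.fderiv]
    simp [pderiv]
  calc ∫ y, fderiv ℝ f y y * g y * heightKernel y
      = ∫ y, ∑ i, pderiv i f y * g y * y i * heightKernel y := by
        refine integral_congr_ae (.of_forall fun y => ?_)
        simp only [fderiv_apply_eq_sum_pderiv, Finset.sum_mul]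
        exact Finset.sum_congr rfl fun i _ => by ring
    _ = ∑ i, ∫ y, pderiv i f y * g y * y i * heightKernel y :=
        integral_finsetSum _ fun i _ =>
          integrable_mul_heightKernel ((hcont i).continuous.mul (by fun_prop))
    _ = ∑ i, ∫ y, pderiv i (fun y => pderiv i f y * g y) y * energyKernel y :=
        Finset.sum_congr rfl fun i _ => (integral_pderiv_mul_energyKernel (hcont i) i).symm
    _ = ∫ y, ∑ i, pderiv i (fun y => pderiv i f y * g y) y * energyKernel y :=
        (integral_finsetSum _ fun i _ =>
          integrable_mul_energyKernel (continuous_pderiv (hcont i) i)).symm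
    _ = ∫ y, (∑ i, pderiv i f y * pderiv i g y + g y * lapl f y) * energyKernel y := by
        simp only [hprod, lapl_eq_sum_pderiv, Finset.mul_sum, ← Finset.sum_add_distrib,
          Finset.sum_mul]

lemma integral_fderiv_comp_add_smul_mul_heightKernel (hf : ContDiff ℝ 2 f)
    (hg : ContDiff ℝ 1 g) (x : 𝔼 n) (t : ℝ) :
    ∫ y, t * fderiv ℝ f (x + t • y) y * g y * heightKernel y
      = ∫ y, (∑ i, t * pderiv i f (x + t • y) * pderiv i g y
          + g y * (t ^ 2 * lapl f (x + t • y))) * energyKernel y := by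
  have hd : Differentiable ℝ f := hf.differentiable two_ne_zero
  have h := integral_fderiv_self_mul_heightKernel (f := fun y => f (x + t • y))
    (hf.comp (by fun_prop)) hg
  simpa only [pderiv_comp_add_smul hd, lapl_comp_add_smul hf,
    (hasFDerivAt_comp_add_smul hd x t _).fderiv, _root_.smul_apply, smul_eq_mul] using h

lemma add_smul_mem_ball (ht : 0 ≤ t) (htR : t < R) {y : 𝔼 n} (hy : ‖y‖ ≤ 1) :
    x + t • y ∈ ball x R := by
  rw [mem_ball_iff_norm, add_sub_cancel_left, norm_smul, Real.norm_of_nonneg ht]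
  nlinarith [norm_nonneg y]

lemma add_smul_mem_ball_of_le (ht : 0 < t) {y : 𝔼 n} (hy : ‖y‖ < 1) : x + t • y ∈ ball x t := by
  rw [mem_ball_iff_norm, add_sub_cancel_left, norm_smul, Real.norm_of_nonneg ht.le]
  nlinarith [norm_nonneg y]

lemma hasDerivAt_integral_mul_of_hasCompactSupport {E : Type*} [TopologicalSpace E]
    [MeasurableSpace E] [OpensMeasurableSpace E] {μ : Measure E} [IsFiniteMeasureOnCompacts μ]
    {Φ Φ' : ℝ → E → ℝ} {k : E → ℝ}
    (hΦ : Continuous (Function.uncurry Φ)) (hΦ' : Continuous (Function.uncurry Φ'))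
    (hd : ∀ t y, HasDerivAt (fun t => Φ t y) (Φ' t y) t)
    (hk : Continuous k) (hk₀ : HasCompactSupport k) (t₀ : ℝ) :
    HasDerivAt (fun t => ∫ y, Φ t y * k y ∂μ) (∫ y, Φ' t₀ y * k y ∂μ) t₀ := by
  obtain ⟨B, hB⟩ := ((isCompact_Icc (a := t₀ - 1) (b := t₀ + 1)).prod hk₀
    ).exists_bound_of_continuousOn hΦ'.continuousOn
  have hc (t : ℝ) : Continuous (Φ t) := hΦ.comp (by fun_prop : Continuous fun y : E => (t, y))
  have hc' : Continuous (Φ' t₀) := hΦ'.comp (by fun_prop : Continuous fun y : E => (t₀, y))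
  have hmeas {h : E → ℝ} (hh : Continuous h) : AEStronglyMeasurable (fun y => h y * k y) μ :=
    ((hh.mul hk).stronglyMeasurable_of_hasCompactSupport hk₀.mul_left).aestronglyMeasurable
  refine (hasDerivAt_integral_of_dominated_loc_of_deriv_le (F := fun t y => Φ t y * k y)
    (F' := fun t y => Φ' t y * k y) (bound := fun y => B * ‖k y‖)
    (Icc_mem_nhds (by linarith : t₀ - 1 < t₀) (by linarith : t₀ < t₀ + 1))
    (.of_forall fun t => hmeas (hc t))
    (((hc t₀).mul hk).integrable_of_hasCompactSupport hk₀.mul_left) (hmeas hc')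
    (.of_forall fun y t ht => ?_)
    ((continuous_const.mul hk.norm).integrable_of_hasCompactSupport hk₀.norm.mul_left)
    (.of_forall fun y t _ => (hd t y).mul_const _)).2
  by_cases hy : y ∈ tsupport k
  · rw [norm_mul]
    exact mul_le_mul_of_nonneg_right (hB (t, y) ⟨ht, hy⟩) (norm_nonneg _)
  · simp [image_eq_zero_of_notMem_tsupport hy]

lemma continuous_comp_add_smul (hf : Continuous f) (x : 𝔼 n) :
    Continuous fun p : ℝ × 𝔼 n => f (x + p.1 • p.2) :=
  hf.comp (by fun_prop)

lemma continuous_fderiv_comp_add_smul (hf : ContDiff ℝ 1 f) (x : 𝔼 n) :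
    Continuous fun p : ℝ × 𝔼 n => fderiv ℝ f (x + p.1 • p.2) p.2 :=
  ((hf.continuous_fderiv one_ne_zero).comp (by fun_prop)).clm_apply continuous_snd

lemma monotoneOn_integral_mul_heightKernel (hf : ContDiff ℝ 2 f)
    (hsub : ∀ y ∈ ball x R, 0 ≤ lapl f y) :
    MonotoneOn (fun t : ℝ => ∫ y, f (x + t • y) * heightKernel y) (Set.Icc 0 R) := by
  have hd (t : ℝ) : HasDerivAt (fun t : ℝ => ∫ y, f (x + t • y) * heightKernel y)
      (∫ y, fderiv ℝ f (x + t • y) y * heightKernel y) t :=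
    hasDerivAt_integral_mul_of_hasCompactSupport (continuous_comp_add_smul hf.continuous x)
      (continuous_fderiv_comp_add_smul (hf.of_le one_le_two) x)
      (hasDerivAt_comp_add_smul (hf.differentiable two_ne_zero) x)
      continuous_heightKernel hasCompactSupport_heightKernel t
  refine monotoneOn_of_deriv_nonneg (convex_Icc 0 R)
    (fun t _ => (hd t).continuousAt.continuousWithinAt)
    (fun t _ => (hd t).differentiableAt.differentiableWithinAt) fun t ht => ?_
  rw [interior_Icc] at ht
  rw [(hd t).deriv]
  have hgreen := integral_fderiv_comp_add_smul_mul_heightKernel (g := fun _ => 1) hf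
    contDiff_const x t
  have hright : 0 ≤ ∫ y, (∑ i, t * pderiv i f (x + t • y) * pderiv i (fun _ => 1) y
      + 1 * (t ^ 2 * lapl f (x + t • y))) * energyKernel y := by
    refine integral_nonneg fun y => ?_
    rcases le_or_gt 1 ‖y‖ with hy | hy
    · simp [energyKernel_eq_zero hy]
    · have := hsub _ (add_smul_mem_ball ht.1.le ht.2 hy.le)
      have := energyKernel_nonneg y
      simp only [pderiv, fderiv_fun_const, Pi.zero_apply, _root_.zero_apply, mul_zero,
        Finset.sum_const_zero, zero_add]
      positivity
  simp only [mul_one, mul_assoc] at hgreen hright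
  rw [← hgreen, integral_const_mul] at hright
  exact nonneg_of_mul_nonneg_right hright ht.1

/-- The total mass of `heightKernel`. -/
noncomputable def heightMass (n : ℕ) : ℝ := ∫ y : 𝔼 n, heightKernel y

lemma integrable_heightKernel : Integrable (heightKernel (n := n)) :=
  continuous_heightKernel.integrable_of_hasCompactSupport hasCompactSupport_heightKernel

lemma heightMass_pos (n : ℕ) : 0 < heightMass n :=
  continuous_heightKernel.integral_pos_of_hasCompactSupport_nonneg_nonzero
    hasCompactSupport_heightKernel heightKernel_nonneg
    (heightKernel_pos (y := (0 : 𝔼 n)) (by simp)).ne'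

lemma mul_heightMass_le (hR : 0 < R) {R' : ℝ} (hRR' : R < R') (hf : ContDiffOn ℝ 2 f (ball x R'))
    (hsub : ∀ y ∈ ball x R, 0 ≤ lapl f y) :
    f x * heightMass n ≤ ∫ y, f (x + R • y) * heightKernel y := by
  obtain ⟨g, hg, hgf⟩ := exists_contDiff_eqOn_ball (k := 2) hf hR hRR'
  have hgsub : ∀ y ∈ ball x R, 0 ≤ lapl g y := fun y hy => by
    rw [lapl_congr_of_eventuallyEq (hgf.eventuallyEq_of_mem (isOpen_ball.mem_nhds hy))]
    exact hsub y hy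
  have hmono := monotoneOn_integral_mul_heightKernel hg hgsub ⟨le_rfl, hR.le⟩ ⟨hR.le, le_rfl⟩ hR.le
  simp only [zero_smul, add_zero, integral_const_mul] at hmono
  rw [← hgf (mem_ball_self hR)]
  refine hmono.trans_eq (integral_congr_ae (.of_forall fun y => ?_))
  rcases le_or_gt 1 ‖y‖ with hy | hy
  · simp [heightKernel_eq_zero hy]
  · simp only [hgf (add_smul_mem_ball_of_le hR hy)]

end Green

/-! ### Monotonicity of the smoothed frequency -/

section Growth

lemma hasDerivAt_div_rpow {F : ℝ → ℝ} {F' κ t : ℝ} (ht : 0 < t) (hF : HasDerivAt F F' t) :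
    HasDerivAt (fun t => F t / t ^ κ) ((t * F' - κ * F t) / t ^ (κ + 1)) t := by
  have hpow := Real.hasDerivAt_rpow_const (p := κ) (Or.inl ht.ne')
  refine (hF.fun_div hpow (Real.rpow_pos_of_pos ht κ).ne').congr_deriv ?_
  rw [Real.rpow_sub_one ht.ne', Real.rpow_add_one ht.ne']
  have := (Real.rpow_pos_of_pos ht κ).ne'
  field_simp

lemma le_rpow_mul_of_mul_deriv_le {F F' : ℝ → ℝ} {κ s t : ℝ} (hs : 0 < s) (hst : s ≤ t)
    (hF : ∀ τ ∈ Set.Icc s t, HasDerivAt F (F' τ) τ)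
    (hle : ∀ τ ∈ Set.Icc s t, τ * F' τ ≤ κ * F τ) : F t ≤ (t / s) ^ κ * F s := by
  have hd (τ) (hτ : τ ∈ Set.Icc s t) := hasDerivAt_div_rpow (κ := κ) (hs.trans_le hτ.1) (hF τ hτ)
  have hanti : AntitoneOn (fun τ => F τ / τ ^ κ) (Set.Icc s t) := by
    refine antitoneOn_of_deriv_nonpos (convex_Icc s t)
      (fun τ hτ => (hd τ hτ).continuousAt.continuousWithinAt)
      (fun τ hτ => (hd τ (interior_subset hτ)).differentiableAt.differentiableWithinAt)
      fun τ hτ => ?_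
    have hτ := interior_subset hτ
    rw [(hd τ hτ).deriv]
    exact div_nonpos_of_nonpos_of_nonneg (sub_nonpos.2 (hle τ hτ))
      (Real.rpow_nonneg (hs.le.trans hτ.1) _)
  have hts := hanti ⟨le_rfl, hst⟩ ⟨hst, le_rfl⟩ hst
  have ht : 0 < t := hs.trans_le hst
  rw [div_le_iff₀ (Real.rpow_pos_of_pos ht κ)] at hts
  rw [Real.div_rpow ht.le hs.le]
  exact hts.trans_eq (by ring)

/-- If `log F` is a convex function of `log t`, a growth bound between `b` and `c` propagates
to all smaller scales. Here `a / 2` plays the role of the frequency. -/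
lemma le_rpow_mul_of_monotoneOn {F a : ℝ → ℝ} {κ R b c s t : ℝ} (hb : 0 < b) (hbc : b < c)
    (hcR : c < R) (hF : ∀ τ ∈ Set.Ioo 0 R, HasDerivAt F (a τ * F τ / τ) τ)
    (hFpos : ∀ τ, 0 < F τ) (ha : MonotoneOn a (Set.Ioo 0 R)) (hgrowth : F c ≤ (c / b) ^ κ * F b)
    (hs : 0 < s) (hst : s ≤ t) (htb : t ≤ b) : F t ≤ (t / s) ^ κ * F s := by
  refine le_rpow_mul_of_mul_deriv_le hs hst (F' := fun τ => a τ * F τ / τ)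
    (fun τ hτ => hF τ ⟨hs.trans_le hτ.1, by linarith [hτ.2]⟩) fun τ hτ => ?_
  have hτ₀ : 0 < τ := hs.trans_le hτ.1
  rw [mul_div_cancel₀ _ hτ₀.ne']
  refine mul_le_mul_of_nonneg_right (not_lt.1 fun hκ => ?_) (hFpos τ).le
  have hd (σ) (hσ : σ ∈ Set.Icc b c) :=
    hasDerivAt_div_rpow (κ := κ) (hb.trans_le hσ.1) (hF σ ⟨by linarith [hσ.1], by linarith [hσ.2]⟩)
  have hmono : StrictMonoOn (fun σ => F σ / σ ^ κ) (Set.Icc b c) := by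
    refine strictMonoOn_of_deriv_pos (convex_Icc b c)
      (fun σ hσ => (hd σ hσ).continuousAt.continuousWithinAt) fun σ hσ => ?_
    have hσ := interior_subset hσ
    have hσ₀ : 0 < σ := hb.trans_le hσ.1
    have haσ : a τ ≤ a σ := ha ⟨hτ₀, by linarith [hτ.2]⟩ ⟨hσ₀, by linarith [hσ.2]⟩
      (by linarith [hτ.2, hσ.1])
    rw [(hd σ hσ).deriv, mul_div_cancel₀ _ hσ₀.ne', ← sub_mul]
    exact div_pos (mul_pos (by linarith) (hFpos σ)) (Real.rpow_pos_of_pos hσ₀ _)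
  have hlt := hmono ⟨le_rfl, hbc.le⟩ ⟨hbc.le, le_rfl⟩ hbc
  rw [lt_div_iff₀ (Real.rpow_pos_of_pos (hb.trans hbc) κ)] at hlt
  rw [Real.div_rpow (hb.trans hbc).le hb.le, div_mul_eq_mul_div, mul_comm, ← div_mul_eq_mul_div]
    at hgrowth
  exact hlt.not_ge hgrowth

end Growth

section Frequency

variable {n : ℕ} {f : 𝔼 n → ℝ} {x : 𝔼 n} {t R : ℝ}

/-- The scale-invariant smoothed height of `f` on `B_t(x)`: the average of `f²` against
`heightKernel`. -/
noncomputable def avgHeight (f : 𝔼 n → ℝ) (x : 𝔼 n) (t : ℝ) : ℝ :=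
  ∫ y, f (x + t • y) ^ 2 * heightKernel y

/-- The scale-invariant smoothed Dirichlet energy of `f` on `B_t(x)`: the average of `t²|∇f|²`
against `energyKernel`. The smoothed frequency is `avgEnergy / avgHeight`. -/
noncomputable def avgEnergy (f : 𝔼 n → ℝ) (x : 𝔼 n) (t : ℝ) : ℝ :=
  ∫ y, (t ^ 2 * ∑ i, pderiv i f (x + t • y) ^ 2) * energyKernel y

/-- The average of the squared radial derivative `(t ∂f/∂t)²` against `heightKernel`. -/
noncomputable def avgRadialEnergy (f : 𝔼 n → ℝ) (x : 𝔼 n) (t : ℝ) : ℝ :=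
  ∫ y, (t * fderiv ℝ f (x + t • y) y) ^ 2 * heightKernel y

lemma avgHeight_nonneg (f : 𝔼 n → ℝ) (x : 𝔼 n) (t : ℝ) : 0 ≤ avgHeight f x t :=
  integral_nonneg fun y => mul_nonneg (sq_nonneg _) (heightKernel_nonneg y)

lemma integral_fderiv_mul_heightKernel_of_lapl_eq_zero (hf : ContDiff ℝ 2 f)
    (hharm : ∀ y ∈ ball x R, lapl f y = 0) {g : 𝔼 n → ℝ} (hg : ContDiff ℝ 1 g)
    (ht : t ∈ Set.Ioo 0 R) :
    ∫ y, t * fderiv ℝ f (x + t • y) y * g y * heightKernel y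
      = ∫ y, (∑ i, t * pderiv i f (x + t • y) * pderiv i g y) * energyKernel y := by
  rw [integral_fderiv_comp_add_smul_mul_heightKernel hf hg]
  refine integral_congr_ae (.of_forall fun y => ?_)
  rcases le_or_gt 1 ‖y‖ with hy | hy
  · simp [energyKernel_eq_zero hy]
  · simp [hharm _ (add_smul_mem_ball ht.1.le ht.2 hy.le)]

lemma avgEnergy_eq (hf : ContDiff ℝ 2 f) (hharm : ∀ y ∈ ball x R, lapl f y = 0)
    (ht : t ∈ Set.Ioo 0 R) :
    avgEnergy f x t = ∫ y, t * fderiv ℝ f (x + t • y) y * f (x + t • y) * heightKernel y := by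
  rw [integral_fderiv_mul_heightKernel_of_lapl_eq_zero hf hharm
    (g := fun y => f (x + t • y)) ((hf.of_le one_le_two).comp (by fun_prop)) ht]
  simp only [avgEnergy, pderiv_comp_add_smul (hf.differentiable two_ne_zero), Finset.mul_sum,
    Finset.sum_mul]
  exact integral_congr_ae (.of_forall fun y => Finset.sum_congr rfl fun i _ => by ring)

lemma hasDerivAt_avgHeight (hf : ContDiff ℝ 2 f) (hharm : ∀ y ∈ ball x R, lapl f y = 0)
    (ht : t ∈ Set.Ioo 0 R) : HasDerivAt (avgHeight f x) (2 / t * avgEnergy f x t) t := by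
  have hd : Differentiable ℝ f := hf.differentiable two_ne_zero
  have h := hasDerivAt_integral_mul_of_hasCompactSupport (μ := volume)
    (Φ := fun t y => f (x + t • y) ^ 2)
    (Φ' := fun t y => 2 * f (x + t • y) * fderiv ℝ f (x + t • y) y)
    ((continuous_comp_add_smul hf.continuous x).fun_pow 2)
    ((continuous_const.fun_mul (continuous_comp_add_smul hf.continuous x)).fun_mul
      (continuous_fderiv_comp_add_smul (hf.of_le one_le_two) x))
    (fun t y => by simpa using (hasDerivAt_comp_add_smul hd x t y).fun_pow 2)
    continuous_heightKernel hasCompactSupport_heightKernel t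
  refine HasDerivAt.congr_deriv h ?_
  rw [avgEnergy_eq hf hharm ht, ← integral_const_mul]
  refine integral_congr_ae (.of_forall fun y => ?_)
  have := ht.1.ne'
  dsimp only
  field_simp

lemma pderiv_fderiv_self (hf : ContDiff ℝ 2 f) (i : Fin n) (y : 𝔼 n) :
    pderiv i (fun y => fderiv ℝ f y y) y = pderiv i f y + fderiv ℝ (pderiv i f) y y := by
  have hd : HasFDerivAt (fderiv ℝ f) (fderiv ℝ (fderiv ℝ f) y) y :=
    ((hf.fderiv_right one_add_one_eq_two.le).differentiable one_ne_zero y).hasFDerivAt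
  have hself : HasFDerivAt (fun y => fderiv ℝ f y y) _ y := hd.clm_apply (hasFDerivAt_id y)
  have hpderiv : HasFDerivAt (pderiv i f) _ y := hd.clm_apply (hasFDerivAt_const _ y)
  have hsymm : IsSymmSndFDerivAt ℝ f y := hf.contDiffAt.isSymmSndFDerivAt (by simp)
  rw [hpderiv.fderiv, pderiv, hself.fderiv]
  simpa [pderiv] using hsymm.eq _ _

lemma pderiv_fderiv_comp_add_smul (hf : ContDiff ℝ 2 f) (x : 𝔼 n) (t : ℝ) (i : Fin n)
    (y : 𝔼 n) : pderiv i (fun y => t * fderiv ℝ f (x + t • y) y) y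
      = t * (pderiv i f (x + t • y) + t * fderiv ℝ (pderiv i f) (x + t • y) y) := by
  have hscale : ContDiff ℝ 2 fun y => f (x + t • y) := hf.comp (by fun_prop)
  have hd : Differentiable ℝ f := hf.differentiable two_ne_zero
  have h := pderiv_fderiv_self hscale i y
  have hsecond := (hasFDerivAt_comp_add_smul (differentiable_pderiv hf i) x t y).const_mul t
  simp only [pderiv_comp_add_smul hd, hsecond.fderiv,
    fun y => (hasFDerivAt_comp_add_smul hd x t y).fderiv, _root_.smul_apply, smul_eq_mul] at h
  rw [h]
  ring

lemma hasDerivAt_avgEnergy (hf : ContDiff ℝ 2 f) (hharm : ∀ y ∈ ball x R, lapl f y = 0)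
    (ht : t ∈ Set.Ioo 0 R) : HasDerivAt (avgEnergy f x) (2 / t * avgRadialEnergy f x t) t := by
  have hcont (i : Fin n) : Continuous fun p : ℝ × 𝔼 n => pderiv i f (x + p.1 • p.2) :=
    continuous_comp_add_smul (continuous_pderiv (hf.of_le one_le_two) i) x
  have hcont' (i : Fin n) :
      Continuous fun p : ℝ × 𝔼 n => fderiv ℝ (pderiv i f) (x + p.1 • p.2) p.2 :=
    continuous_fderiv_comp_add_smul (contDiff_pderiv hf one_add_one_eq_two.le i) x
  have h := hasDerivAt_integral_mul_of_hasCompactSupport (μ := volume)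
    (Φ := fun t y => t ^ 2 * ∑ i, pderiv i f (x + t • y) ^ 2)
    (Φ' := fun t y => 2 * t * ∑ i, pderiv i f (x + t • y) ^ 2
      + t ^ 2 * ∑ i, 2 * pderiv i f (x + t • y) * fderiv ℝ (pderiv i f) (x + t • y) y)
    (by fun_prop) (by fun_prop)
    (fun t y => HasDerivAt.mul (by simpa using hasDerivAt_pow 2 t) (HasDerivAt.fun_sum fun i _ => by
      simpa using (hasDerivAt_comp_add_smul (differentiable_pderiv hf i) x t y).fun_pow 2))
    continuous_energyKernel hasCompactSupport_energyKernel t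
  have hgreen := integral_fderiv_mul_heightKernel_of_lapl_eq_zero hf hharm
    (g := fun y => t * fderiv ℝ f (x + t • y) y)
    (contDiff_const.mul (((hf.fderiv_right one_add_one_eq_two.le).comp (by fun_prop)).clm_apply
      contDiff_id)) ht
  refine HasDerivAt.congr_deriv h ?_
  simp only [avgRadialEnergy, sq, ← mul_assoc] at hgreen ⊢
  rw [hgreen, ← integral_const_mul]
  refine integral_congr_ae (.of_forall fun y => ?_)
  have := ht.1.ne'
  simp only [pderiv_fderiv_comp_add_smul hf, Finset.mul_sum, ← Finset.sum_add_distrib,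
    Finset.sum_mul]
  refine Finset.sum_congr rfl fun i _ => ?_
  field_simp

lemma avgEnergy_sq_le (hf : ContDiff ℝ 2 f) (hharm : ∀ y ∈ ball x R, lapl f y = 0)
    (ht : t ∈ Set.Ioo 0 R) : avgEnergy f x t ^ 2 ≤ avgRadialEnergy f x t * avgHeight f x t := by
  have hcont : Continuous fun y => f (x + t • y) := hf.continuous.comp (by fun_prop)
  have hcont' : Continuous fun y => t * fderiv ℝ f (x + t • y) y :=
    continuous_const.mul (((hf.continuous_fderiv two_ne_zero).comp (by fun_prop)).clm_apply
      continuous_id)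
  have hquad (s : ℝ) :
      0 ≤ avgHeight f x t * (s * s) + 2 * avgEnergy f x t * s + avgRadialEnergy f x t := by
    have hnonneg : 0 ≤ ∫ y, (s * f (x + t • y) + t * fderiv ℝ f (x + t • y) y) ^ 2
        * heightKernel y :=
      integral_nonneg fun y => mul_nonneg (sq_nonneg _) (heightKernel_nonneg y)
    have hexpand (y : 𝔼 n) : (s * f (x + t • y) + t * fderiv ℝ f (x + t • y) y) ^ 2
          * heightKernel y
        = s * s * (f (x + t • y) ^ 2 * heightKernel y)
          + 2 * s * (t * fderiv ℝ f (x + t • y) y * f (x + t • y) * heightKernel y)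
          + (t * fderiv ℝ f (x + t • y) y) ^ 2 * heightKernel y := by ring
    have hinteg := (integrable_mul_heightKernel (hcont.fun_pow 2)).const_mul (s * s)
    have hinteg' := (integrable_mul_heightKernel (hcont'.fun_mul hcont)).const_mul (2 * s)
    simp only [hexpand] at hnonneg
    rw [integral_add (hinteg.fun_add hinteg') (integrable_mul_heightKernel (hcont'.fun_pow 2)),
      integral_add hinteg hinteg', integral_const_mul, integral_const_mul,
      ← avgEnergy_eq hf hharm ht] at hnonneg
    unfold avgHeight avgRadialEnergy
    linarith
  have hdiscrim := discrim_le_zero hquad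
  unfold discrim at hdiscrim
  linarith

/-- The smoothed form of Almgren's monotonicity formula; adding `ε` keeps the denominator away
from zero. -/
lemma monotoneOn_avgEnergy_div_avgHeight (hf : ContDiff ℝ 2 f)
    (hharm : ∀ y ∈ ball x R, lapl f y = 0) {ε : ℝ} (hε : 0 < ε) :
    MonotoneOn (fun t => avgEnergy f x t / (avgHeight f x t + ε)) (Set.Ioo 0 R) := by
  have hpos (t : ℝ) : 0 < avgHeight f x t + ε :=
    add_pos_of_nonneg_of_pos (avgHeight_nonneg f x t) hε
  have hd (t) (ht : t ∈ Set.Ioo 0 R) := (hasDerivAt_avgEnergy hf hharm ht).fun_div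
    ((hasDerivAt_avgHeight hf hharm ht).add_const ε) (hpos t).ne'
  refine monotoneOn_of_deriv_nonneg (convex_Ioo 0 R)
    (fun t ht => (hd t ht).continuousAt.continuousWithinAt)
    (fun t ht => (hd t (interior_subset ht)).differentiableAt.differentiableWithinAt) fun t ht => ?_
  have ht := interior_subset ht
  have hcs := sub_nonneg.2 (avgEnergy_sq_le hf hharm ht)
  have hrad : 0 ≤ avgRadialEnergy f x t :=
    integral_nonneg fun y => mul_nonneg (sq_nonneg _) (heightKernel_nonneg y)
  have ht₀ : 0 < t := ht.1
  rw [(hd t ht).deriv]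
  refine div_nonneg ?_ (sq_nonneg _)
  calc 0 ≤ 2 / t * (avgRadialEnergy f x t * avgHeight f x t - avgEnergy f x t ^ 2
        + avgRadialEnergy f x t * ε) := by positivity
    _ = _ := by ring

lemma avgHeight_le_rpow_mul (hf : ContDiff ℝ 2 f) (hharm : ∀ y ∈ ball x R, lapl f y = 0)
    {κ b c s : ℝ} (hκ : 0 ≤ κ) (hb : 0 < b) (hbc : b < c) (hcR : c < R)
    (hgrowth : avgHeight f x c ≤ (c / b) ^ κ * avgHeight f x b)
    (hs : 0 < s) (hst : s ≤ t) (htb : t ≤ b) :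
    avgHeight f x t ≤ (t / s) ^ κ * avgHeight f x s := by
  have hreg (ε : ℝ) (hε : 0 < ε) :
      avgHeight f x t + ε ≤ (t / s) ^ κ * (avgHeight f x s + ε) := by
    have hpos (t : ℝ) : 0 < avgHeight f x t + ε :=
      add_pos_of_nonneg_of_pos (avgHeight_nonneg f x t) hε
    refine le_rpow_mul_of_monotoneOn (F := fun t => avgHeight f x t + ε)
      (a := fun t => 2 * (avgEnergy f x t / (avgHeight f x t + ε))) hb hbc hcR (fun τ hτ => ?_) hpos
      (fun σ hσ τ hτ h => mul_le_mul_of_nonneg_left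
        (monotoneOn_avgEnergy_div_avgHeight hf hharm hε hσ hτ h) two_pos.le) ?_ hs hst htb
    · refine ((hasDerivAt_avgHeight hf hharm hτ).add_const ε).congr_deriv ?_
      have := (hpos τ).ne'
      field_simp
    · have : 1 ≤ (c / b) ^ κ := Real.one_le_rpow ((one_le_div hb).2 hbc.le) hκ
      nlinarith
  have hlim : Tendsto (fun ε : ℝ => (t / s) ^ κ * (avgHeight f x s + ε)) (𝓝[>] 0)
      (𝓝 ((t / s) ^ κ * (avgHeight f x s + 0))) :=
    ((tendsto_id.const_add _).const_mul _).mono_left nhdsWithin_le_nhds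
  rw [add_zero] at hlim
  refine ge_of_tendsto hlim ?_
  filter_upwards [self_mem_nhdsWithin] with ε hε
  linarith [hreg ε hε, Set.mem_Ioi.1 hε]

lemma sq_mul_heightMass_le (hf : ContDiff ℝ 2 f) (hharm : ∀ y ∈ ball x R, lapl f y = 0)
    (hR : 0 < R) : f x ^ 2 * heightMass n ≤ avgHeight f x R :=
  mul_heightMass_le (R' := R + 1) hR (lt_add_one R) (hf.pow 2).contDiffOn fun y hy => by
    rw [lapl_sq_of_lapl_eq_zero hf (hharm y hy)]
    positivity

end Frequency

/-! ### Hausdorff measure on spheres -/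

section Hausdorff

open scoped ENNReal NNReal Pointwise

section Slicing

variable {X : Type*} [EMetricSpace X] [MeasurableSpace X] [BorelSpace X] {d : ℝ} {A : Set X}

lemma exists_cover_tsum_ediam_rpow_le (hd : 0 < d) (hA : μH[d] A ≠ ∞) {ε : ℝ≥0∞} (hε : ε ≠ 0) :
    ∃ t : ℕ → Set X, A ⊆ ⋃ i, t i ∧ (∀ i, ediam (t i) ≤ ε) ∧
      ∑' i, ediam (t i) ^ d ≤ μH[d] A + ε := by
  have hlt : ⨅ (t : ℕ → Set X) (_ : A ⊆ ⋃ i, t i) (_ : ∀ i, ediam (t i) ≤ ε),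
      ∑' i, ⨆ _ : (t i).Nonempty, ediam (t i) ^ d < μH[d] A + ε := by
    refine lt_of_le_of_lt ?_ (ENNReal.lt_add_right hA hε)
    rw [Measure.hausdorffMeasure_apply]
    exact le_iSup₂_of_le ε (pos_iff_ne_zero.2 hε) le_rfl
  simp only [iInf_lt_iff] at hlt
  obtain ⟨t, hcover, hdiam, hsum⟩ := hlt
  refine ⟨t, hcover, hdiam, le_trans (ENNReal.tsum_le_tsum fun i => ?_) hsum.le⟩
  rcases (t i).eq_empty_or_nonempty with h | h
  · simp [h, hd]
  · simp [h]

lemma hausdorffMeasure_inter_preimage_le_liminf (hd : 0 < d) (f : X → ℝ) {ε : ℕ → ℝ≥0∞}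
    (hε : Tendsto ε atTop (𝓝 0)) {t : ℕ → ℕ → Set X} (hcover : ∀ k, A ⊆ ⋃ i, t k i)
    (hdiam : ∀ k i, ediam (t k i) ≤ ε k) (τ : ℝ) :
    μH[d] (A ∩ f ⁻¹' {τ}) ≤ liminf (fun k => ∑' i,
      (toMeasurable volume (f '' t k i)).indicator (fun _ => ediam (t k i) ^ d) τ) atTop := by
  refine (Measure.hausdorffMeasure_le_liminf_tsum d _ ε hε (fun k i => t k i ∩ f ⁻¹' {τ})
    (.of_forall fun k i => (ediam_mono Set.inter_subset_left).trans (hdiam k i))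
    (.of_forall fun k => ?_)).trans (liminf_le_liminf (.of_forall fun k => ?_))
  · rw [← Set.iUnion_inter]
    exact Set.inter_subset_inter_left _ (hcover k)
  · refine ENNReal.tsum_le_tsum fun i => ?_
    by_cases hτ : τ ∈ toMeasurable volume (f '' t k i)
    · rw [Set.indicator_of_mem hτ]
      exact ENNReal.rpow_le_rpow (ediam_mono Set.inter_subset_left) hd.le
    · have hempty : t k i ∩ f ⁻¹' {τ} = ∅ := Set.eq_empty_of_forall_notMem fun y hy =>
        hτ (subset_toMeasurable _ _ ⟨y, hy.1, hy.2⟩)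
      simp [hempty, hd]

/-- Eilenberg's inequality for real-valued maps. -/
lemma lintegral_hausdorffMeasure_inter_preimage_le {f : X → ℝ} (hf : LipschitzWith 1 f)
    (hd : 0 < d) (A : Set X) : ∫⁻ τ, μH[d] (A ∩ f ⁻¹' {τ}) ≤ μH[d + 1] A := by
  rcases eq_or_ne (μH[d + 1] A) ∞ with hA | hA
  · simp [hA]
  let ε : ℕ → ℝ≥0∞ := fun k => (k : ℝ≥0∞)⁻¹
  have hε : Tendsto ε atTop (𝓝 0) := ENNReal.tendsto_inv_nat_nhds_zero
  choose t hcover hdiam hsum using fun k : ℕ => exists_cover_tsum_ediam_rpow_le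
    (by linarith) hA (ENNReal.inv_ne_zero.2 (ENNReal.natCast_ne_top k))
  let J : ℕ → ℕ → Set ℝ := fun k i => toMeasurable volume (f '' t k i)
  have hJ (k i : ℕ) : volume (J k i) ≤ ediam (t k i) := by
    rw [measure_toMeasurable]
    exact (Real.volume_le_diam _).trans (by simpa using hf.ediam_image_le (t k i))
  have hmeas (k i : ℕ) : Measurable ((J k i).indicator fun _ => ediam (t k i) ^ d) :=
    measurable_const.indicator (measurableSet_toMeasurable _ _)
  calc ∫⁻ τ, μH[d] (A ∩ f ⁻¹' {τ})
      ≤ ∫⁻ τ, liminf (fun k => ∑' i, (J k i).indicator (fun _ => ediam (t k i) ^ d) τ) atTop :=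
        lintegral_mono (hausdorffMeasure_inter_preimage_le_liminf hd f hε hcover hdiam)
    _ ≤ liminf (fun k => ∫⁻ τ, ∑' i, (J k i).indicator (fun _ => ediam (t k i) ^ d) τ) atTop :=
        lintegral_liminf_le fun k => Measurable.tsum (hmeas k)
    _ = liminf (fun k => ∑' i, ediam (t k i) ^ d * volume (J k i)) atTop := by
        congr with k
        rw [lintegral_tsum fun i => (hmeas k i).aemeasurable]
        exact tsum_congr fun i => lintegral_indicator_const (measurableSet_toMeasurable _ _) _
    _ ≤ liminf (fun k => μH[d + 1] A + ε k) atTop := by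
        refine liminf_le_liminf (.of_forall fun k => le_trans (ENNReal.tsum_le_tsum fun i => ?_)
          (hsum k))
        rw [ENNReal.rpow_add_of_nonneg _ _ hd.le zero_le_one, ENNReal.rpow_one]
        gcongr
        exact hJ k i
    _ = μH[d + 1] A := by
        simpa using (tendsto_const_nhds.add hε).liminf_eq

end Slicing

lemma norm_add_sqrt_smul_of_inner_eq_zero {E : Type*} [NormedAddCommGroup E]
    [InnerProductSpace ℝ E] {w x : E} (hx : x ≠ 0) (horth : inner ℝ w x = 0) (hw : ‖w‖ ≤ ‖x‖) :
    ‖w + √(1 - ‖w‖ ^ 2 / ‖x‖ ^ 2) • x‖ = ‖x‖ := by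
  have hsqrt : 0 ≤ 1 - ‖w‖ ^ 2 / ‖x‖ ^ 2 := by
    rw [sub_nonneg, ← div_pow]
    exact pow_le_one₀ (by positivity) (div_le_one_of_le₀ hw (norm_nonneg x))
  have horth' : inner ℝ w (√(1 - ‖w‖ ^ 2 / ‖x‖ ^ 2) • x) = 0 := by
    rw [inner_smul_right, horth, mul_zero]
  have hx' : ‖x‖ ≠ 0 := norm_ne_zero_iff.2 hx
  rw [← sq_eq_sq₀ (norm_nonneg _) (norm_nonneg _), sq,
    norm_add_sq_eq_norm_sq_add_norm_sq_of_inner_eq_zero _ _ horth', norm_smul, mul_mul_mul_comm,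
    ← sq ‖√_‖, Real.norm_eq_abs, sq_abs, Real.sq_sqrt hsqrt]
  field_simp
  ring

variable {E : Type*} [NormedAddCommGroup E] [MeasurableSpace E] [BorelSpace E]

lemma hausdorffMeasure_le_Ioo_smul_inter_norm [NormedSpace ℝ E] {S : Set E}
    (hS : ∀ θ ∈ S, ‖θ‖ = 1) {d b ρ : ℝ} (hd : 0 ≤ d) (hρ : ρ ∈ Set.Ioo 1 b) :
    μH[d] S ≤ μH[d] (Set.Ioo 0 b • S ∩ norm ⁻¹' {ρ}) := by
  have hρ₀ : 0 < ρ := zero_lt_one.trans hρ.1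
  have hsub : ρ • S ⊆ Set.Ioo 0 b • S ∩ norm ⁻¹' {ρ} := by
    rintro _ ⟨θ, hθ, rfl⟩
    exact ⟨Set.smul_mem_smul ⟨hρ₀, hρ.2⟩ hθ, by simp [norm_smul, hS θ hθ, hρ₀.le]⟩
  refine le_trans ?_ (measure_mono hsub)
  rw [Measure.hausdorffMeasure_smul₀ hd hρ₀.ne', ENNReal.smul_def, smul_eq_mul]
  refine le_mul_of_one_le_left zero_le (ENNReal.one_le_coe_iff.2 (NNReal.one_le_rpow ?_ hd))
  rw [← NNReal.coe_le_coe, coe_nnnorm, Real.norm_of_nonneg hρ₀.le]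
  exact hρ.1.le

lemma exists_hausdorffMeasure_le_toSphere [NormedSpace ℝ E] [FiniteDimensional ℝ E]
    (hdim : 2 ≤ Module.finrank ℝ E) (μ : Measure E) [μ.IsAddHaarMeasure] :
    ∃ K : ℝ≥0, ∀ S : Set (sphere (0 : E) 1), MeasurableSet S →
      μH[((Module.finrank ℝ E - 1 : ℕ) : ℝ)] ((↑) '' S : Set E) ≤ K * μ.toSphere S := by
  set m := Module.finrank ℝ E - 1
  have hmdim : (m : ℝ) + 1 = Module.finrank ℝ E := by
    rw [← Nat.cast_add_one]
    congr
    lia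
  have hm₀ : 0 < (m : ℝ) := by
    rw [Nat.cast_pos]
    lia
  let c : ℝ≥0 := Measure.addHaarScalarFactor μH[(Module.finrank ℝ E : ℝ)] μ
  refine ⟨c * 2 ^ Module.finrank ℝ E, fun S hS => ?_⟩
  let S' : Set E := (↑) '' S
  let A : Set E := Set.Ioo (0 : ℝ) 2 • S'
  have hdilate : A = (2 : ℝ) • (Set.Ioo (0 : ℝ) 1 • S') := by
    rw [← smul_assoc, LinearOrderedField.smul_Ioo two_pos]
    simp [A]
  calc μH[(m : ℝ)] S' = ∫⁻ _ in Set.Ioo (1 : ℝ) 2, μH[(m : ℝ)] S' := by norm_num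
    _ ≤ ∫⁻ ρ in Set.Ioo (1 : ℝ) 2, μH[(m : ℝ)] (A ∩ norm ⁻¹' {ρ}) :=
        setLIntegral_mono' measurableSet_Ioo fun ρ hρ =>
          hausdorffMeasure_le_Ioo_smul_inter_norm (by simp +contextual [S']) hm₀.le hρ
    _ ≤ μH[(m : ℝ) + 1] A := (setLIntegral_le_lintegral _ _).trans
        (lintegral_hausdorffMeasure_inter_preimage_le lipschitzWith_one_norm hm₀ A)
    _ = c * 2 ^ Module.finrank ℝ E * μ (Set.Ioo (0 : ℝ) 1 • S') := by
        rw [hmdim, Measure.isAddLeftInvariant_eq_smul μH[(Module.finrank ℝ E : ℝ)] μ, hdilate,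
          Measure.smul_apply, Measure.addHaar_smul, ENNReal.smul_def, smul_eq_mul, mul_assoc]
        simp [c]
    _ ≤ _ := by
        rw [μ.toSphere_apply' hS]
        push_cast
        gcongr
        refine le_mul_of_one_le_left zero_le ?_
        exact_mod_cast one_le_two.trans hdim

lemma exists_restrict_sphere_hausdorffMeasure_le [NormedSpace ℝ E] [FiniteDimensional ℝ E]
    (hdim : 2 ≤ Module.finrank ℝ E) (μ : Measure E) [μ.IsAddHaarMeasure] :
    ∃ K : ℝ≥0, ∀ ρ : ℝ, 0 < ρ →
      (μH[((Module.finrank ℝ E - 1 : ℕ) : ℝ)] : Measure E).restrict (sphere 0 ρ) ≤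
        (K * ‖ρ‖₊ ^ (Module.finrank ℝ E - 1)) •
          Measure.map (fun θ : sphere (0 : E) 1 => ρ • (θ : E)) μ.toSphere := by
  obtain ⟨K, hK⟩ := exists_hausdorffMeasure_le_toSphere hdim μ
  refine ⟨K, fun ρ hρ => Measure.le_iff.2 fun S hS => ?_⟩
  have hmeas : Measurable fun θ : sphere (0 : E) 1 => ρ • (θ : E) := by fun_prop
  have hdilate : S ∩ sphere 0 ρ
      = ρ • ((↑) '' ((fun θ : sphere (0 : E) 1 => ρ • (θ : E)) ⁻¹' S) : Set E) := by
    ext x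
    constructor
    · rintro ⟨hx, hxρ⟩
      have hx' : ρ • ρ⁻¹ • x = x := smul_inv_smul₀ hρ.ne' x
      refine ⟨ρ⁻¹ • x, ⟨⟨ρ⁻¹ • x, ?_⟩, by simpa [hx'] using hx, rfl⟩, hx'⟩
      simp [norm_smul, mem_sphere_zero_iff_norm.1 hxρ, abs_of_pos hρ, hρ.ne']
    · rintro ⟨_, ⟨θ, hθ, rfl⟩, rfl⟩
      exact ⟨hθ, by simp [norm_smul, hρ.le]⟩
  rw [Measure.restrict_apply hS, hdilate, Measure.hausdorffMeasure_smul₀ (Nat.cast_nonneg _) hρ.ne',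
    Measure.smul_apply, Measure.map_apply hmeas hS, NNReal.rpow_natCast, mul_comm K, mul_smul]
  gcongr
  exact hK _ (hmeas hS)

lemma hausdorffMeasure_sphere_inter_pos [InnerProductSpace ℝ E] [FiniteDimensional ℝ E] {x : E}
    (hx : x ≠ 0) {U : Set E} (hU : U ∈ 𝓝 x) :
    0 < μH[((Module.finrank ℝ E - 1 : ℕ) : ℝ)] (sphere (0 : E) ‖x‖ ∩ U) := by
  let W : Submodule ℝ E := (ℝ ∙ x)ᗮ
  have hW : Module.finrank ℝ E - 1 = Module.finrank ℝ W :=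
    Nat.sub_eq_of_eq_add' <| by
      rw [← finrank_span_singleton (K := ℝ) hx, (ℝ ∙ x).finrank_add_finrank_orthogonal]
  let lift : W → E := fun w => w + √(1 - ‖(w : E)‖ ^ 2 / ‖x‖ ^ 2) • x
  have hproj (w : W) : W.orthogonalProjectionOnto (lift w) = w := by
    have hx' : W.orthogonalProjectionOnto x = 0 :=
      Submodule.orthogonalProjectionOnto_orthogonal_apply_eq_zero
        (Submodule.mem_span_singleton_self x)
    simp [lift, hx']
  have hlift (w : W) (hw : w ∈ ball 0 ‖x‖) : lift w ∈ sphere (0 : E) ‖x‖ :=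
    mem_sphere_zero_iff_norm.2 <| norm_add_sqrt_smul_of_inner_eq_zero hx
      (Submodule.mem_orthogonal_singleton_iff_inner_left.1 w.2) (mem_ball_zero_iff.1 hw).le
  have hcont : ContinuousAt lift 0 := by fun_prop
  have hnhds : lift ⁻¹' U ∩ ball 0 ‖x‖ ∈ 𝓝 (0 : W) :=
    inter_mem (hcont.preimage_mem_nhds (by simpa [lift] using hU))
      (ball_mem_nhds _ (norm_pos_iff.2 hx))
  rw [hW]
  calc 0 < μH[(Module.finrank ℝ W : ℝ)] (lift ⁻¹' U ∩ ball 0 ‖x‖) :=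
        Measure.measure_pos_of_mem_nhds _ hnhds
    _ ≤ μH[(Module.finrank ℝ W : ℝ)] (W.orthogonalProjectionOnto '' (sphere 0 ‖x‖ ∩ U)) :=
        measure_mono fun w hw => ⟨lift w, ⟨hlift w hw.2, hw.1⟩, hproj w⟩
    _ ≤ μH[(Module.finrank ℝ W : ℝ)] (sphere 0 ‖x‖ ∩ U) :=
        hausdorffMeasure_orthogonalProjectionOnto_le W _ _ (Nat.cast_nonneg _)

end Hausdorff

/-! ### Growth at the origin -/

section Polar

open scoped ENNReal

lemma lintegral_eq_lintegral_Ioi_toSphere {E : Type*} [NormedAddCommGroup E] [NormedSpace ℝ E]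
    [FiniteDimensional ℝ E] [Nontrivial E] [MeasurableSpace E] [BorelSpace E] (μ : Measure E)
    [μ.IsAddHaarMeasure] {g : E → ℝ≥0∞} (hg : Measurable g) :
    ∫⁻ y, g y ∂μ = ∫⁻ s in Set.Ioi (0 : ℝ), ENNReal.ofReal (s ^ (Module.finrank ℝ E - 1)) *
      ∫⁻ θ : sphere (0 : E) 1, g (s • (θ : E)) ∂μ.toSphere := by
  let G : sphere (0 : E) 1 × Set.Ioi (0 : ℝ) → ℝ≥0∞ := fun p => g ((p.2 : ℝ) • (p.1 : E))
  have hG : Measurable G := hg.comp (by fun_prop)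
  calc ∫⁻ y, g y ∂μ = ∫⁻ y : ({0}ᶜ : Set E), g y ∂(μ.comap (↑)) := by
        rw [lintegral_subtype_comap (measurableSet_singleton _).compl, restrict_compl_singleton]
    _ = ∫⁻ p, G p ∂(μ.toSphere.prod (.volumeIoiPow (Module.finrank ℝ E - 1))) := by
        rw [← μ.measurePreserving_homeomorphUnitSphereProd.lintegral_comp hG]
        refine lintegral_congr fun y => ?_
        have hy : ‖(y : E)‖ ≠ 0 := norm_ne_zero_iff.2 y.2
        simp [G, smul_smul, hy]
    _ = ∫⁻ s : Set.Ioi (0 : ℝ), ∫⁻ θ, G (θ, s) ∂μ.toSphere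
          ∂(.volumeIoiPow (Module.finrank ℝ E - 1)) := lintegral_prod_symm' _ hG
    _ = _ := by
        rw [Measure.volumeIoiPow, lintegral_withDensity_eq_lintegral_mul _ (by fun_prop)
          hG.lintegral_prod_left']
        exact lintegral_subtype_comap measurableSet_Ioi fun s : ℝ =>
          ENNReal.ofReal (s ^ (Module.finrank ℝ E - 1)) *
            ∫⁻ θ : sphere (0 : E) 1, g (s • (θ : E)) ∂μ.toSphere

/-- The radial profile of `heightKernel`. -/
noncomputable def heightProfile (s : ℝ) : ℝ := 6 * max (1 - s ^ 2) 0 ^ 2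

lemma heightProfile_nonneg (s : ℝ) : 0 ≤ heightProfile s := by
  unfold heightProfile
  positivity

@[fun_prop]
lemma continuous_heightProfile : Continuous heightProfile := by
  unfold heightProfile
  fun_prop

lemma lintegral_Ioi_mul_heightProfile {r : ℝ} (hr : 0 ≤ r) :
    ∫⁻ s in Set.Ioi r, ENNReal.ofReal (s * heightProfile s)
      = ENNReal.ofReal (max (1 - r ^ 2) 0 ^ 3) := by
  have hd (s : ℝ) (_ : s ∈ Set.Ici r) :
      HasDerivAt (fun s : ℝ => -max (1 - s ^ 2) 0 ^ 3) (s * heightProfile s) s := by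
    have hsq : HasDerivAt (fun s : ℝ => 1 - s ^ 2) (-(2 * s)) s := by
      simpa using (hasDerivAt_pow 2 s).const_sub 1
    refine ((hasDerivAt_max_zero_pow 1 (1 - s ^ 2)).comp s hsq).fun_neg.congr_deriv ?_
    unfold heightProfile
    push_cast
    ring
  have hnonneg (s : ℝ) (hs : s ∈ Set.Ioi r) : 0 ≤ s * heightProfile s :=
    mul_nonneg (hr.trans (le_of_lt hs)) (heightProfile_nonneg s)
  have hlim : Tendsto (fun s : ℝ => -max (1 - s ^ 2) 0 ^ 3) atTop (𝓝 0) := by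
    refine tendsto_const_nhds.congr' ?_
    filter_upwards [eventually_ge_atTop 1] with s hs
    rw [max_eq_right (by nlinarith)]
    simp
  rw [← ofReal_integral_eq_lintegral_ofReal (integrableOn_Ioi_deriv_of_nonneg' hd hnonneg hlim)
      ((ae_restrict_iff' measurableSet_Ioi).2 (.of_forall hnonneg)),
    integral_Ioi_of_hasDerivAt_of_nonneg' hd hnonneg hlim, zero_sub, neg_neg]

variable {n : ℕ} {f : 𝔼 n → ℝ} {t : ℝ}

lemma lintegral_mul_energyKernel {G : 𝔼 n → ℝ≥0∞} (hG : Measurable G) :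
    ∫⁻ y, G y * ENNReal.ofReal (energyKernel y)
      = ∫⁻ s in Set.Ioi (0 : ℝ), ENNReal.ofReal (s * heightProfile s) * ∫⁻ y in ball 0 s, G y := by
  let S : Set (𝔼 n × ℝ) := {p | ‖p.1‖ < p.2}
  let Φ : 𝔼 n × ℝ → ℝ≥0∞ :=
    S.indicator fun p => G p.1 * ENNReal.ofReal (p.2 * heightProfile p.2)
  have hΦ : Measurable Φ :=
    Measurable.indicator (by fun_prop) (measurableSet_lt (by fun_prop) (by fun_prop))
  calc ∫⁻ y, G y * ENNReal.ofReal (energyKernel y) = ∫⁻ y, ∫⁻ s in Set.Ioi (0 : ℝ), Φ (y, s) := by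
        refine lintegral_congr fun y => ?_
        rw [energyKernel, ← lintegral_Ioi_mul_heightProfile (norm_nonneg y),
          ← lintegral_const_mul _ (by fun_prop), ← lintegral_indicator measurableSet_Ioi,
          ← lintegral_indicator measurableSet_Ioi]
        refine lintegral_congr fun s => ?_
        by_cases hs : ‖y‖ < s
        · have : 0 < s := (norm_nonneg y).trans_lt hs
          simp [Φ, S, Set.indicator, hs, this]
        · simp [Φ, S, Set.indicator, hs]
    _ = ∫⁻ s in Set.Ioi (0 : ℝ), ∫⁻ y, Φ (y, s) := lintegral_lintegral_swap hΦ.aemeasurable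
    _ = _ := by
        refine lintegral_congr fun s => ?_
        rw [← lintegral_const_mul _ hG, ← lintegral_indicator measurableSet_ball]
        refine lintegral_congr fun y => ?_
        by_cases hs : ‖y‖ < s <;> simp [Φ, S, Set.indicator, hs, mul_comm]

lemma ofReal_avgEnergy_zero (hf : ContDiff ℝ 1 f) (ht : 0 < t) :
    ENNReal.ofReal (avgEnergy f 0 t) = ∫⁻ s in Set.Ioi (0 : ℝ),
      ENNReal.ofReal (s * heightProfile s * (t ^ 2 / t ^ n * DInt f 0 (t * s))) := by
  let G : 𝔼 n → ℝ := fun y => t ^ 2 * ∑ i, pderiv i f (0 + t • y) ^ 2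
  have hGcont : Continuous G := continuous_const.mul <| continuous_finsetSum _ fun i _ =>
    ((continuous_pderiv hf i).comp (by fun_prop)).pow 2
  have hG₀ (y : 𝔼 n) : 0 ≤ G y := by positivity
  have hball (s : ℝ) : ∫ y in ball 0 s, G y = t ^ 2 / t ^ n * DInt f 0 (t * s) := by
    simp only [G, zero_add, integral_const_mul, DInt, norm_gradient_sq]
    rw [Measure.setIntegral_comp_smul_of_pos volume (fun y => ∑ i, pderiv i f y ^ 2) _ ht,
      _root_.smul_ball ht.ne', smul_zero, Real.norm_of_nonneg ht.le, finrank_euclideanSpace_fin,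
      smul_eq_mul]
    ring
  rw [avgEnergy, ofReal_integral_eq_lintegral_ofReal (integrable_mul_energyKernel hGcont)
    (.of_forall fun y => mul_nonneg (hG₀ y) (energyKernel_nonneg y))]
  simp_rw [ENNReal.ofReal_mul (hG₀ _)]
  rw [lintegral_mul_energyKernel (by fun_prop)]
  refine setLIntegral_congr_fun measurableSet_Ioi fun s hs => ?_
  have hinteg : IntegrableOn G (ball 0 s) :=
    (hGcont.continuousOn.integrableOn_compact (isCompact_closedBall 0 s)).mono_set
      ball_subset_closedBall
  rw [← ofReal_integral_eq_lintegral_ofReal hinteg (.of_forall hG₀), hball,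
    ← ENNReal.ofReal_mul (mul_nonneg (le_of_lt hs) (heightProfile_nonneg s))]

lemma integrable_sq_smul_toSphere (hf : Continuous f) (ρ : ℝ) :
    Integrable (fun θ : sphere (0 : 𝔼 n) 1 => f (ρ • (θ : 𝔼 n)) ^ 2) volume.toSphere :=
  Continuous.integrable_of_hasCompactSupport (by fun_prop) (.of_compactSpace _)

lemma ofReal_avgHeight_zero (hn : 0 < n) (hf : Continuous f) :
    ENNReal.ofReal (avgHeight f 0 t) = ∫⁻ s in Set.Ioi (0 : ℝ), ENNReal.ofReal
      (s ^ (n - 1) * heightProfile s *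
        ∫ θ : sphere (0 : 𝔼 n) 1, f ((t * s) • (θ : 𝔼 n)) ^ 2 ∂volume.toSphere) := by
  have : NeZero n := ⟨hn.ne'⟩
  have hcont : Continuous fun y : 𝔼 n => f (0 + t • y) ^ 2 := by fun_prop
  have hkernel : Continuous (heightKernel (n := n)) := continuous_heightKernel
  rw [avgHeight, ofReal_integral_eq_lintegral_ofReal (integrable_mul_heightKernel hcont)
    (.of_forall fun y => mul_nonneg (sq_nonneg _) (heightKernel_nonneg y)),
    lintegral_eq_lintegral_Ioi_toSphere volume (by fun_prop), finrank_euclideanSpace_fin]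
  refine setLIntegral_congr_fun measurableSet_Ioi fun s hs => ?_
  have hs₀ : (0 : ℝ) < s := hs
  have hradial (θ : sphere (0 : 𝔼 n) 1) :
      f (0 + t • s • (θ : 𝔼 n)) ^ 2 * heightKernel (s • (θ : 𝔼 n))
        = heightProfile s * f ((t * s) • (θ : 𝔼 n)) ^ 2 := by
    rw [zero_add, smul_smul, heightKernel, norm_smul, norm_eq_of_mem_sphere, mul_one,
      Real.norm_of_nonneg hs₀.le, heightProfile, mul_comm]
  simp only [hradial]
  rw [← ofReal_integral_eq_lintegral_ofReal ((integrable_sq_smul_toSphere hf _).const_mul _)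
    (.of_forall fun θ => mul_nonneg (heightProfile_nonneg s) (sq_nonneg _)),
    ← ENNReal.ofReal_mul (by positivity), integral_const_mul, mul_assoc]

end Polar

section Frequency

variable {n : ℕ} {f : 𝔼 n → ℝ} {x : 𝔼 n} {R ρ N₀ : ℝ}

lemma sq_add_smul_eq_of_isMaxOn (hf : ContDiff ℝ 2 f) (hR : 0 < R)
    (hharm : ∀ y ∈ ball x R, lapl f y = 0)
    (hmax : IsMaxOn (fun y => f y ^ 2) (closedBall x R) x) {e : 𝔼 n} (he : ‖e‖ = 1) :
    f (x + R • e) ^ 2 = f x ^ 2 := by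
  have hsq : Continuous fun y => f (x + R • y) ^ 2 := (hf.continuous.comp (by fun_prop)).pow 2
  have hcont : Continuous fun y => f x ^ 2 - f (x + R • y) ^ 2 := continuous_const.sub hsq
  have hnonneg (y : 𝔼 n) : 0 ≤ (f x ^ 2 - f (x + R • y) ^ 2) * heightKernel y := by
    rcases le_or_gt 1 ‖y‖ with hy | hy
    · rw [heightKernel_eq_zero hy, mul_zero]
    · refine mul_nonneg (sub_nonneg.2 (hmax ?_)) (heightKernel_nonneg y)
      exact ball_subset_closedBall (add_smul_mem_ball_of_le hR hy)
  have hle : ∫ y, (f x ^ 2 - f (x + R • y) ^ 2) * heightKernel y ≤ 0 := by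
    simp_rw [sub_mul]
    rw [integral_sub (integrable_heightKernel.const_mul _)
      (integrable_mul_heightKernel hsq), integral_const_mul]
    exact sub_nonpos.2 (sq_mul_heightMass_le hf hharm hR)
  have hball : Set.EqOn (fun y => f x ^ 2 - f (x + R • y) ^ 2) 0 (ball 0 1) := fun y hy => by
    by_contra hne
    have hne' := mul_ne_zero hne (heightKernel_pos (mem_ball_zero_iff.1 hy)).ne'
    exact hle.not_gt ((hcont.mul continuous_heightKernel)
      |>.integral_pos_of_hasCompactSupport_nonneg_nonzero
        hasCompactSupport_heightKernel.mul_left hnonneg hne')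
  have hclosed := hball.closure hcont continuous_const
  rw [closure_ball _ one_ne_zero] at hclosed
  exact (sub_eq_zero.1 (hclosed (by simp [he]))).symm

lemma exists_norm_add_smul_eq (hn : 0 < n) (x : 𝔼 n) (hR : 0 ≤ R) :
    ∃ e : 𝔼 n, ‖e‖ = 1 ∧ ‖x + R • e‖ = ‖x‖ + R := by
  rcases eq_or_ne x 0 with rfl | hx
  · exact ⟨EuclideanSpace.single ⟨0, hn⟩ 1, by simp, by simp [norm_smul, abs_of_nonneg hR]⟩
  · have hx' : ‖x‖ ≠ 0 := norm_ne_zero_iff.2 hx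
    refine ⟨‖x‖⁻¹ • x, by simp [norm_smul, hx'], ?_⟩
    have : x + R • ‖x‖⁻¹ • x = (1 + R * ‖x‖⁻¹) • x := by rw [smul_smul, add_smul, one_smul]
    rw [this, norm_smul, Real.norm_of_nonneg (by positivity), add_mul, one_mul,
      inv_mul_cancel_right₀ hx']

/-- The uniqueness part of the maximum principle. -/
lemma eqOn_zero_of_eqOn_sphere (hn : 0 < n) (hf : ContDiff ℝ 2 f)
    (hharm : ∀ y ∈ ball 0 ρ, lapl f y = 0) (hzero : Set.EqOn f 0 (sphere 0 ρ)) :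
    Set.EqOn f 0 (ball 0 ρ) := by
  intro x hx
  obtain ⟨z, hz, hmax⟩ := (isCompact_closedBall (0 : 𝔼 n) ρ).exists_isMaxOn
    ⟨x, ball_subset_closedBall hx⟩ (hf.continuous.pow 2).continuousOn
  suffices f z ^ 2 = 0 by
    have := hmax (ball_subset_closedBall hx)
    exact pow_eq_zero_iff two_ne_zero |>.1 (le_antisymm (this.trans_eq ‹_›) (sq_nonneg _))
  rcases (mem_closedBall_zero_iff.1 hz).eq_or_lt with hzρ | hzρ
  · simp [hzero (mem_sphere_zero_iff_norm.2 hzρ)]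
  have hsub : closedBall z (ρ - ‖z‖) ⊆ closedBall 0 ρ :=
    closedBall_subset_closedBall' (by simp)
  obtain ⟨e, he, hze⟩ := exists_norm_add_smul_eq hn z (sub_pos.2 hzρ).le
  rw [← sq_add_smul_eq_of_isMaxOn hf (sub_pos.2 hzρ)
    (fun y hy => hharm y (ball_subset_ball' (by simp) hy)) (hmax.on_subset hsub) he,
    hzero (mem_sphere_zero_iff_norm.2 (by rw [hze, add_sub_cancel]))]
  simp

lemma DInt_eq_zero_of_eqOn_zero (hzero : Set.EqOn f 0 (ball x ρ)) : DInt f x ρ = 0 := by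
  refine (setIntegral_congr_fun measurableSet_ball fun y hy => ?_).trans (integral_zero _ _)
  have hloc : f =ᶠ[𝓝 y] 0 := hzero.eventuallyEq_of_mem (isOpen_ball.mem_nhds hy)
  simp [gradient, hloc.fderiv_eq]

lemma exists_sphere_hausdorffMeasure_le (hn : 2 ≤ n) : ∃ K : NNReal, ∀ ρ : ℝ, 0 < ρ →
    (μH[(n : ℝ) - 1] : Measure (𝔼 n)).restrict (sphere 0 ρ) ≤ (K * ‖ρ‖₊ ^ (n - 1)) •
      Measure.map (fun θ : sphere (0 : 𝔼 n) 1 => ρ • (θ : 𝔼 n)) volume.toSphere := by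
  simpa [Nat.cast_pred (zero_lt_two.trans_le hn)] using
    exists_restrict_sphere_hausdorffMeasure_le (E := 𝔼 n) (by simpa using hn) volume

lemma integrable_sq_map_toSphere (hf : Continuous f) (ρ : ℝ) :
    Integrable (fun y => f y ^ 2)
      (Measure.map (fun θ : sphere (0 : 𝔼 n) 1 => ρ • (θ : 𝔼 n)) volume.toSphere) := by
  rw [integrable_map_measure (by fun_prop) (by fun_prop)]
  exact integrable_sq_smul_toSphere hf ρ

lemma HInt_nonneg (f : 𝔼 n → ℝ) (x : 𝔼 n) (ρ : ℝ) : 0 ≤ HInt f x ρ :=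
  integral_nonneg fun _ => sq_nonneg _

lemma exists_HInt_le (hn : 2 ≤ n) : ∃ K : ℝ, 0 ≤ K ∧ ∀ f : 𝔼 n → ℝ, Continuous f → ∀ ρ : ℝ,
    0 < ρ → HInt f 0 ρ ≤ K * ρ ^ (n - 1) *
      ∫ θ : sphere (0 : 𝔼 n) 1, f (ρ • (θ : 𝔼 n)) ^ 2 ∂volume.toSphere := by
  obtain ⟨K, hK⟩ := exists_sphere_hausdorffMeasure_le hn
  refine ⟨K, K.2, fun f hf ρ hρ => (integral_mono_measure (hK ρ hρ)
    (.of_forall fun y => sq_nonneg (f y))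
    ((integrable_sq_map_toSphere hf ρ).smul_measure_nnreal)).trans_eq ?_⟩
  rw [integral_smul_nnreal_measure, integral_map (by fun_prop) (by fun_prop), NNReal.smul_def]
  simp [abs_of_pos hρ]

lemma eqOn_zero_sphere_of_HInt_eq_zero (hn : 2 ≤ n) (hf : Continuous f) (hρ : 0 < ρ)
    (hH : HInt f 0 ρ = 0) : Set.EqOn f 0 (sphere 0 ρ) := by
  obtain ⟨K, hK⟩ := exists_sphere_hausdorffMeasure_le hn
  have hinteg : Integrable (fun y => f y ^ 2)
      ((μH[(n : ℝ) - 1] : Measure (𝔼 n)).restrict (sphere 0 ρ)) :=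
    (integrable_sq_map_toSphere hf ρ).smul_measure_nnreal.mono_measure (hK ρ hρ)
  rw [HInt, integral_eq_zero_iff_of_nonneg (fun y => sq_nonneg _) hinteg] at hH
  intro x hx
  rw [mem_sphere_zero_iff_norm] at hx
  by_contra hne
  have hpos := hausdorffMeasure_sphere_inter_pos (norm_pos_iff.1 (hx ▸ hρ))
    (hf.continuousAt.eventually_ne hne)
  rw [hx, finrank_euclideanSpace_fin, Nat.cast_pred (zero_lt_two.trans_le hn)] at hpos
  refine hpos.ne' ?_
  rw [Set.inter_comm, ← Measure.restrict_apply (isOpen_ne_fun hf continuous_const).measurableSet]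
  exact measure_mono_null (fun y hy => by simpa using hy) (ae_iff.1 hH)

lemma mul_DInt_le_of_freqN_le (hn : 2 ≤ n) (hf : ContDiff ℝ 2 f)
    (hharm : ∀ y ∈ ball 0 ρ, lapl f y = 0) (hρ : 0 < ρ) (hfreq : freqN f 0 ρ ≤ N₀) :
    ρ * DInt f 0 ρ ≤ N₀ * HInt f 0 ρ := by
  rcases (HInt_nonneg f 0 ρ).eq_or_lt with hH | hH
  · rw [← hH, DInt_eq_zero_of_eqOn_zero (eqOn_zero_of_eqOn_sphere (zero_lt_two.trans_le hn) hf hharm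
      (eqOn_zero_sphere_of_HInt_eq_zero hn hf.continuous hρ hH.symm)), mul_zero, mul_zero]
  · exact (div_le_iff₀ hH).1 hfreq

lemma exists_avgEnergy_zero_le (hn : 2 ≤ n) (hN₀ : 0 ≤ N₀) : ∃ κ : ℝ, 0 ≤ κ ∧
    ∀ (f : 𝔼 n → ℝ) (R : ℝ), ContDiff ℝ 1 f →
      (∀ ρ ∈ Set.Ioo 0 R, ρ * DInt f 0 ρ ≤ N₀ * HInt f 0 ρ) →
      ∀ t ∈ Set.Ioo 0 R, avgEnergy f 0 t ≤ κ * avgHeight f 0 t := by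
  obtain ⟨K, hK, hH⟩ := exists_HInt_le hn
  refine ⟨N₀ * K, by positivity, fun f R hf hDH t ht => ?_⟩
  have ht₀ : 0 < t := ht.1
  rw [← ENNReal.ofReal_le_ofReal_iff (mul_nonneg (by positivity) (avgHeight_nonneg f 0 t)),
    ENNReal.ofReal_mul (by positivity), ofReal_avgEnergy_zero hf ht₀,
    ofReal_avgHeight_zero (zero_lt_two.trans_le hn) hf.continuous,
    ← lintegral_const_mul' _ _ ENNReal.ofReal_ne_top]
  refine setLIntegral_mono' measurableSet_Ioi fun s (hs : 0 < s) => ?_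
  rw [← ENNReal.ofReal_mul (by positivity)]
  refine ENNReal.ofReal_le_ofReal ?_
  rcases le_or_gt 1 s with hs₁ | hs₁
  · have : heightProfile s = 0 := by
      rw [heightProfile, max_eq_right (by nlinarith), zero_pow two_ne_zero, mul_zero]
    simp [this]
  set I := ∫ θ : sphere (0 : 𝔼 n) 1, f ((t * s) • (θ : 𝔼 n)) ^ 2 ∂volume.toSphere
  have hts : t * s < R := (mul_le_of_le_one_right ht₀.le hs₁.le).trans_lt ht.2
  have hDI : t * s * DInt f 0 (t * s) ≤ N₀ * (K * (t * s) ^ (n - 1) * I) :=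
    (hDH _ ⟨by positivity, hts⟩).trans (by gcongr; exact hH f hf.continuous _ (by positivity))
  have hpow : t ^ n = t ^ (n - 1) * t := (pow_sub_one_mul (by lia) t).symm
  have hprofile := heightProfile_nonneg s
  calc s * heightProfile s * (t ^ 2 / t ^ n * DInt f 0 (t * s))
      = heightProfile s * (t / t ^ n) * (t * s * DInt f 0 (t * s)) := by ring
    _ ≤ heightProfile s * (t / t ^ n) * (N₀ * (K * (t * s) ^ (n - 1) * I)) := by gcongr
    _ = N₀ * K * (s ^ (n - 1) * heightProfile s * I) := by
        rw [hpow, mul_pow]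
        field_simp

lemma exists_avgHeight_zero_le (hn : 2 ≤ n) (hN₀ : 0 ≤ N₀) : ∃ κ : ℝ, 0 ≤ κ ∧
    ∀ (f : 𝔼 n → ℝ) (R : ℝ), ContDiff ℝ 2 f → (∀ y ∈ ball 0 R, lapl f y = 0) →
      (∀ ρ ∈ Set.Ioo 0 R, freqN f 0 ρ ≤ N₀) →
      ∀ s t : ℝ, 0 < s → s ≤ t → t < R → avgHeight f 0 t ≤ (t / s) ^ κ * avgHeight f 0 s := by
  obtain ⟨κ, hκ, hE⟩ := exists_avgEnergy_zero_le hn hN₀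
  refine ⟨2 * κ, by positivity, fun f R hf hharm hfreq s t hs hst htR => ?_⟩
  have hDH (ρ) (hρ : ρ ∈ Set.Ioo 0 R) : ρ * DInt f 0 ρ ≤ N₀ * HInt f 0 ρ :=
    mul_DInt_le_of_freqN_le hn hf (fun y hy => hharm y (ball_subset_ball hρ.2.le hy)) hρ.1
      (hfreq ρ hρ)
  have hIoo (τ) (hτ : τ ∈ Set.Icc s t) : τ ∈ Set.Ioo 0 R :=
    ⟨hs.trans_le hτ.1, hτ.2.trans_lt htR⟩
  refine le_rpow_mul_of_mul_deriv_le hs hst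
    (fun τ hτ => hasDerivAt_avgHeight hf hharm (hIoo τ hτ)) fun τ hτ => ?_
  have hτ₀ := (hIoo τ hτ).1.ne'
  have := hE f R (hf.of_le one_le_two) hDH τ (hIoo τ hτ)
  field_simp
  linarith

end Frequency

/-! ### Nondegeneracy away from the origin -/

section Nondegeneracy

variable {n : ℕ} {f : 𝔼 n → ℝ} {x y : 𝔼 n} {s t θ : ℝ}

lemma avgHeight_eq_integral (f : 𝔼 n → ℝ) (x : 𝔼 n) (ht : 0 < t) :
    avgHeight f x t = (t ^ n)⁻¹ * ∫ z, f z ^ 2 * heightKernel (t⁻¹ • (z - x)) := by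
  have hscale := Measure.integral_comp_smul (volume : Measure (𝔼 n))
    (fun z => f (x + z) ^ 2 * heightKernel (t⁻¹ • z)) t
  simp only [inv_smul_smul₀ ht.ne', finrank_euclideanSpace_fin,
    abs_of_pos (inv_pos.2 (pow_pos ht n)), smul_eq_mul] at hscale
  rw [avgHeight, hscale, ← integral_add_left_eq_self (fun z => f z ^ 2 * _) x]
  simp only [add_sub_cancel_left]

lemma integrableOn_ball_sq (hf : Continuous f) (x : 𝔼 n) (t : ℝ) :
    IntegrableOn (fun z => f z ^ 2) (ball x t) :=
  ((hf.pow 2).continuousOn.integrableOn_compact (isCompact_closedBall x t)).mono_set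
    ball_subset_closedBall

lemma heightKernel_inv_smul_sub_eq_zero (ht : 0 < t) {z : 𝔼 n} (hz : z ∉ ball x t) :
    heightKernel (t⁻¹ • (z - x)) = 0 := by
  rw [mem_ball, dist_eq_norm, not_lt] at hz
  refine heightKernel_eq_zero ?_
  rwa [norm_smul, norm_inv, Real.norm_of_nonneg ht.le, ← div_eq_inv_mul, one_le_div₀ ht]

lemma integrable_sq_mul_heightKernel_inv_smul_sub (hf : Continuous f) (x : 𝔼 n) (ht : 0 < t) :
    Integrable fun z => f z ^ 2 * heightKernel (t⁻¹ • (z - x)) := by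
  have hcont := continuous_heightKernel (n := n)
  refine Continuous.integrable_of_hasCompactSupport (by fun_prop) (HasCompactSupport.mul_left
    (.intro (isCompact_closedBall x t) fun z hz => heightKernel_inv_smul_sub_eq_zero ht fun h => hz
      (ball_subset_closedBall h)))

lemma avgHeight_le_mul_setIntegral (hf : Continuous f) (x : 𝔼 n) (ht : 0 < t) :
    avgHeight f x t ≤ 6 * (t ^ n)⁻¹ * ∫ z in ball x t, f z ^ 2 := by
  have hinteg := integrable_sq_mul_heightKernel_inv_smul_sub hf x ht
  have hball : ∫ z, f z ^ 2 * heightKernel (t⁻¹ • (z - x))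
      = ∫ z in ball x t, f z ^ 2 * heightKernel (t⁻¹ • (z - x)) :=
    (setIntegral_eq_integral_of_forall_compl_eq_zero fun z hz => by
      rw [heightKernel_inv_smul_sub_eq_zero ht hz, mul_zero]).symm
  rw [avgHeight_eq_integral f x ht, hball, mul_comm 6, mul_assoc, ← integral_const_mul 6]
  refine mul_le_mul_of_nonneg_left (setIntegral_mono hinteg.integrableOn
    ((integrableOn_ball_sq hf x t).const_mul 6) fun z => ?_) (by positivity)
  rw [mul_comm]
  exact mul_le_mul_of_nonneg_right (heightKernel_le _) (sq_nonneg _)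

lemma mul_setIntegral_le_avgHeight (hf : Continuous f) (x : 𝔼 n) (ht : 0 < t) (hθ : θ ≤ 1) :
    6 * (1 - θ ^ 2) ^ 2 * ∫ z in ball x (θ * t), f z ^ 2 ≤ t ^ n * avgHeight f x t := by
  have hinteg := integrable_sq_mul_heightKernel_inv_smul_sub hf x ht
  rw [avgHeight_eq_integral f x ht, mul_inv_cancel_left₀ (by positivity), ← integral_const_mul]
  refine (setIntegral_mono_on ((integrableOn_ball_sq hf x (θ * t)).const_mul _) hinteg.integrableOn
    measurableSet_ball fun z hz => ?_).trans
    (setIntegral_le_integral hinteg (.of_forall fun z => mul_nonneg (sq_nonneg _)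
      (heightKernel_nonneg _)))
  rw [mul_comm]
  refine mul_le_mul_of_nonneg_left (le_heightKernel ?_ hθ) (sq_nonneg _)
  rw [norm_smul, norm_inv, Real.norm_of_nonneg ht.le, inv_mul_le_iff₀ ht, mul_comm,
    ← dist_eq_norm]
  exact hz.le

lemma avgHeight_le_mul_avgHeight (hf : Continuous f) (hs : 0 < s) (ht : 0 < t)
    (hθ₀ : 0 ≤ θ) (hθ : θ < 1) (hdist : s + dist x y ≤ θ * t) :
    avgHeight f x s ≤ (t / s) ^ n / (1 - θ ^ 2) ^ 2 * avgHeight f y t := by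
  have hweight : 0 < 1 - θ ^ 2 := by nlinarith
  have hmono : ∫ z in ball x s, f z ^ 2 ≤ ∫ z in ball y (θ * t), f z ^ 2 :=
    setIntegral_mono_set (integrableOn_ball_sq hf y _) (.of_forall fun z => sq_nonneg _)
      (ball_subset_ball' hdist).eventuallyLE
  calc avgHeight f x s
      ≤ 6 * (s ^ n)⁻¹ * ∫ z in ball x s, f z ^ 2 := avgHeight_le_mul_setIntegral hf x hs
    _ ≤ 6 * (s ^ n)⁻¹ * ∫ z in ball y (θ * t), f z ^ 2 := by gcongr
    _ = (s ^ n * (1 - θ ^ 2) ^ 2)⁻¹ *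
          (6 * (1 - θ ^ 2) ^ 2 * ∫ z in ball y (θ * t), f z ^ 2) := by field_simp
    _ ≤ (s ^ n * (1 - θ ^ 2) ^ 2)⁻¹ * (t ^ n * avgHeight f y t) :=
        mul_le_mul_of_nonneg_left (mul_setIntegral_le_avgHeight hf y ht hθ.le) (by positivity)
    _ = _ := by rw [div_pow]; field_simp

lemma exists_avgHeight_le_mul_avgHeight (n : ℕ) {δ : ℝ} (hs : 0 < s) (hδ : 0 ≤ δ)
    (hst : s + δ < t) :
    ∃ K > 0, ∀ (f : 𝔼 n → ℝ) (x y : 𝔼 n), Continuous f → dist x y ≤ δ →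
      avgHeight f x s ≤ K * avgHeight f y t := by
  have ht : 0 < t := by linarith
  have hθ : (s + δ) / t < 1 := (div_lt_one ht).2 hst
  have hθ₀ : 0 ≤ (s + δ) / t := by positivity
  have hweight : 0 < 1 - ((s + δ) / t) ^ 2 := by nlinarith
  refine ⟨(t / s) ^ n / (1 - ((s + δ) / t) ^ 2) ^ 2, by positivity, fun f x y hf hxy =>
    avgHeight_le_mul_avgHeight hf hs ht hθ₀ hθ ?_⟩
  rw [div_mul_cancel₀ _ ht.ne']
  linarith

/-- Quantitative nondegeneracy of `f` at `x` on scales up to `T`: the weighted height doubles by at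
most the factor `2 ^ κ` and is at least `c * s ^ κ` at scale `s`. -/
structure NondegenerateAt (κ c T : ℝ) (f : 𝔼 n → ℝ) (x : 𝔼 n) : Prop where
  doubling : ∀ s, 0 < s → 2 * s ≤ T → avgHeight f x (2 * s) ≤ 2 ^ κ * avgHeight f x s
  lower_bound : ∀ s, 0 < s → s ≤ T → c * s ^ κ ≤ avgHeight f x s

/-- A height bounded below at the top scale, and growing in a controlled way there, is nondegenerate
at all smaller scales, because the frequency is monotone. -/
lemma nondegenerateAt_of_growth (hf : ContDiff ℝ 2 f) {R κ c T T' : ℝ}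
    (hharm : ∀ y ∈ ball x R, lapl f y = 0) (hκ : 0 ≤ κ) (hT : 0 < T) (hT₁ : T ≤ 1)
    (hTT' : T < T') (hT'R : T' < R) (hlower : c ≤ avgHeight f x T)
    (hgrowth : avgHeight f x T' ≤ (T' / T) ^ κ * avgHeight f x T) :
    NondegenerateAt κ c T f x := by
  have hrpow {s t : ℝ} (hs : 0 < s) (hst : s ≤ t) (ht : t ≤ T) :
      avgHeight f x t ≤ (t / s) ^ κ * avgHeight f x s :=
    avgHeight_le_rpow_mul hf hharm hκ hT hTT' hT'R hgrowth hs hst ht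
  refine ⟨fun s hs hsT => ?_, fun s hs hsT => ?_⟩
  · simpa [hs.ne'] using hrpow hs (by linarith) hsT
  · have hTpow : T ^ κ ≤ 1 := Real.rpow_le_one hT.le hT₁ hκ
    have := hrpow hs hsT le_rfl
    rw [Real.div_rpow hT.le hs.le, div_mul_eq_mul_div, le_div_iff₀ (by positivity)] at this
    calc c * s ^ κ ≤ avgHeight f x T * s ^ κ := by gcongr
      _ ≤ T ^ κ * avgHeight f x s := this
      _ ≤ avgHeight f x s := mul_le_of_le_one_left (avgHeight_nonneg f x s) hTpow

lemma exists_nondegenerateAt (hn : 2 ≤ n) {N₀ : ℝ} (hN₀ : 0 ≤ N₀) :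
    ∃ κ c : ℝ, 0 ≤ κ ∧ 0 < c ∧ ∀ f : 𝔼 n → ℝ, ContDiff ℝ 2 f →
      (∀ y ∈ ball 0 (63 / 64), lapl f y = 0) →
      (∀ ρ ∈ Set.Ioo 0 (63 / 64), freqN f 0 ρ ≤ N₀) →
      ∫ y in ball 0 (1 / 2), f y ^ 2 = 1 →
      ∀ x, ‖x‖ ≤ 29 / 64 → NondegenerateAt κ c (15 / 32) f x := by
  obtain ⟨κ₀, -, hgrowth⟩ := exists_avgHeight_zero_le hn hN₀
  obtain ⟨K₁, hK₁, hout⟩ := exists_avgHeight_le_mul_avgHeight n (s := 1 / 2) (δ := 29 / 64)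
    (t := 31 / 32) (by norm_num) (by norm_num) (by norm_num)
  obtain ⟨K₂, hK₂, hin⟩ := exists_avgHeight_le_mul_avgHeight n (s := 1 / 128) (δ := 29 / 64)
    (t := 15 / 32) (by norm_num) (by norm_num) (by norm_num)
  set G : ℝ := (31 / 32 / (1 / 128)) ^ κ₀
  have hG : 0 < G := by positivity
  set w : ℝ := 6 * (1 - (16 / 31) ^ 2) ^ 2
  have : 0 < w := by positivity
  set D : ℝ := max 1 (K₁ * (G * K₂))
  have hD : 0 ≤ Real.logb (16 / 15) D := Real.logb_nonneg (by norm_num) (le_max_left _ _)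
  refine ⟨Real.logb (16 / 15) D, w / (G * K₂), hD, by positivity,
    fun f hf hharm hfreq hnorm x hx => ?_⟩
  have hcomp : avgHeight f 0 (31 / 32) ≤ G * K₂ * avgHeight f x (15 / 32) :=
    calc avgHeight f 0 (31 / 32) ≤ G * avgHeight f 0 (1 / 128) :=
          hgrowth f _ hf hharm hfreq _ _ (by norm_num) (by norm_num) (by norm_num)
      _ ≤ G * (K₂ * avgHeight f x (15 / 32)) :=
          mul_le_mul_of_nonneg_left (hin f 0 x hf.continuous (by rwa [dist_zero_left])) hG.le
      _ = _ := by ring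
  refine nondegenerateAt_of_growth (R := 17 / 32) (T' := 1 / 2) hf (fun y hy => hharm y
    (ball_subset_ball' (by rw [dist_zero_right]; linarith) hy)) hD (by norm_num) (by norm_num)
    (by norm_num) (by norm_num) ?_ ?_
  · have hbelow := mul_setIntegral_le_avgHeight hf.continuous 0 (t := 31 / 32) (θ := 16 / 31)
      (by norm_num) (by norm_num)
    rw [show (16 / 31 : ℝ) * (31 / 32) = 1 / 2 by norm_num, hnorm, mul_one] at hbelow
    rw [div_le_iff₀' (by positivity)]
    exact (hbelow.trans (mul_le_of_le_one_left (avgHeight_nonneg f 0 _)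
      (pow_le_one₀ (by norm_num) (by norm_num)))).trans hcomp
  · have hDpow : ((1 : ℝ) / 2 / (15 / 32)) ^ Real.logb (16 / 15) D = D := by
      convert Real.rpow_logb _ _ _ using 2 <;> norm_num [D]
    rw [hDpow]
    calc avgHeight f x (1 / 2) ≤ K₁ * avgHeight f 0 (31 / 32) :=
          hout f x 0 hf.continuous (by rwa [dist_zero_right])
      _ ≤ K₁ * (G * K₂ * avgHeight f x (15 / 32)) := mul_le_mul_of_nonneg_left hcomp hK₁.le
      _ ≤ D * avgHeight f x (15 / 32) := by
          rw [← mul_assoc]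
          exact mul_le_mul_of_nonneg_right (le_max_right _ _) (avgHeight_nonneg f x _)

end Nondegeneracy

/-! ### Sublevel sets and the improvement of the ratio -/

section Improvement

variable {n : ℕ} {f u v : 𝔼 n → ℝ} {x z : 𝔼 n} {κ c T d M δ A : ℝ}

lemma sq_mul_heightMass_le_of_mem_ball (hf : ContDiff ℝ 2 f) (hd : 0 < d)
    (hharm : ∀ y ∈ ball x (2 * d), lapl f y = 0) (hz : z ∈ ball x d) :
    f z ^ 2 * heightMass n ≤ 6 * 4 ^ n * avgHeight f x (2 * d) := by
  rw [mem_ball] at hz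
  calc f z ^ 2 * heightMass n ≤ avgHeight f z (d / 2) :=
        sq_mul_heightMass_le hf (fun y hy => hharm y (ball_subset_ball' (by linarith) hy))
          (by positivity)
    _ ≤ (2 * d / (d / 2)) ^ n / (1 - (3 / 4) ^ 2) ^ 2 * avgHeight f x (2 * d) :=
        avgHeight_le_mul_avgHeight hf.continuous (by positivity) (by positivity) (by norm_num)
          (by norm_num) (by linarith)
    _ ≤ 6 * 4 ^ n * avgHeight f x (2 * d) := by
        refine mul_le_mul_of_nonneg_right ?_ (avgHeight_nonneg f x _)
        rw [show 2 * d / (d / 2) = 4 by field_simp; norm_num, div_le_iff₀ (by norm_num)]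
        linarith [pow_pos (four_pos (α := ℝ)) n]

lemma integral_mul_heightKernel_le {g : 𝔼 n → ℝ} {S τ : ℝ} (hg : Continuous g) (hτ : 0 ≤ τ)
    (hS : ∀ y, ‖y‖ < 1 → g y ≤ S) :
    ∫ y, g y * heightKernel y
      ≤ τ * heightMass n + S * (heightMass n - ∫ y in {y | g y < τ}, heightKernel y) := by
  have hmeas : MeasurableSet {y | g y < τ} := (isOpen_lt hg continuous_const).measurableSet
  have hind := integrable_heightKernel.indicator hmeas
  rw [heightMass, ← integral_indicator hmeas, ← integral_sub integrable_heightKernel hind,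
    ← integral_const_mul, ← integral_const_mul, ← integral_add]
  · refine integral_mono (integrable_mul_heightKernel hg) ?_ fun y => ?_
    · exact (integrable_heightKernel.const_mul τ).add
        ((integrable_heightKernel.sub hind).const_mul S)
    have hK := heightKernel_nonneg y
    rcases le_or_gt 1 ‖y‖ with hy | hy
    · simp [Set.indicator, heightKernel_eq_zero hy]
    by_cases hyτ : g y < τ
    · simp [Set.indicator, hyτ, mul_le_mul_of_nonneg_right hyτ.le hK]
    · simp only [Set.indicator, Set.mem_ofPred_eq, hyτ, if_false, sub_zero]
      nlinarith [mul_le_mul_of_nonneg_right (hS y hy) hK]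
  · exact integrable_heightKernel.const_mul τ
  · exact (integrable_heightKernel.sub hind).const_mul S

/-- The proportion of the weight of a ball on which a function with doubling exponent `κ` is
guaranteed not to be small. -/
noncomputable def nonsmallFraction (n : ℕ) (κ : ℝ) : ℝ := (12 * 4 ^ n * 2 ^ κ)⁻¹

/-- The Paley–Zygmund inequality on a ball, the `L⁴`–`L²` comparison being replaced by the mean
value property and doubling. -/
lemma NondegenerateAt.setIntegral_heightKernel_le (h : NondegenerateAt κ c T f x) (hc : 0 < c)
    (hf : ContDiff ℝ 2 f) (hd : 0 < d) (hdT : 2 * d ≤ T)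
    (hharm : ∀ y ∈ ball x (2 * d), lapl f y = 0) :
    ∫ y in {y | f (x + d • y) ^ 2 < avgHeight f x d / (2 * heightMass n)}, heightKernel y
      ≤ (1 - nonsmallFraction n κ) * heightMass n := by
  have hm := heightMass_pos n
  set F := avgHeight f x d with hF
  have hF_pos : 0 < F :=
    (mul_pos hc (Real.rpow_pos_of_pos hd κ)).trans_le (h.lower_bound d hd (by linarith))
  set S : ℝ := 6 * 4 ^ n * (2 ^ κ * F) / heightMass n
  have hS : 0 < S := by positivity
  have hcont : Continuous fun y => f (x + d • y) ^ 2 :=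
    (hf.continuous.comp (by fun_prop : Continuous fun y => x + d • y)).pow 2
  have hbound (y : 𝔼 n) (hy : ‖y‖ < 1) : f (x + d • y) ^ 2 ≤ S := by
    rw [le_div_iff₀ hm]
    refine (sq_mul_heightMass_le_of_mem_ball hf hd hharm (add_smul_mem_ball_of_le hd hy)).trans ?_
    exact mul_le_mul_of_nonneg_left (h.doubling d hd hdT) (by positivity)
  have hmain := integral_mul_heightKernel_le hcont (τ := F / (2 * heightMass n)) (by positivity)
    hbound
  rw [← avgHeight, ← hF] at hmain
  set I := ∫ y in {y | f (x + d • y) ^ 2 < F / (2 * heightMass n)}, heightKernel y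
  have hhalf : F / (2 * heightMass n) * heightMass n = F / 2 := by field_simp
  have hfrac : S * (nonsmallFraction n κ * heightMass n) = F / 2 := by
    simp only [S, nonsmallFraction]
    field_simp
    norm_num
  refine le_of_mul_le_mul_left ?_ hS
  linarith

lemma eventuallyEq_abs (hf : ContinuousAt f z) (hz : f z ≠ 0) :
    (fun y => |f y|) =ᶠ[𝓝 z] fun y => SignType.sign (f z) * f y := by
  rcases hz.lt_or_gt with hz | hz
  · filter_upwards [hf.eventually_lt_const hz] with y hy
    simp [abs_of_neg hy, hz]
  · filter_upwards [hf.eventually_const_lt hz] with y hy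
    simp [abs_of_pos hy, hz]

lemma lapl_max_zero_cube_nonneg (hf : ContDiff ℝ 2 f) (hz : lapl f z = 0) :
    0 ≤ lapl (fun y => max (f y) 0 ^ 3) z := by
  rw [lapl_comp (hasDerivAt_max_zero_pow 1)
    (fun t => (hasDerivAt_max_zero_pow 0 t).const_mul _) hf, hz]
  positivity

/-- Near a zero of `v` the function vanishes; elsewhere `u` and `v` have locally constant sign. -/
lemma contDiffAt_and_lapl_nonneg_max_abs_sub_cube (hu : ContDiff ℝ 2 u) (hv : ContDiff ℝ 2 v)
    (hu₀ : lapl u z = 0) (hv₀ : lapl v z = 0) (hzero : u z = 0 → v z = 0) (hM : 0 ≤ M)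
    (hδ : 0 < δ) :
    ContDiffAt ℝ 2 (fun y => max (|v y| - M * |u y| - δ) 0 ^ 3) z ∧
      0 ≤ lapl (fun y => max (|v y| - M * |u y| - δ) 0 ^ 3) z := by
  by_cases hvz : v z = 0
  · have hloc : (fun y => max (|v y| - M * |u y| - δ) 0 ^ 3) =ᶠ[𝓝 z] fun _ => 0 := by
      have hsmall : ∀ᶠ y in 𝓝 z, |v y| < δ :=
        hv.continuous.abs.continuousAt.eventually_lt_const (by simpa [hvz])
      filter_upwards [hsmall] with y hy
      rw [max_eq_right (by linarith [mul_nonneg hM (abs_nonneg (u y))]), zero_pow three_ne_zero]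
    exact ⟨contDiffAt_const.congr_of_eventuallyEq hloc, by
      rw [lapl_congr_of_eventuallyEq hloc]; simp [lapl]⟩
  · set σ : ℝ := ↑(SignType.sign (v z))
    set τ : ℝ := ↑(SignType.sign (u z))
    have hloc : (fun y => max (|v y| - M * |u y| - δ) 0 ^ 3) =ᶠ[𝓝 z]
        fun y => max (σ * v y - M * τ * u y - δ) 0 ^ 3 := by
      filter_upwards [eventuallyEq_abs hv.continuous.continuousAt hvz,
        eventuallyEq_abs hu.continuous.continuousAt (mt hzero hvz)] with y hvy huy
      rw [hvy, huy, mul_assoc]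
    have hlin : ContDiff ℝ 2 fun y => σ * v y - M * τ * u y - δ := by fun_prop
    refine ⟨((contDiff_max_zero_pow 2).comp hlin).contDiffAt.congr_of_eventuallyEq hloc, ?_⟩
    rw [lapl_congr_of_eventuallyEq hloc]
    refine lapl_max_zero_cube_nonneg hlin ?_
    rw [lapl_sub_const_mul_sub_const hv hu, hu₀, hv₀, mul_zero, mul_zero, sub_zero]

/-- Two functions `u`, `v` on `ℝⁿ` that are harmonic on `Ω` with `Z(u) ∩ Ω ⊆ Z(v)`. For convenience
both are `C²` on the whole space. -/
structure HarmonicPairOn (u v : 𝔼 n → ℝ) (Ω : Set (𝔼 n)) : Prop where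
  contDiff_left : ContDiff ℝ 2 u
  contDiff_right : ContDiff ℝ 2 v
  lapl_left : ∀ y ∈ Ω, lapl u y = 0
  lapl_right : ∀ y ∈ Ω, lapl v y = 0
  right_eq_zero : ∀ y ∈ Ω, u y = 0 → v y = 0

lemma HarmonicPairOn.mono {Ω Ω' : Set (𝔼 n)} (h : HarmonicPairOn u v Ω) (hsub : Ω' ⊆ Ω) :
    HarmonicPairOn u v Ω' :=
  ⟨h.contDiff_left, h.contDiff_right, fun y hy => h.lapl_left y (hsub hy),
    fun y hy => h.lapl_right y (hsub hy), fun y hy => h.right_eq_zero y (hsub hy)⟩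

lemma HarmonicPairOn.max_abs_sub_cube_mul_heightMass_le (h : HarmonicPairOn u v (ball x (2 * d)))
    {E : Set (𝔼 n)} (hE : MeasurableSet E) (hd : 0 < d) (hM : 0 ≤ M) (hδ : 0 < δ) (hA : 0 ≤ A)
    (hle : ∀ y ∈ ball x d, |v y| ≤ M * |u y| + A)
    (hoff : ∀ y ∉ E, x + d • y ∈ ball x d → |v (x + d • y)| ≤ M * |u (x + d • y)|) :
    max (|v x| - M * |u x| - δ) 0 ^ 3 * heightMass n ≤ A ^ 3 * ∫ y in E, heightKernel y := by
  have hφ (z) (hz : z ∈ ball x (2 * d)) := contDiffAt_and_lapl_nonneg_max_abs_sub_cube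
    h.contDiff_left h.contDiff_right (h.lapl_left z hz) (h.lapl_right z hz) (h.right_eq_zero z hz)
    hM hδ
  have hcont : Continuous fun y => max (|v (x + d • y)| - M * |u (x + d • y)| - δ) 0 ^ 3 := by
    have hcu := h.contDiff_left.continuous
    have hcv := h.contDiff_right.continuous
    fun_prop
  refine (mul_heightMass_le (R' := 2 * d) hd (by linarith)
    (fun z hz => (hφ z hz).1.contDiffWithinAt)
    fun z hz => (hφ z (ball_subset_ball (by linarith) hz)).2).trans ?_
  rw [← integral_indicator hE, ← integral_const_mul]
  refine integral_mono (integrable_mul_heightKernel hcont)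
    ((integrable_heightKernel.indicator hE).const_mul _) fun y => ?_
  rcases le_or_gt 1 ‖y‖ with hy | hy
  · simp [Set.indicator, heightKernel_eq_zero hy]
  have hmem : x + d • y ∈ ball x d := add_smul_mem_ball_of_le hd hy
  by_cases hyE : y ∈ E
  · simp only [Set.indicator_of_mem hyE]
    refine mul_le_mul_of_nonneg_right (pow_le_pow_left₀ (le_max_right _ _) ?_ 3)
      (heightKernel_nonneg y)
    exact max_le (by linarith [hle _ hmem]) hA
  · simp only [Set.indicator_of_notMem hyE, mul_zero]
    rw [max_eq_right (by linarith [hoff y hyE hmem]), zero_pow three_ne_zero, zero_mul]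

/-- Raising the slope `M` to `M'` lets the error `A` shrink by a fixed factor: where `u` is not
small the extra slope absorbs `A`, and the set where `u` is small misses a fixed fraction of the
ball. -/
lemma NondegenerateAt.abs_le_mul_abs_add (h : NondegenerateAt κ c T u x) (hc : 0 < c)
    (hpair : HarmonicPairOn u v (ball x (2 * d))) (hd : 0 < d) (hdT : 2 * d ≤ T) {M' lam : ℝ}
    (hM : 0 ≤ M) (hMM' : M ≤ M') (hA : 0 ≤ A) (hle : ∀ y ∈ ball x d, |v y| ≤ M * |u y| + A)
    (hgap : A ^ 2 * (2 * heightMass n) ≤ (M' - M) ^ 2 * (c * d ^ κ))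
    (hlam : 0 ≤ lam) (hlam_cube : 1 - nonsmallFraction n κ ≤ lam ^ 3) :
    |v x| ≤ M' * |u x| + lam * A := by
  have hm := heightMass_pos n
  set E := {y | u (x + d • y) ^ 2 < avgHeight u x d / (2 * heightMass n)}
  have hE : MeasurableSet E :=
    (isOpen_lt ((hpair.contDiff_left.continuous.comp (by fun_prop :
      Continuous fun y => x + d • y)).pow 2) continuous_const).measurableSet
  have hoff (y) (hy : y ∉ E) (hmem : x + d • y ∈ ball x d) :
      |v (x + d • y)| ≤ M' * |u (x + d • y)| := by
    have hu_sq : avgHeight u x d ≤ u (x + d • y) ^ 2 * (2 * heightMass n) :=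
      (div_le_iff₀ (by positivity)).1 (not_lt.1 hy)
    have hsq : A ^ 2 * (2 * heightMass n)
        ≤ ((M' - M) * |u (x + d • y)|) ^ 2 * (2 * heightMass n) := by
      rw [mul_pow, sq_abs, mul_assoc]
      exact hgap.trans (mul_le_mul_of_nonneg_left
        ((h.lower_bound d hd (by linarith)).trans hu_sq) (sq_nonneg _))
    have hA_le : A ≤ (M' - M) * |u (x + d • y)| :=
      le_of_sq_le_sq (le_of_mul_le_mul_right hsq (by positivity))
        (mul_nonneg (by linarith) (abs_nonneg _))
    linarith [hle _ hmem]
  refine le_of_forall_pos_le_add fun δ hδ => ?_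
  have hcube : max (|v x| - M' * |u x| - δ) 0 ^ 3 ≤ (lam * A) ^ 3 := by
    refine le_of_mul_le_mul_right ?_ hm
    calc max (|v x| - M' * |u x| - δ) 0 ^ 3 * heightMass n
        ≤ A ^ 3 * ∫ y in E, heightKernel y :=
          hpair.max_abs_sub_cube_mul_heightMass_le hE hd (hM.trans hMM') hδ hA
            (fun y hy => (hle y hy).trans (by gcongr)) hoff
      _ ≤ A ^ 3 * (lam ^ 3 * heightMass n) := by
          gcongr
          exact (h.setIntegral_heightKernel_le hc hpair.contDiff_left hd hdT
            hpair.lapl_left).trans (by gcongr)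
      _ = (lam * A) ^ 3 * heightMass n := by ring
  have := (le_max_left _ _).trans (le_of_pow_le_pow_left₀ three_ne_zero (by positivity) hcube)
  linarith

end Improvement

/-! ### Iteration -/

section Iteration

variable {n : ℕ} {u v : 𝔼 n → ℝ} {κ c T A M q ρ w : ℝ}

lemma nonsmallFraction_mem_Ioo (n : ℕ) (hκ : 0 ≤ κ) : nonsmallFraction n κ ∈ Set.Ioo 0 1 := by
  have h2 : (1 : ℝ) ≤ 2 ^ κ := Real.one_le_rpow one_le_two hκ
  have h4 : (1 : ℝ) ≤ 4 ^ n := one_le_pow₀ (by norm_num)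
  refine ⟨by unfold nonsmallFraction; positivity, inv_lt_one_of_one_lt₀ ?_⟩
  nlinarith

lemma exists_rpow_cube_eq {θ p : ℝ} (hθ : θ ∈ Set.Ioo 0 1) (hp : 0 < p) :
    ∃ q ∈ Set.Ioo (0 : ℝ) 1, 1 - θ = (q ^ p) ^ 3 := by
  have hθ' : 0 ≤ 1 - θ := by linarith [hθ.2]
  refine ⟨(1 - θ) ^ (p * 3)⁻¹, ⟨Real.rpow_pos_of_pos (by linarith [hθ.2]) _,
    Real.rpow_lt_one hθ' (by linarith [hθ.1]) (by positivity)⟩, ?_⟩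
  rw [← Real.rpow_mul_natCast (by positivity), Nat.cast_ofNat,
    Real.rpow_inv_rpow hθ' (by positivity)]

lemma rpow_half_add_one_pow_sq (hq : 0 < q) (k : ℕ) :
    ((q ^ (κ / 2 + 1)) ^ k) ^ 2 = (q ^ k) ^ 2 * (q ^ k) ^ κ := by
  rw [Real.rpow_pow_comm hq.le, ← Real.rpow_mul_natCast (by positivity), ← Real.rpow_natCast _ 2,
    ← Real.rpow_add (by positivity)]
  congr 1
  push_cast
  ring

/-- On the shrinking balls of radius `ρ + w q ^ k` the slope increases to `M` and the error
decreases geometrically to `0`. The exponent `κ / 2 + 1` makes the gap condition of the improvement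
step scale invariant. -/
lemma abs_le_mul_abs_add_pow (hc : 0 < c) (hpair : HarmonicPairOn u v (ball 0 (ρ + 2 * w)))
    (hq : q ∈ Set.Ioo 0 1) (hw : 0 < w) (hwT : 2 * w ≤ T)
    (hnondeg : ∀ x ∈ ball 0 (ρ + w), NondegenerateAt κ c T u x) (hM : 0 ≤ M) (hA : 0 ≤ A)
    (hle : ∀ y ∈ ball 0 (ρ + w), |v y| ≤ A)
    (hgap : A ^ 2 * (2 * heightMass n) ≤ (M * (1 - q)) ^ 2 * (c * (w * (1 - q)) ^ κ))
    (hfrac : 1 - nonsmallFraction n κ = (q ^ (κ / 2 + 1)) ^ 3) (k : ℕ) :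
    ∀ x ∈ ball 0 (ρ + w * q ^ k),
      |v x| ≤ M * (1 - q ^ k) * |u x| + (q ^ (κ / 2 + 1)) ^ k * A := by
  obtain ⟨hq₀, hq₁⟩ := hq
  induction k with
  | zero => simpa using hle
  | succ k ih =>
    intro x hx
    have hqk : q ^ k ≤ 1 := pow_le_one₀ hq₀.le hq₁.le
    have hqk' : q ^ (k + 1) ≤ q ^ k := pow_le_pow_of_le_one hq₀.le hq₁.le k.le_succ
    set d := w * (1 - q) * q ^ k with hd
    have hd₀ : 0 < d := by have := sub_pos.2 hq₁; positivity
    have hradius : ρ + w * q ^ (k + 1) + d = ρ + w * q ^ k := by rw [hd, pow_succ]; ring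
    have hwq : w * q ^ k ≤ w := mul_le_of_le_one_right hw.le hqk
    have hwq' : 0 < w * q ^ (k + 1) := by positivity
    rw [mem_ball_zero_iff] at hx
    have hball : ball x (2 * d) ⊆ ball 0 (ρ + 2 * w) :=
      ball_subset_ball' (by rw [dist_zero_right]; linarith)
    have hball' : ball x d ⊆ ball 0 (ρ + w * q ^ k) :=
      ball_subset_ball' (by rw [dist_zero_right]; linarith)
    rw [pow_succ' (q ^ (κ / 2 + 1)), mul_assoc (q ^ _)]
    refine (hnondeg x (by rw [mem_ball_zero_iff]; linarith)).abs_le_mul_abs_add hc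
      (hpair.mono hball) hd₀ (by linarith) (mul_nonneg hM (by linarith)) (by gcongr) (by positivity)
      (fun y hy => ih y (hball' hy)) ?_ (by positivity) hfrac.le
    calc ((q ^ (κ / 2 + 1)) ^ k * A) ^ 2 * (2 * heightMass n)
        = (q ^ k) ^ 2 * (q ^ k) ^ κ * (A ^ 2 * (2 * heightMass n)) := by
          rw [mul_pow, rpow_half_add_one_pow_sq hq₀]; ring
      _ ≤ (q ^ k) ^ 2 * (q ^ k) ^ κ * ((M * (1 - q)) ^ 2 * (c * (w * (1 - q)) ^ κ)) := by gcongr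
      _ = _ := by
          rw [hd, Real.mul_rpow (x := w * (1 - q)) (by have := sub_pos.2 hq₁; positivity)
            (by positivity), pow_succ]
          ring

lemma abs_le_mul_abs (hκ : 0 ≤ κ) (hc : 0 < c)
    (hpair : HarmonicPairOn u v (ball 0 (ρ + 2 * w))) (hq : q ∈ Set.Ioo 0 1) (hw : 0 < w)
    (hwT : 2 * w ≤ T)
    (hnondeg : ∀ x ∈ ball 0 (ρ + w), NondegenerateAt κ c T u x) (hM : 0 ≤ M) (hA : 0 ≤ A)
    (hle : ∀ y ∈ ball 0 (ρ + w), |v y| ≤ A)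
    (hgap : A ^ 2 * (2 * heightMass n) ≤ (M * (1 - q)) ^ 2 * (c * (w * (1 - q)) ^ κ))
    (hfrac : 1 - nonsmallFraction n κ = (q ^ (κ / 2 + 1)) ^ 3) {x : 𝔼 n} (hx : x ∈ ball 0 ρ) :
    |v x| ≤ M * |u x| := by
  have hlam : Tendsto (fun k : ℕ => (q ^ (κ / 2 + 1)) ^ k) atTop (𝓝 0) :=
    tendsto_pow_atTop_nhds_zero_of_lt_one (by have := hq.1; positivity)
      (Real.rpow_lt_one hq.1.le hq.2 (by positivity))
  have hlim : Tendsto (fun k : ℕ => M * |u x| + (q ^ (κ / 2 + 1)) ^ k * A) atTop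
      (𝓝 (M * |u x| + 0 * A)) := (hlam.mul_const A).const_add _
  rw [zero_mul, add_zero] at hlim
  refine ge_of_tendsto' hlim fun k => ?_
  have hqk : 0 ≤ w * q ^ k := by have := hq.1; positivity
  refine (abs_le_mul_abs_add_pow hc hpair hq hw hwT hnondeg hM hA hle hgap hfrac k x
    (ball_subset_ball (by linarith) hx)).trans ?_
  gcongr
  exact mul_le_of_le_one_right hM (by linarith [pow_nonneg hq.1.le k])

end Iteration

/-! ### The bound for the ratio -/

section Ratio

variable {n : ℕ} {f g : 𝔼 n → ℝ} {x : 𝔼 n} {r s R ρ κ c : ℝ}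

lemma sq_le_mul_setIntegral_of_lapl_eq_zero (hf : ContDiff ℝ 2 f)
    (hharm : ∀ y ∈ ball 0 r, lapl f y = 0) (hs : 0 < s) (hx : ‖x‖ + s ≤ r) :
    f x ^ 2 ≤ 6 / heightMass n * ((s ^ n)⁻¹ * ∫ y in ball 0 r, f y ^ 2) := by
  have hsub : ball x s ⊆ ball 0 r := ball_subset_ball' (by rwa [dist_zero_right, add_comm])
  have hmono : ∫ y in ball x s, f y ^ 2 ≤ ∫ y in ball 0 r, f y ^ 2 :=
    setIntegral_mono_set (integrableOn_ball_sq hf.continuous 0 r)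
      (.of_forall fun y => sq_nonneg (f y)) hsub.eventuallyLE
  rw [div_mul_eq_mul_div, le_div_iff₀ (heightMass_pos n)]
  calc f x ^ 2 * heightMass n ≤ avgHeight f x s :=
        sq_mul_heightMass_le hf (fun y hy => hharm y (hsub hy)) hs
    _ ≤ 6 * (s ^ n)⁻¹ * ∫ y in ball x s, f y ^ 2 := avgHeight_le_mul_setIntegral hf.continuous x hs
    _ ≤ 6 * (s ^ n)⁻¹ * ∫ y in ball 0 r, f y ^ 2 := by gcongr
    _ = 6 * ((s ^ n)⁻¹ * ∫ y in ball 0 r, f y ^ 2) := mul_assoc _ _ _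

lemma exists_abs_le_mul_sqrt_mul_abs (n : ℕ) (hκ : 0 ≤ κ) (hc : 0 < c) :
    ∃ C : ℝ, 0 < C ∧ ∀ u v : 𝔼 n → ℝ, HarmonicPairOn u v (ball 0 (63 / 64)) →
      (∀ x, ‖x‖ ≤ 29 / 64 → NondegenerateAt κ c (15 / 32) u x) → ∀ r : ℝ, 0 < r → r < 7 / 8 →
        ∀ x ∈ ball 0 (r / 2),
          |v x| ≤ C * √(r ^ (-(n + κ)) * ∫ y in ball 0 r, v y ^ 2) * |u x| := by
  obtain ⟨q, hq, hfrac⟩ := exists_rpow_cube_eq (nonsmallFraction_mem_Ioo n hκ)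
    (by positivity : 0 < κ / 2 + 1)
  have hq' : 0 < 1 - q := sub_pos.2 hq.2
  have hm := heightMass_pos n
  set B : ℝ := 6 / heightMass n * 4 ^ n
  set L : ℝ := c * ((1 - q) / 56) ^ κ
  have : 0 < L := by positivity
  refine ⟨√(2 * heightMass n * B / L) / (1 - q), by positivity,
    fun u v hpair hnondeg r hr hr' x hx => ?_⟩
  set I := ∫ y in ball 0 r, v y ^ 2
  have : 0 ≤ I := integral_nonneg fun y => sq_nonneg (v y)
  have hle (y : 𝔼 n) (hy : y ∈ ball 0 (r / 2 + r / 56)) : |v y| ≤ √(B * ((r ^ n)⁻¹ * I)) := by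
    rw [mem_ball_zero_iff] at hy
    refine Real.abs_le_sqrt ((sq_le_mul_setIntegral_of_lapl_eq_zero (r := r) (s := r / 4)
      hpair.contDiff_right (fun z hz => hpair.lapl_right z (ball_subset_ball (by linarith) hz))
      (by positivity) (by linarith)).trans_eq ?_)
    rw [div_pow, inv_div, div_eq_mul_inv (4 ^ n), mul_assoc (4 ^ n), ← mul_assoc]
  have hpow : r ^ (-(n + κ)) * r ^ κ = (r ^ n)⁻¹ := by
    rw [← Real.rpow_add hr, neg_add, neg_add_cancel_right, Real.rpow_neg hr.le, Real.rpow_natCast]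
  refine abs_le_mul_abs (w := r / 56) hκ hc
    (hpair.mono (ball_subset_ball (by linarith))) hq (by positivity) (by linarith)
    (fun y hy => hnondeg y (by rw [mem_ball_zero_iff] at hy; linarith)) (by positivity)
    (Real.sqrt_nonneg _) hle (le_of_eq ?_) hfrac hx
  rw [mul_pow, mul_pow, div_pow, Real.sq_sqrt (by positivity), Real.sq_sqrt (by positivity),
    Real.sq_sqrt (by positivity), ← hpow,
    show r / 56 * (1 - q) = r * ((1 - q) / 56) by ring, Real.mul_rpow hr.le (by positivity)]
  simp only [L]
  field_simp

lemma freqN_congr (h : Set.EqOn f g (ball x R)) (hρ : ρ < R) : freqN f x ρ = freqN g x ρ := by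
  have hD : DInt f x ρ = DInt g x ρ := setIntegral_congr_fun measurableSet_ball fun y hy => by
    have hloc : f =ᶠ[𝓝 y] g :=
      h.eventuallyEq_of_mem (isOpen_ball.mem_nhds (ball_subset_ball hρ.le hy))
    simp only [gradient, hloc.fderiv_eq]
  have hH : HInt f x ρ = HInt g x ρ :=
    setIntegral_congr_fun isClosed_sphere.measurableSet fun y hy => by
      simp only [h (sphere_subset_ball hρ hy)]
  rw [freqN, freqN, hD, hH]

lemma setIntegral_sq_congr (h : Set.EqOn f g (ball x R)) (hρ : ρ ≤ R) :
    ∫ y in ball x ρ, f y ^ 2 = ∫ y in ball x ρ, g y ^ 2 :=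
  setIntegral_congr_fun measurableSet_ball fun y hy => by simp only [h (ball_subset_ball hρ hy)]

lemma HarmonicFnOn.exists_contDiff_eqOn (hf : HarmonicFnOn f (ball x R)) (hρ : 0 < ρ)
    (hρR : ρ < R) :
    ∃ g, ContDiff ℝ 2 g ∧ Set.EqOn g f (ball x ρ) ∧ ∀ y ∈ ball x ρ, lapl g y = 0 := by
  obtain ⟨g, hg, hgf⟩ := exists_contDiff_eqOn_ball hf.1 hρ hρR
  refine ⟨g, hg, hgf, fun y hy => ?_⟩
  rw [lapl_congr_of_eventuallyEq (hgf.eventuallyEq_of_mem (isOpen_ball.mem_nhds hy))]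
  exact hf.2 y (ball_subset_ball hρR.le hy)

end Ratio

theorem uniform_boundary_harnack_general (n : ℕ) (hn : 2 ≤ n) (N₀ : ℝ) (hN₀ : 0 ≤ N₀) :
    ∃ C α : ℝ, 0 < C ∧ 0 < α ∧
      ∀ u v : 𝔼 n → ℝ,
        HarmonicFnOn u (ball 0 1) →
        HarmonicFnOn v (ball 0 1) →
        (∀ r ∈ Set.Ioo (0 : ℝ) 1, freqN u 0 r ≤ N₀) →
        (∫ x in ball 0 (1 / 2), u x ^ 2) = 1 →
        (∀ x ∈ ball 0 1, u x = 0 → v x = 0) →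
        ∀ r : ℝ, 0 < r → r < 7 / 8 →
          ∀ x ∈ ball 0 (r / 2), u x ≠ 0 →
            |v x / u x| ≤ C * √(r ^ (-α) * ∫ y in ball 0 r, v y ^ 2) := by
  obtain ⟨κ, c, hκ, hc, hnondeg⟩ := exists_nondegenerateAt hn hN₀
  obtain ⟨C, hC, hbound⟩ := exists_abs_le_mul_sqrt_mul_abs n hκ hc
  refine ⟨C, n + κ, hC, by positivity, fun u v hu hv hfreq hnorm hzero r hr hr' x hx hux => ?_⟩
  obtain ⟨f, hf, hfu, hlf⟩ := hu.exists_contDiff_eqOn (ρ := 63 / 64) (by norm_num) (by norm_num)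
  obtain ⟨g, hg, hgv, hlg⟩ := hv.exists_contDiff_eqOn (ρ := 63 / 64) (by norm_num) (by norm_num)
  have hpair : HarmonicPairOn f g (ball 0 (63 / 64)) := ⟨hf, hg, hlf, hlg, fun y hy hy₀ =>
    (hgv hy).trans (hzero y (ball_subset_ball (by norm_num) hy) ((hfu hy).symm.trans hy₀))⟩
  have hfreq' (ρ) (hρ : ρ ∈ Set.Ioo 0 (63 / 64)) : freqN f 0 ρ ≤ N₀ :=
    (freqN_congr hfu hρ.2).trans_le (hfreq ρ ⟨hρ.1, by linarith [hρ.2]⟩)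
  have hnorm' : ∫ y in ball 0 (1 / 2), f y ^ 2 = 1 :=
    (setIntegral_sq_congr hfu (by norm_num)).trans hnorm
  have hx' : x ∈ ball 0 (63 / 64) := ball_subset_ball (by linarith) hx
  rw [abs_div, div_le_iff₀ (abs_pos.2 hux), ← hfu hx', ← hgv hx',
    ← setIntegral_sq_congr hgv (by linarith : r ≤ 63 / 64)]
  exact hbound f g hpair (hnondeg f hf hlf hfreq' hnorm') r hr hr' x hx

/-- **Remark 3.11** (uniform L^∞ boundary Harnack for the ratio, case A = Identity):
for `n ≥ 2` and `N₀ > 0` there are `C > 0` and `α > 0` such that for all harmonic `u, v`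
on `B₁` with `u(0) = 0`, frequency of `u` bounded by `N₀`, `‖u‖_{L²(B_{1/2})} = 1` and
`Z(u) ⊆ Z(v)`, and every `r ∈ (0, 7/8)`,
`sup_{B_{r/2} ∖ Z(u)} |v/u| ≤ C (r^{-α} ∫_{B_r} v²)^{1/2}`. -/
theorem uniform_boundary_harnack (n : ℕ) (hn : 2 ≤ n) (N₀ : ℝ) (hN₀ : 0 < N₀) :
    ∃ C α : ℝ, 0 < C ∧ 0 < α ∧
      ∀ u v : EuclideanSpace ℝ (Fin n) → ℝ,
        HarmonicFnOn u (ball (0 : EuclideanSpace ℝ (Fin n)) 1) →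
        HarmonicFnOn v (ball (0 : EuclideanSpace ℝ (Fin n)) 1) →
        u 0 = 0 →
        (∀ r ∈ Set.Ioo (0 : ℝ) 1, freqN u 0 r ≤ N₀) →
        (∫ x in ball (0 : EuclideanSpace ℝ (Fin n)) (1/2), (u x) ^ 2) = 1 →
        (∀ x ∈ ball (0 : EuclideanSpace ℝ (Fin n)) 1, u x = 0 → v x = 0) →
        ∀ r : ℝ, 0 < r → r < 7/8 →
          ∀ x ∈ ball (0 : EuclideanSpace ℝ (Fin n)) (r/2), u x ≠ 0 →
            |v x / u x| ≤
              C * Real.sqrt (r ^ (-α) *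
                ∫ y in ball (0 : EuclideanSpace ℝ (Fin n)) r, (v y) ^ 2) := by
  obtain ⟨C, α, hC, hα, hbound⟩ := uniform_boundary_harnack_general n hn N₀ hN₀.le
  exact ⟨C, α, hC, hα, fun u v hu hv _ => hbound u v hu hv⟩
end

section
/- Let P be a nonzero harmonic polynomial on ℝⁿ (n ≥ 2) of degree k ≥ 1. Then for every real number a > −min(1, 2/k) the function x ↦ |P(x)|^a is integrable on the unit ball B₁, i.e. ∫_{B₁} |P(x)|^a dx < ∞. -/
open MeasureTheory Metric Filter

/-- A polynomial `P ∈ ℝ[x₁,…,xₙ]` is harmonic if `∑ i, ∂²P/∂xᵢ²` is the zero polynomial. -/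
def IsHarmonicPoly {n : ℕ} (P : MvPolynomial (Fin n) ℝ) : Prop :=
  ∑ i, MvPolynomial.pderiv i (MvPolynomial.pderiv i P) = 0

/-- The polynomial function on ℝⁿ associated with `P ∈ ℝ[x₁,…,xₙ]`. -/
noncomputable def polyFun {n : ℕ} (P : MvPolynomial (Fin n) ℝ)
    (x : EuclideanSpace ℝ (Fin n)) : ℝ :=
  MvPolynomial.eval (fun i => x i) P

/-! Write `E` for the expectation over independent standard Gaussians. If `P` is harmonic and
homogeneous, then `E(P g) = 0` whenever `deg g < deg P`. A nonzero harmonic polynomial is therefore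
squarefree: if `P = f² g` had `deg f > 0`, pairing its leading form `F² G` with `G` would give
`E((F G)²) = 0`.

For squarefree `P` of degree `k ≥ 2`, fix a direction `v` in which the leading form does not vanish.
Then `s ↦ P(z + s v)` has degree `k` and a leading coefficient independent of `z`, and its
discriminant `D(z)` is a nonzero polynomial of degree at most `k (k - 1)`. If `ζ` is the complex
root nearest to `s`, then `|r - r'| |s - ζ| ≤ 2 |s - r| |s - r'|` for all roots `r`, `r'`;
multiplying over all pairs yields
`|D(z)| |s - ζ| ^ (k (k - 1)) ≤ C |P(z + s v)| ^ (2 (k - 1))`. Raised to the power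
`-γ = -θ / (2 (k - 1))`, the left side is integrable in `s` because `k (k - 1) γ = k θ / 2 < 1`, and
what remains is `|D(z)| ^ (-γ)`. Since `deg D · γ < 1`, the cruder bound
`|D(z + s w)| ≥ c |s - ζ| ^ deg D` on lines of a direction `w` suffices to integrate it in `z`. -/

section LeadingForm
open MvPolynomial

variable {σ R : Type*} [CommSemiring R]

theorem pderiv_pderiv_comm (i j : σ) (p : MvPolynomial σ R) :
    pderiv i (pderiv j p) = pderiv j (pderiv i p) := by
  classical
  ext m
  simp only [coeff_pderiv]
  rcases eq_or_ne i j with rfl | h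
  · rfl
  · rw [add_right_comm]
    simp only [Finsupp.add_apply, Finsupp.single_eq_of_ne h, Finsupp.single_eq_of_ne h.symm,
      add_zero]
    ring

theorem degree_le_totalDegree_of_coeff_ne_zero {p : MvPolynomial σ R} {m : σ →₀ ℕ}
    (hm : coeff m p ≠ 0) : m.degree ≤ p.totalDegree :=
  le_totalDegree (mem_support_iff.2 hm)

theorem exists_coeff_ne_zero_degree_eq_totalDegree {p : MvPolynomial σ R} (hp : p ≠ 0) :
    ∃ m : σ →₀ ℕ, coeff m p ≠ 0 ∧ m.degree = p.totalDegree := by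
  obtain ⟨m, hm, hdeg⟩ := Finset.exists_mem_eq_sup p.support (support_nonempty.2 hp)
    fun m : σ →₀ ℕ => m.degree
  exact ⟨m, mem_support_iff.1 hm, hdeg.symm⟩

theorem totalDegree_pderiv_lt {i : σ} {p : MvPolynomial σ R} (h : pderiv i p ≠ 0) :
    (pderiv i p).totalDegree < p.totalDegree := by
  obtain ⟨m, hm, hdeg⟩ := exists_coeff_ne_zero_degree_eq_totalDegree h
  rw [coeff_pderiv] at hm
  have := degree_le_totalDegree_of_coeff_ne_zero (left_ne_zero_of_mul hm)
  rw [map_add, Finsupp.degree_single] at this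
  omega

theorem homogeneousComponent_add_mul {p q : MvPolynomial σ R} {a b : ℕ}
    (hp : p.totalDegree ≤ a) (hq : q.totalDegree ≤ b) :
    homogeneousComponent (a + b) (p * q) =
      homogeneousComponent a p * homogeneousComponent b q := by
  classical
  ext m
  simp only [coeff_homogeneousComponent, coeff_mul]
  trans ∑ x ∈ Finset.HasAntidiagonal.antidiagonal m,
    if m.degree = a + b then coeff x.1 p * coeff x.2 q else 0
  · split_ifs <;> simp
  refine Finset.sum_congr rfl fun x hx => ?_
  by_cases hxp : coeff x.1 p = 0
  · simp [hxp]
  by_cases hxq : coeff x.2 q = 0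
  · simp [hxq]
  have hdeg : x.1.degree + x.2.degree = m.degree := by
    rw [← map_add, Finset.HasAntidiagonal.mem_antidiagonal.1 hx]
  have hdeg_p := degree_le_totalDegree_of_coeff_ne_zero hxp
  have hdeg_q := degree_le_totalDegree_of_coeff_ne_zero hxq
  have : m.degree = a + b ↔ x.1.degree = a ∧ x.2.degree = b := by omega
  simp only [this, ite_and, mul_ite, ite_mul, zero_mul, mul_zero]
  split_ifs <;> rfl

/-- The leading form of a polynomial: its homogeneous component of top degree. -/
noncomputable def leadingForm (p : MvPolynomial σ R) : MvPolynomial σ R :=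
  homogeneousComponent p.totalDegree p

theorem leadingForm_isHomogeneous (p : MvPolynomial σ R) :
    (leadingForm p).IsHomogeneous p.totalDegree :=
  homogeneousComponent_isHomogeneous _ _

theorem leadingForm_ne_zero {p : MvPolynomial σ R} (hp : p ≠ 0) : leadingForm p ≠ 0 := by
  obtain ⟨m, hm, hdeg⟩ := exists_coeff_ne_zero_degree_eq_totalDegree hp
  refine ne_zero_iff.2 ⟨m, ?_⟩
  rwa [leadingForm, coeff_homogeneousComponent, if_pos hdeg]

theorem leadingForm_mul [NoZeroDivisors R] {p q : MvPolynomial σ R} (hp : p ≠ 0) (hq : q ≠ 0) :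
    leadingForm (p * q) = leadingForm p * leadingForm q := by
  rw [leadingForm, totalDegree_mul_of_isDomain hp hq, homogeneousComponent_add_mul le_rfl le_rfl]
  rfl

end LeadingForm

section GaussianExpectation
open ProbabilityTheory MvPolynomial

theorem integrable_pow_gaussianReal (j : ℕ) :
    Integrable (fun x : ℝ => x ^ j) (gaussianReal 0 1) := by
  refine (integrable_norm_iff (by fun_prop)).1 ?_
  simpa using (memLp_id_gaussianReal (μ := 0) (v := 1) (j : NNReal)).integrable_norm_pow'

theorem integrable_pow_mul_gaussianPDFReal (j : ℕ) :
    Integrable fun x : ℝ => x ^ j * gaussianPDFReal 0 1 x := by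
  have h := integrable_pow_gaussianReal j
  rw [gaussianReal_of_var_ne_zero _ one_ne_zero,
    integrable_withDensity_iff (measurable_gaussianPDF _ _)
      (ae_of_all _ fun _ => gaussianPDF_lt_top)] at h
  simpa using h

theorem hasDerivAt_gaussianPDFReal (x : ℝ) :
    HasDerivAt (gaussianPDFReal 0 1) (-x * gaussianPDFReal 0 1 x) x := by
  have hexponent : HasDerivAt (fun x : ℝ => -(x ^ 2) / 2) (-x) x :=
    ((hasDerivAt_pow 2 x).fun_neg.div_const 2).congr_deriv (by push_cast; ring)
  have hpdf : gaussianPDFReal 0 1 = fun x => (√(2 * Real.pi))⁻¹ * Real.exp (-(x ^ 2) / 2) := by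
    ext y
    simp [gaussianPDFReal]
  rw [hpdf]
  exact (hexponent.exp.const_mul _).congr_deriv (by ring)

theorem integral_pow_succ_gaussianReal (j : ℕ) :
    ∫ x, x ^ (j + 1) ∂(gaussianReal 0 1) = j * ∫ x, x ^ (j - 1) ∂(gaussianReal 0 1) := by
  have by_parts := integral_mul_deriv_eq_deriv_mul_of_integrable
    (u := fun x : ℝ => x ^ j) (u' := fun x => j * x ^ (j - 1))
    (v := gaussianPDFReal 0 1) (v' := fun x => -x * gaussianPDFReal 0 1 x)
    (fun x _ => by simpa using hasDerivAt_pow j x) (fun x _ => hasDerivAt_gaussianPDFReal x)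
    ((integrable_pow_mul_gaussianPDFReal (j + 1)).neg.congr
      (ae_of_all _ fun x => by simp only [Pi.neg_apply, Pi.mul_apply]; ring))
    (((integrable_pow_mul_gaussianPDFReal (j - 1)).const_mul (j : ℝ)).congr
      (ae_of_all _ fun x => by simp only [Pi.mul_apply]; ring))
    (integrable_pow_mul_gaussianPDFReal j)
  simp only [integral_gaussianReal_eq_integral_smul one_ne_zero, smul_eq_mul]
  calc ∫ x : ℝ, gaussianPDFReal 0 1 x * x ^ (j + 1)
      = -∫ x : ℝ, x ^ j * (-x * gaussianPDFReal 0 1 x) := by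
        rw [← integral_neg]
        congr 1 with x
        ring
    _ = ∫ x : ℝ, j * x ^ (j - 1) * gaussianPDFReal 0 1 x := by rw [by_parts, neg_neg]
    _ = j * ∫ x : ℝ, gaussianPDFReal 0 1 x * x ^ (j - 1) := by
        rw [← integral_const_mul]
        congr 1 with x
        ring

variable {σ : Type*} [Fintype σ]

theorem integrable_eval_gaussian (p : MvPolynomial σ ℝ) :
    Integrable (fun x => eval x p) (Measure.pi fun _ : σ => gaussianReal 0 1) := by
  induction p using MvPolynomial.induction_on' with
  | monomial m c =>
    simp only [eval_monomial, Finsupp.prod_pow]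
    exact (Integrable.fintype_prod fun i => integrable_pow_gaussianReal (m i)).const_mul c
  | add p q hp hq =>
    simp only [map_add]
    exact hp.add hq

/-- The expectation of `p(X)` for a vector `X` of independent standard Gaussians, as a linear
functional of the polynomial `p`. -/
noncomputable def gaussianExpectation : MvPolynomial σ ℝ →ₗ[ℝ] ℝ where
  toFun p := ∫ x, eval x p ∂(Measure.pi fun _ : σ => gaussianReal 0 1)
  map_add' p q := by
    simp only [map_add]
    exact integral_add (integrable_eval_gaussian p) (integrable_eval_gaussian q)
  map_smul' c p := by
    simp only [smul_eval]
    exact integral_const_mul _ _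

theorem gaussianExpectation_apply (p : MvPolynomial σ ℝ) :
    gaussianExpectation p = ∫ x, eval x p ∂(Measure.pi fun _ : σ => gaussianReal 0 1) :=
  rfl

theorem gaussianExpectation_monomial (m : σ →₀ ℕ) (c : ℝ) :
    gaussianExpectation (monomial m c) = c * ∏ i, ∫ x, x ^ m i ∂(gaussianReal 0 1) := by
  simp only [gaussianExpectation_apply, eval_monomial, Finsupp.prod_pow]
  rw [integral_const_mul, integral_fintype_prod_eq_prod (fun i (x : ℝ) => x ^ m i)]

theorem gaussianExpectation_X_mul (i : σ) (p : MvPolynomial σ ℝ) :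
    gaussianExpectation (X i * p) = gaussianExpectation (pderiv i p) := by
  classical
  induction p using MvPolynomial.induction_on' with
  | add p q hp hq => rw [mul_add, map_add, map_add, map_add, hp, hq]
  | monomial m c =>
    have hne : ∀ j ∈ Finset.univ.erase i,
        ∫ x, x ^ (Finsupp.single i 1 + m : σ →₀ ℕ) j ∂(gaussianReal 0 1) =
          ∫ x, x ^ (m - Finsupp.single i 1 : σ →₀ ℕ) j ∂(gaussianReal 0 1) := fun j hj => by
      simp [Finset.ne_of_mem_erase hj]
    rw [pderiv_monomial, X, monomial_mul, gaussianExpectation_monomial,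
      gaussianExpectation_monomial, ← Finset.mul_prod_erase _ _ (Finset.mem_univ i),
      ← Finset.mul_prod_erase _ _ (Finset.mem_univ i), Finset.prod_congr rfl hne,
      Finsupp.add_apply, Finsupp.tsub_apply, Finsupp.single_eq_same, add_comm 1,
      integral_pow_succ_gaussianReal]
    ring

theorem gaussianExpectation_mul_self_eq_zero {p : MvPolynomial σ ℝ} :
    gaussianExpectation (p * p) = 0 ↔ p = 0 := by
  refine ⟨fun h => ?_, fun h => by rw [h, mul_zero, map_zero]⟩
  have : (gaussianReal 0 1).IsOpenPosMeasure :=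
    (gaussianReal_absolutelyContinuous' 0 one_ne_zero).isOpenPosMeasure
  have hnonneg : (0 : (σ → ℝ) → ℝ) ≤ fun x => eval x (p * p) := fun x => by
    simpa only [map_mul, Pi.zero_apply] using mul_self_nonneg (eval x p)
  have hae := (integral_eq_zero_iff_of_nonneg hnonneg (integrable_eval_gaussian _)).1 h
  have heval := (Continuous.ae_eq_iff_eq _ (continuous_eval (p * p)) continuous_zero).1 hae
  refine mul_self_eq_zero.1 (MvPolynomial.funext fun x => ?_)
  simpa only [map_zero, Pi.zero_apply] using congrFun heval x

end GaussianExpectation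

section Squarefree
open MvPolynomial

variable {n : ℕ} {P : MvPolynomial (Fin n) ℝ}

protected theorem IsHarmonicPoly.pderiv (hP : IsHarmonicPoly P) (i : Fin n) :
    IsHarmonicPoly (MvPolynomial.pderiv i P) := by
  rw [IsHarmonicPoly] at hP ⊢
  simp_rw [pderiv_pderiv_comm _ i, ← map_sum, hP, map_zero]

protected theorem IsHarmonicPoly.leadingForm (hP : IsHarmonicPoly P) :
    IsHarmonicPoly (leadingForm P) := by
  rw [IsHarmonicPoly] at hP ⊢
  ext m
  have hm := congrArg (coeff m) hP
  simp only [_root_.leadingForm, coeff_sum, coeff_pderiv, coeff_homogeneousComponent, coeff_zero,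
    map_add, Finsupp.degree_single] at hm ⊢
  by_cases hdeg : m.degree + 1 + 1 = P.totalDegree
  · simpa [hdeg] using hm
  · simp [hdeg]

/-- By Euler's identity and Gaussian integration by parts,
`k E(P g) = E(ΔP g) + ∑ i, E(∂ᵢP ∂ᵢg)`, and each `∂ᵢP` is harmonic and homogeneous of degree
`k - 1`. -/
theorem IsHarmonicPoly.gaussianExpectation_mul_eq_zero {k : ℕ} {g : MvPolynomial (Fin n) ℝ}
    (hP : IsHarmonicPoly P) (hk : P.IsHomogeneous k) (hg : g.totalDegree < k) :
    gaussianExpectation (P * g) = 0 := by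
  induction k generalizing P g with
  | zero => exact absurd hg (Nat.not_lt_zero _)
  | succ k ih =>
    have hlower (i : Fin n) :
        gaussianExpectation (MvPolynomial.pderiv i P * MvPolynomial.pderiv i g) = 0 := by
      by_cases hi : MvPolynomial.pderiv i g = 0
      · rw [hi, mul_zero, map_zero]
      · have := totalDegree_pderiv_lt hi
        exact ih (hP.pderiv i) hk.pderiv (by omega)
    have hparts (i : Fin n) : gaussianExpectation (X i * MvPolynomial.pderiv i P * g) =
        gaussianExpectation (MvPolynomial.pderiv i (MvPolynomial.pderiv i P) * g) := by
      rw [mul_assoc, gaussianExpectation_X_mul, pderiv_mul, map_add, hlower, add_zero]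
    have hLaplacian : ∑ i, MvPolynomial.pderiv i (MvPolynomial.pderiv i P) = 0 := hP
    have hEuler : (k + 1) • gaussianExpectation (P * g) = 0 := by
      rw [← map_nsmul, ← smul_mul_assoc, ← hk.sum_X_mul_pderiv, Finset.sum_mul, map_sum,
        Finset.sum_congr rfl fun i _ => hparts i, ← map_sum, ← Finset.sum_mul,
        hLaplacian, zero_mul, map_zero]
    exact (smul_eq_zero.1 hEuler).resolve_left k.succ_ne_zero

theorem IsHarmonicPoly.squarefree (hP : IsHarmonicPoly P) (hP0 : P ≠ 0) : Squarefree P := by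
  rintro f ⟨g, rfl⟩
  have hf : f ≠ 0 := by rintro rfl; simp at hP0
  have hg : g ≠ 0 := by rintro rfl; simp at hP0
  have hleading : leadingForm (f * f * g) = leadingForm f * leadingForm f * leadingForm g := by
    rw [leadingForm_mul (mul_ne_zero hf hf) hg, leadingForm_mul hf hf]
  suffices hdeg : f.totalDegree = 0 by
    rw [totalDegree_eq_zero_iff_eq_C] at hdeg
    rw [hdeg] at hf ⊢
    exact (IsUnit.mk0 _ (C_ne_zero.1 hf)).map C
  by_contra hdeg
  have horth : gaussianExpectation (leadingForm (f * f * g) * leadingForm g) = 0 := by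
    refine hP.leadingForm.gaussianExpectation_mul_eq_zero (leadingForm_isHomogeneous _) ?_
    rw [(leadingForm_isHomogeneous g).totalDegree (leadingForm_ne_zero hg),
      totalDegree_mul_of_isDomain (mul_ne_zero hf hf) hg, totalDegree_mul_of_isDomain hf hf]
    omega
  rw [hleading, show leadingForm f * leadingForm f * leadingForm g * leadingForm g =
    leadingForm f * leadingForm g * (leadingForm f * leadingForm g) by ring,
    gaussianExpectation_mul_self_eq_zero] at horth
  exact mul_ne_zero (leadingForm_ne_zero hf) (leadingForm_ne_zero hg) horth

end Squarefree

section LineRestriction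
open Polynomial

variable {σ R : Type*}

section CommSemiring
variable [CommSemiring R]

theorem totalDegree_aeval_le {τ : Type*} {f : σ → MvPolynomial τ R} {d : ℕ}
    (hf : ∀ i, (f i).totalDegree ≤ d) (p : MvPolynomial σ R) :
    (MvPolynomial.aeval f p).totalDegree ≤ p.totalDegree * d := by
  rw [MvPolynomial.aeval_def, MvPolynomial.eval₂_eq]
  refine MvPolynomial.totalDegree_finsetSum_le fun m hm => ?_
  calc (algebraMap R (MvPolynomial τ R) (p.coeff m) * ∏ i ∈ m.support, f i ^ m i).totalDegree
      ≤ 0 + ∑ i ∈ m.support, (f i ^ m i).totalDegree :=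
        (MvPolynomial.totalDegree_mul _ _).trans <| add_le_add
          (MvPolynomial.totalDegree_C _).le (MvPolynomial.totalDegree_finsetProd _ _)
    _ ≤ ∑ i ∈ m.support, m i * d := by
        rw [zero_add]
        exact Finset.sum_le_sum fun i _ =>
          (MvPolynomial.totalDegree_pow _ _).trans (Nat.mul_le_mul_left _ (hf i))
    _ ≤ p.totalDegree * d := by
        rw [← Finset.sum_mul]
        exact Nat.mul_le_mul_right _ (MvPolynomial.le_totalDegree hm)

theorem aeval_mul_const_of_isHomogeneous {A : Type*} [CommSemiring A] [Algebra R A]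
    {p : MvPolynomial σ R} {k : ℕ} (hp : p.IsHomogeneous k) (f : σ → A) (y : A) :
    MvPolynomial.aeval (fun i => f i * y) p = MvPolynomial.aeval f p * y ^ k := by
  simp only [MvPolynomial.aeval_def, MvPolynomial.eval₂_eq, Finset.sum_mul]
  refine Finset.sum_congr rfl fun m hm => ?_
  rw [hp.degree_eq_sum_deg_support hm]
  simp only [mul_pow, Finset.prod_mul_distrib, Finset.prod_pow_eq_pow_sum, mul_assoc]

/-- The restriction of a polynomial to the lines of direction `v`: `lineSubst v p` is `p(z + s v)`
as a polynomial in the parameter `s`, with coefficients polynomials in the base point `z`. It is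
built in `R[z, s]`, where `s` is the variable `none`, so that the total degree is the joint degree
in `(z, s)`. -/
noncomputable def lineSubst (v : σ → R) : MvPolynomial σ R →ₐ[R] (MvPolynomial σ R)[X] :=
  (MvPolynomial.optionEquivLeft R σ).toAlgHom.comp <|
    MvPolynomial.aeval fun i =>
      MvPolynomial.X (some i) + MvPolynomial.C (v i) * MvPolynomial.X none

theorem lineSubst_X (v : σ → R) (i : σ) :
    lineSubst v (MvPolynomial.X i) = C (MvPolynomial.X i) + C (MvPolynomial.C (v i)) * X := by
  simp [lineSubst]

theorem eval_map_lineSubst (v z : σ → R) (p : MvPolynomial σ R) (s : R) :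
    ((lineSubst v p).map (MvPolynomial.eval z)).eval s =
      MvPolynomial.eval (fun i => z i + s * v i) p := by
  have : (evalRingHom s).comp ((mapRingHom (MvPolynomial.eval z)).comp (lineSubst v).toRingHom) =
      MvPolynomial.eval fun i => z i + s * v i :=
    MvPolynomial.ringHom_ext (fun r => by simp) fun i => by simp [lineSubst_X, mul_comm s]
  exact DFunLike.congr_fun this p

theorem totalDegree_coeff_lineSubst_add_le (v : σ → R) (p : MvPolynomial σ R) {j : ℕ}
    (hj : (lineSubst v p).coeff j ≠ 0) :
    ((lineSubst v p).coeff j).totalDegree + j ≤ p.totalDegree := by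
  set q := MvPolynomial.aeval
    (fun i => MvPolynomial.X (some i) + MvPolynomial.C (v i) * MvPolynomial.X none) p
  change (MvPolynomial.optionEquivLeft R σ q).coeff j ≠ 0 at hj
  have hj_le : j ≤ q.totalDegree := calc
    j ≤ (MvPolynomial.optionEquivLeft R σ q).natDegree := le_natDegree_of_ne_zero hj
    _ ≤ q.totalDegree := by
      rw [MvPolynomial.natDegree_optionEquivLeft]
      exact MvPolynomial.degreeOf_le_totalDegree _ _
  have hq_le : q.totalDegree ≤ p.totalDegree := by
    refine (totalDegree_aeval_le (d := 1) (fun i => ?_) p).trans_eq (mul_one _)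
    exact ((MvPolynomial.isHomogeneous_X _ _).add
      (MvPolynomial.isHomogeneous_C_mul_X _ _)).totalDegree_le
  exact (MvPolynomial.totalDegree_coeff_optionEquivLeft_add_le _ _ q j hj_le).trans hq_le

theorem map_eval_zero_lineSubst (v : σ → R) (p : MvPolynomial σ R) :
    (lineSubst v p).map (MvPolynomial.eval 0) = MvPolynomial.aeval (fun i => C (v i) * X) p := by
  have : (mapAlgHom (MvPolynomial.aeval (0 : σ → R))).comp (lineSubst v) =
      MvPolynomial.aeval fun i => C (v i) * X :=
    MvPolynomial.algHom_ext fun i => by simp [lineSubst_X]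
  exact DFunLike.congr_fun this p

theorem coeff_totalDegree_lineSubst (v : σ → R) (p : MvPolynomial σ R) :
    (lineSubst v p).coeff p.totalDegree =
      MvPolynomial.C (MvPolynomial.eval v (leadingForm p)) := by
  have hconst : ((lineSubst v p).coeff p.totalDegree).totalDegree = 0 := by
    by_cases h : (lineSubst v p).coeff p.totalDegree = 0
    · simp [h]
    · have := totalDegree_coeff_lineSubst_add_le v p h
      omega
  have hexpand : (lineSubst v p).map (MvPolynomial.eval 0) =
      ∑ j ∈ Finset.range (p.totalDegree + 1),
        C (MvPolynomial.eval v (MvPolynomial.homogeneousComponent j p)) * X ^ j := by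
    rw [map_eval_zero_lineSubst]
    conv_lhs => rw [← MvPolynomial.sum_homogeneousComponent p, map_sum]
    refine Finset.sum_congr rfl fun j _ => ?_
    rw [aeval_mul_const_of_isHomogeneous (MvPolynomial.homogeneousComponent_isHomogeneous j p)]
    exact congrArg (· * X ^ j) (MvPolynomial.aeval_algebraMap_apply (R[X]) v _)
  have hcoeff := congrArg (fun q => coeff q p.totalDegree) hexpand
  rw [MvPolynomial.totalDegree_eq_zero_iff_eq_C] at hconst
  simp only [coeff_map, finsetSum_coeff, coeff_C_mul_X_pow] at hcoeff
  rw [hconst] at hcoeff ⊢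
  simpa [leadingForm] using hcoeff

theorem natDegree_lineSubst {v : σ → R} {p : MvPolynomial σ R}
    (hv : MvPolynomial.eval v (leadingForm p) ≠ 0) :
    (lineSubst v p).natDegree = p.totalDegree := by
  refine natDegree_eq_of_le_of_coeff_ne_zero (natDegree_le_iff_coeff_eq_zero.2 fun j hj => ?_) ?_
  · by_contra h
    have := totalDegree_coeff_lineSubst_add_le v p h
    omega
  · rwa [coeff_totalDegree_lineSubst, MvPolynomial.C_ne_zero]

theorem leadingCoeff_lineSubst {v : σ → R} {p : MvPolynomial σ R}
    (hv : MvPolynomial.eval v (leadingForm p) ≠ 0) :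
    (lineSubst v p).leadingCoeff = MvPolynomial.C (MvPolynomial.eval v (leadingForm p)) := by
  rw [leadingCoeff, natDegree_lineSubst hv, coeff_totalDegree_lineSubst]

end CommSemiring

section Squarefree

theorem squarefree_C [CommRing R] [IsDomain R] {r : R} (hr : Squarefree r) :
    Squarefree (C r : R[X]) := by
  intro f hf
  have hdeg : f.natDegree = 0 := by
    simpa using natDegree_le_of_dvd ((dvd_mul_right f f).trans hf) (C_ne_zero.2 hr.ne_zero)
  obtain ⟨g, rfl⟩ := natDegree_eq_zero.1 hdeg
  rw [← C_mul, C_dvd_iff_dvd_coeff] at hf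
  exact (hr g (by simpa using hf 0)).map C

theorem squarefree_of_ringEquiv {A B : Type*} [CommSemiring A] [CommSemiring B]
    (e : A ≃+* B) {a : A} (ha : Squarefree a) : Squarefree (e a) := fun f hf => by
  have := ha (e.symm f) (by simpa using map_dvd e.symm hf)
  simpa using this.map e

variable [CommRing R]

/-- The shear `(z, s) ↦ (z + s v, s)` acting on polynomials in `s` with coefficients polynomials
in `z`; it restricts to `lineSubst v` on constants. -/
noncomputable def lineShearHom (v : σ → R) : (MvPolynomial σ R)[X] →+* (MvPolynomial σ R)[X] :=
  eval₂RingHom (lineSubst v).toRingHom X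

theorem lineShearHom_neg_comp (v : σ → R) :
    (lineShearHom (-v)).comp (lineShearHom v) = RingHom.id _ :=
  ringHom_ext' (MvPolynomial.ringHom_ext (by simp [lineShearHom])
    fun i => by simp [lineShearHom, lineSubst_X, add_assoc, ← add_mul]) (by simp [lineShearHom])

theorem squarefree_lineSubst [IsDomain R] (v : σ → R) {p : MvPolynomial σ R} (hp : Squarefree p) :
    Squarefree (lineSubst v p) := by
  let shear : (MvPolynomial σ R)[X] ≃+* (MvPolynomial σ R)[X] :=
    RingEquiv.ofRingHom (lineShearHom v) (lineShearHom (-v))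
      (by simpa using lineShearHom_neg_comp (-v)) (lineShearHom_neg_comp v)
  have : shear (C p) = lineSubst v p := by simp [shear, lineShearHom]
  exact this ▸ squarefree_of_ringEquiv shear (squarefree_C hp)

end Squarefree

end LineRestriction

section DegreeOfResultant
open Polynomial

variable {σ R : Type*} [CommRing R]

theorem totalDegree_det_le {ι : Type*} [Fintype ι] [DecidableEq ι]
    {M : Matrix ι ι (MvPolynomial σ R)} {r c : ι → ℕ} {d : ℕ}
    (hM : ∀ i j, M i j ≠ 0 → (M i j).totalDegree + r i ≤ c j) (hd : ∑ j, c j ≤ d + ∑ i, r i) :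
    M.det.totalDegree ≤ d := by
  rw [Matrix.det_apply']
  refine MvPolynomial.totalDegree_finsetSum_le fun τ _ => ?_
  have hprod : (∏ j, M (τ j) j).totalDegree ≤ d := by
    by_cases hzero : ∃ j, M (τ j) j = 0
    · obtain ⟨j, hj⟩ := hzero
      have : ∏ j, M (τ j) j = 0 := Finset.prod_eq_zero (Finset.mem_univ j) hj
      simp [this]
    push Not at hzero
    have hsum : ∑ j, ((M (τ j) j).totalDegree + r (τ j)) ≤ ∑ j, c j :=
      Finset.sum_le_sum fun j _ => hM _ _ (hzero j)
    rw [Finset.sum_add_distrib, Equiv.sum_comp τ r] at hsum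
    have := MvPolynomial.totalDegree_finsetProd Finset.univ fun j => M (τ j) j
    omega
  rcases Int.units_eq_one_or τ.sign with h | h
  · simpa [h] using hprod
  · simpa [h] using hprod

theorem totalDegree_resultant_le {F G : (MvPolynomial σ R)[X]} {a b : ℕ}
    (hF : ∀ j, F.coeff j ≠ 0 → (F.coeff j).totalDegree + j ≤ a)
    (hG : ∀ j, G.coeff j ≠ 0 → (G.coeff j).totalDegree + j ≤ b) :
    (resultant F G a b).totalDegree ≤ a * b := by
  refine totalDegree_det_le (r := fun i : Fin (a + b) => (i : ℕ))
    (c := Fin.addCases (fun j => b + (j : ℕ)) fun j => a + (j : ℕ)) (fun i j => ?_) ?_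
  · refine Fin.addCases (fun j => ?_) (fun j => ?_) j
    · simp only [sylvester, Matrix.of_apply, Fin.addCases_left]
      split_ifs with hj
      · intro hne
        have := hG _ hne
        rw [Set.mem_Icc] at hj
        omega
      · exact fun hne => absurd rfl hne
    · simp only [sylvester, Matrix.of_apply, Fin.addCases_right]
      split_ifs with hj
      · intro hne
        have := hF _ hne
        rw [Set.mem_Icc] at hj
        omega
      · exact fun hne => absurd rfl hne
  · simp only [Fin.sum_univ_add, Fin.addCases_left, Fin.addCases_right, Finset.sum_add_distrib,
      Fin.val_castAdd, Fin.val_natAdd, Finset.sum_const, Finset.card_univ, Fintype.card_fin,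
      smul_eq_mul]
    exact le_of_eq (by ring)

theorem totalDegree_coeff_derivative_add_le {F : (MvPolynomial σ R)[X]} {m : ℕ}
    (hF : ∀ j, F.coeff j ≠ 0 → (F.coeff j).totalDegree + j ≤ m) {j : ℕ}
    (hj : (derivative F).coeff j ≠ 0) :
    ((derivative F).coeff j).totalDegree + j ≤ m - 1 := by
  rw [coeff_derivative, ← Nat.cast_add_one, mul_comm, ← nsmul_eq_mul] at hj ⊢
  have hne : F.coeff (j + 1) ≠ 0 := fun h => hj (by rw [h, smul_zero])
  have hsmul := MvPolynomial.totalDegree_smul_le (j + 1) (F.coeff (j + 1))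
  have := hF _ hne
  omega

end DegreeOfResultant

section NonvanishingResultant
open Polynomial

variable {R : Type*} (K : Type*) [CommRing R] [IsIntegrallyClosed R] [Field K] [Algebra R K]
  [IsFractionRing R K]

theorem squarefree_map_of_monic {F : R[X]} (hF : F.Monic) (hsq : Squarefree F) :
    Squarefree (F.map (algebraMap R K)) := by
  have hinj := IsFractionRing.injective R K
  intro G hG
  obtain ⟨g, hg⟩ := IsIntegrallyClosed.eq_map_mul_C_of_dvd K hF ((dvd_mul_right G G).trans hG)
  have hlead : G.leadingCoeff ≠ 0 := by
    rintro h
    rw [leadingCoeff_eq_zero.1 h, mul_zero, zero_dvd_iff] at hG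
    exact (hF.map (algebraMap R K)).ne_zero hG
  have hg_monic : g.Monic := by
    have h := congrArg leadingCoeff hg
    rw [leadingCoeff_mul, leadingCoeff_C, mul_eq_right₀ hlead] at h
    exact Function.Injective.monic_map_iff hinj |>.2 h
  have hdvd : g * g ∣ F := by
    rw [← map_dvd_map _ hinj (hg_monic.mul hg_monic), Polynomial.map_mul]
    exact (mul_dvd_mul (Dvd.intro _ hg) (Dvd.intro _ hg)).trans hG
  rw [← hg]
  exact ((hsq g hdvd).map (mapRingHom (algebraMap R K))).mul ((IsUnit.mk0 _ hlead).map C)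

theorem squarefree_map_of_isUnit_leadingCoeff {F : R[X]} (hF : IsUnit F.leadingCoeff)
    (hsq : Squarefree F) : Squarefree (F.map (algebraMap R K)) := by
  obtain ⟨u, hu⟩ := hF.exists_left_inv
  have hCu : IsUnit (C u) := (IsUnit.of_mul_eq_one _ hu).map C
  have hmonic : (C u * F).Monic := monic_C_mul_of_mul_leadingCoeff_eq_one hu
  have := squarefree_map_of_monic K hmonic
    ((associated_unit_mul_left F _ hCu).squarefree_iff.2 hsq)
  rw [Polynomial.map_mul] at this
  exact this.squarefree_of_dvd (dvd_mul_left _ _)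

theorem resultant_derivative_ne_zero [IsDomain R] [CharZero R]
    {F : R[X]} (hF : IsUnit F.leadingCoeff) (hsq : Squarefree F) :
    resultant F (derivative F) F.natDegree (F.natDegree - 1) ≠ 0 := by
  have hinj := IsFractionRing.injective R (FractionRing R)
  have hsep : (F.map (algebraMap R (FractionRing R))).Separable :=
    PerfectField.separable_iff_squarefree.2 (squarefree_map_of_isUnit_leadingCoeff _ hF hsq)
  have hdeg := natDegree_map_eq_of_injective hinj F
  have hres := resultant_ne_zero _ _ hsep
  rw [natDegree_derivative, hdeg, derivative_map, resultant_map_map] at hres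
  exact ne_zero_of_map hres

end NonvanishingResultant

section LineDiscriminant
open Polynomial

variable {σ R : Type*} [CommRing R]

/-- The discriminant of `s ↦ p(z + s v)`, as a polynomial in the base point `z`; it is encoded as
the resultant of this polynomial in `s` and its derivative, for the formal degrees `deg p` and
`deg p - 1`. -/
noncomputable def lineDiscr (v : σ → R) (p : MvPolynomial σ R) : MvPolynomial σ R :=
  resultant (lineSubst v p) (derivative (lineSubst v p)) p.totalDegree (p.totalDegree - 1)

theorem totalDegree_lineDiscr_le (v : σ → R) (p : MvPolynomial σ R) :
    (lineDiscr v p).totalDegree ≤ p.totalDegree * (p.totalDegree - 1) :=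
  totalDegree_resultant_le (fun _ => totalDegree_coeff_lineSubst_add_le v p) fun _ =>
    totalDegree_coeff_derivative_add_le fun _ => totalDegree_coeff_lineSubst_add_le v p

theorem map_lineDiscr {S : Type*} [CommRing S] (φ : MvPolynomial σ R →+* S) (v : σ → R)
    (p : MvPolynomial σ R) :
    φ (lineDiscr v p) = resultant ((lineSubst v p).map φ) (derivative ((lineSubst v p).map φ))
      p.totalDegree (p.totalDegree - 1) := by
  rw [lineDiscr, ← resultant_map_map, derivative_map]

theorem lineDiscr_ne_zero {K : Type*} [Field K] [CharZero K] {v : σ → K} {p : MvPolynomial σ K}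
    (hp : Squarefree p) (hv : MvPolynomial.eval v (leadingForm p) ≠ 0) : lineDiscr v p ≠ 0 := by
  have hlead : IsUnit (lineSubst v p).leadingCoeff := by
    rw [leadingCoeff_lineSubst hv]
    exact (IsUnit.mk0 _ hv).map MvPolynomial.C
  have := resultant_derivative_ne_zero hlead (squarefree_lineSubst v hp)
  rwa [natDegree_lineSubst hv] at this

end LineDiscriminant

section RootDistances
open Polynomial

theorem dist_mul_dist_le_two_mul {X : Type*} [PseudoMetricSpace X] {a b c s : X}
    (ha : dist s c ≤ dist s a) (hb : dist s c ≤ dist s b) :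
    dist a b * dist s c ≤ 2 * (dist s a * dist s b) := calc
  dist a b * dist s c ≤ (dist s a + dist s b) * dist s c := by
    gcongr
    exact dist_triangle_left a b s
  _ = dist s a * dist s c + dist s c * dist s b := by ring
  _ ≤ dist s a * dist s b + dist s a * dist s b := by gcongr
  _ = 2 * (dist s a * dist s b) := by ring

theorem prod_prod_erase {ι M : Type*} [Fintype ι] [DecidableEq ι] [CommMonoid M] (w : ι → M) :
    ∏ i, ∏ j ∈ Finset.univ.erase i, w j = (∏ i, w i) ^ (Fintype.card ι - 1) := by
  rw [Finset.prod_comm' (t' := Finset.univ) (s' := fun j => Finset.univ.erase j)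
    fun i j => by simp [ne_comm], ← Finset.prod_pow]
  exact Finset.prod_congr rfl fun j _ => by
    rw [Finset.prod_const, Finset.card_erase_of_mem (Finset.mem_univ j), Finset.card_univ]

theorem exists_prod_dist_mul_dist_pow_le {ι X : Type*} [Fintype ι] [DecidableEq ι] [Nonempty ι]
    [PseudoMetricSpace X] (r : ι → X) (s : X) :
    ∃ i₀, (∏ i, ∏ j ∈ Finset.univ.erase i, dist (r i) (r j)) *
        dist s (r i₀) ^ (Fintype.card ι * (Fintype.card ι - 1)) ≤
      2 ^ (Fintype.card ι * (Fintype.card ι - 1)) *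
        (∏ i, dist s (r i)) ^ (2 * (Fintype.card ι - 1)) := by
  obtain ⟨i₀, hi₀⟩ := Finite.exists_min fun i => dist s (r i)
  have hconst (c : ℝ) : c ^ (Fintype.card ι * (Fintype.card ι - 1)) =
      ∏ i : ι, ∏ _j ∈ Finset.univ.erase i, c := by
    rw [prod_prod_erase, Finset.prod_const, Finset.card_univ, pow_mul]
  have hsquare : (∏ i, dist s (r i)) ^ (2 * (Fintype.card ι - 1)) =
      ∏ i, ∏ j ∈ Finset.univ.erase i, dist s (r i) * dist s (r j) := by
    simp only [Finset.prod_mul_distrib, prod_prod_erase, Finset.prod_const,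
      Finset.card_erase_of_mem (Finset.mem_univ _), Finset.card_univ, Finset.prod_pow]
    rw [two_mul, pow_add]
  refine ⟨i₀, ?_⟩
  simp only [hconst, hsquare, ← Finset.prod_mul_distrib]
  exact Finset.prod_le_prod (fun i _ => Finset.prod_nonneg fun j _ => by positivity) fun i _ =>
    Finset.prod_le_prod (fun j _ => by positivity) fun j _ =>
      dist_mul_dist_le_two_mul (hi₀ i) (hi₀ j)

section Field
variable {ι K : Type*} [Fintype ι] [Field K]

theorem exists_eq_C_mul_nodal {p : K[X]} (hp : p.Splits) {k : ℕ} (hk : p.natDegree = k) :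
    ∃ r : Fin k → K, p = C p.leadingCoeff * Lagrange.nodal Finset.univ r := by
  obtain rfl : p.roots.toList.length = k := by
    rw [Multiset.length_toList, ← hp.natDegree_eq_card_roots, hk]
  refine ⟨p.roots.toList.get, ?_⟩
  have hroots : Finset.univ.val.map p.roots.toList.get = p.roots := by
    rw [Fin.univ_val_map, List.ofFn_get, Multiset.coe_toList]
  conv_lhs => rw [hp.eq_prod_roots, ← hroots, Multiset.map_map]
  rfl

theorem natDegree_C_mul_nodal {c : K} (hc : c ≠ 0) (r : ι → K) :
    (C c * Lagrange.nodal Finset.univ r).natDegree = Fintype.card ι := by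
  rw [natDegree_C_mul hc, Lagrange.natDegree_nodal, Finset.card_univ]

theorem eval_C_mul_nodal (c : K) (r : ι → K) (x : K) :
    (C c * Lagrange.nodal Finset.univ r).eval x = c * ∏ i, (x - r i) := by
  rw [eval_mul, eval_C, Lagrange.eval_nodal]

theorem resultant_derivative_C_mul_nodal [DecidableEq ι] {c : K} (hc : c ≠ 0) (r : ι → K) :
    resultant (C c * Lagrange.nodal Finset.univ r)
        (derivative (C c * Lagrange.nodal Finset.univ r)) (Fintype.card ι) (Fintype.card ι - 1) =
      c ^ (Fintype.card ι - 1) * ∏ i, c * ∏ j ∈ Finset.univ.erase i, (r i - r j) := by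
  set p := C c * Lagrange.nodal Finset.univ r with hp
  have hdeg : p.natDegree = Fintype.card ι := natDegree_C_mul_nodal hc r
  have hlead : p.leadingCoeff = c := by
    rw [hp, leadingCoeff_mul, leadingCoeff_C, Lagrange.nodal_monic.leadingCoeff, mul_one]
  have hroots : p.roots = Finset.univ.val.map r := by
    rw [hp, roots_C_mul _ hc, Lagrange.nodal, Finset.prod,
      ← Function.comp_def (fun a => X - C a) r, ← Multiset.map_map, roots_multiset_prod_X_sub_C]
  have hsplits : p.Splits :=
    (Splits.C c).mul (Splits.prod fun i _ => Splits.X_sub_C (r i))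
  have hderiv (i : ι) :
      (derivative p).eval (r i) = c * ∏ j ∈ Finset.univ.erase i, (r i - r j) := by
    rw [hp, derivative_C_mul, eval_mul, eval_C,
      Lagrange.eval_nodal_derivative_eval_node_eq (Finset.mem_univ i), Lagrange.eval_nodal]
  have hres := resultant_eq_prod_eval p (derivative p) (Fintype.card ι - 1)
    ((natDegree_derivative_le p).trans_eq (by rw [hdeg])) hsplits
  rw [hdeg, hlead, hroots, Multiset.map_map] at hres
  rw [hres]
  exact congrArg _ (Finset.prod_congr rfl fun i _ => hderiv i)

end Field

variable {ι K : Type*} [Fintype ι] [NormedField K]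

theorem exists_norm_mul_norm_sub_pow_le [Nonempty ι] (c : K) (r : ι → K) (x : K) :
    ∃ i, ‖c‖ * ‖x - r i‖ ^ Fintype.card ι ≤
      ‖(C c * Lagrange.nodal Finset.univ r).eval x‖ := by
  obtain ⟨i₀, hi₀⟩ := Finite.exists_min fun i => ‖x - r i‖
  refine ⟨i₀, ?_⟩
  rw [eval_C_mul_nodal, norm_mul, norm_prod, ← Finset.card_univ, ← Finset.prod_const]
  gcongr with i
  exact hi₀ i

theorem exists_norm_resultant_derivative_mul_norm_sub_pow_le [Nonempty ι] {c : K}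
    (hc : c ≠ 0) (r : ι → K) (x : K) :
    ∃ i, ‖resultant (C c * Lagrange.nodal Finset.univ r)
          (derivative (C c * Lagrange.nodal Finset.univ r)) (Fintype.card ι)
          (Fintype.card ι - 1)‖ * ‖x - r i‖ ^ (Fintype.card ι * (Fintype.card ι - 1)) ≤
      ‖c‖ * 2 ^ (Fintype.card ι * (Fintype.card ι - 1)) *
        ‖(C c * Lagrange.nodal Finset.univ r).eval x‖ ^ (2 * (Fintype.card ι - 1)) := by
  classical
  obtain ⟨i₀, hi₀⟩ := exists_prod_dist_mul_dist_pow_le r x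
  refine ⟨i₀, ?_⟩
  have hcard := Fintype.card_pos (α := ι)
  simp only [dist_eq_norm] at hi₀
  rw [resultant_derivative_C_mul_nodal hc, eval_C_mul_nodal]
  simp only [norm_mul, norm_pow, norm_prod, Finset.prod_mul_distrib, Finset.prod_const,
    Finset.card_univ]
  set k := Fintype.card ι
  have hpow : ‖c‖ ^ (k - 1) * ‖c‖ ^ k = ‖c‖ * ‖c‖ ^ (2 * (k - 1)) := by
    rw [← pow_add, ← pow_succ']
    congr 1
    omega
  calc ‖c‖ ^ (k - 1) * (‖c‖ ^ k * ∏ i, ∏ j ∈ Finset.univ.erase i, ‖r i - r j‖) *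
        ‖x - r i₀‖ ^ (k * (k - 1))
      = ‖c‖ ^ (k - 1) * ‖c‖ ^ k * ((∏ i, ∏ j ∈ Finset.univ.erase i, ‖r i - r j‖) *
          ‖x - r i₀‖ ^ (k * (k - 1))) := by ring
    _ ≤ ‖c‖ ^ (k - 1) * ‖c‖ ^ k *
          (2 ^ (k * (k - 1)) * (∏ i, ‖x - r i‖) ^ (2 * (k - 1))) := by gcongr
    _ = ‖c‖ * 2 ^ (k * (k - 1)) * (‖c‖ * ∏ i, ‖x - r i‖) ^ (2 * (k - 1)) := by
        rw [hpow]
        ring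

end RootDistances

section LineIntegrals
open scoped ENNReal

theorem rpow_neg_antitone {θ : ℝ} (hθ : 0 ≤ θ) : Antitone fun x : ℝ≥0∞ => x ^ (-θ) := by
  intro x y hxy
  simp only [ENNReal.rpow_neg]
  exact ENNReal.inv_le_inv.2 (ENNReal.rpow_le_rpow hxy hθ)

theorem enorm_norm_rpow {E : Type*} [NormedAddCommGroup E] {x : E} (hx : x ≠ 0) (a : ℝ) :
    ‖‖x‖ ^ a‖ₑ = ‖x‖ₑ ^ a := by
  rw [Real.enorm_eq_ofReal (by positivity), ← ENNReal.ofReal_rpow_of_pos (norm_pos_iff.2 hx),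
    ofReal_norm]

theorem enorm_norm_rpow_le {E : Type*} [NormedAddCommGroup E] (x : E) {a : ℝ} (ha : a < 0) :
    ‖‖x‖ ^ a‖ₑ ≤ ‖x‖ₑ ^ a := by
  rcases eq_or_ne x 0 with rfl | hx
  · simp [ENNReal.zero_rpow_of_neg ha]
  · exact (enorm_norm_rpow hx a).le

theorem setLIntegral_ball_enorm_rpow_neg_lt_top {E : Type*} [NormedAddCommGroup E]
    [NormedSpace ℝ E] [FiniteDimensional ℝ E] [MeasurableSpace E] [BorelSpace E] (μ : Measure E)
    [μ.IsAddHaarMeasure] (hE : 1 ≤ Module.finrank ℝ E) {θ : ℝ} (hθ : θ < Module.finrank ℝ E)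
    (R : ℝ) : ∫⁻ x in ball 0 R, ‖x‖ₑ ^ (-θ) ∂μ < ⊤ := by
  have : Nontrivial E := Module.nontrivial_of_finrank_pos (R := ℝ) hE
  have hint : IntegrableOn (fun x : E => ‖x‖ ^ (-θ)) (ball 0 R) μ :=
    integrableOn_ball_of_norm_le_rpow hE hθ (C := 1)
      (.of_forall fun x => by rw [one_mul, Real.norm_of_nonneg (by positivity)])
      (measurable_norm.pow_const _).aestronglyMeasurable
  refine (lintegral_congr_ae (ae_restrict_of_ae ?_)).trans_lt hint.2
  filter_upwards [Measure.ae_ne μ 0] with x hx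
  exact (enorm_norm_rpow hx _).symm

theorem exists_forall_setLIntegral_enorm_sub_rpow_neg_le {θ : ℝ} (hθ₀ : 0 ≤ θ) (hθ₁ : θ < 1) :
    ∃ K : ℝ≥0∞, K ≠ ⊤ ∧ ∀ z : ℂ, ∫⁻ s in Set.Icc (0 : ℝ) 1, ‖(s : ℂ) - z‖ₑ ^ (-θ) ≤ K := by
  set f : ℝ → ℝ≥0∞ := (ball 0 1).indicator fun t => ‖t‖ₑ ^ (-θ) with hf
  have hpoint (z : ℂ) (s : ℝ) : ‖(s : ℂ) - z‖ₑ ^ (-θ) ≤ 1 + f (s - z.re) := by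
    have hre : ‖s - z.re‖ₑ ≤ ‖(s : ℂ) - z‖ₑ := by
      rw [enorm_le_iff_norm_le]
      simpa using Complex.abs_re_le_norm ((s : ℂ) - z)
    refine (rpow_neg_antitone hθ₀ hre).trans ?_
    by_cases h : s - z.re ∈ ball 0 1
    · rw [hf, Set.indicator_of_mem h]
      exact le_add_self
    · have hone : 1 ≤ ‖s - z.re‖ₑ := by
        rw [← ofReal_norm, ENNReal.one_le_ofReal]
        simpa only [mem_ball_zero_iff, not_lt] using h
      calc ‖s - z.re‖ₑ ^ (-θ) ≤ 1 ^ (-θ) := rpow_neg_antitone hθ₀ hone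
        _ = 1 := ENNReal.one_rpow _
        _ ≤ 1 + f (s - z.re) := le_self_add
  refine ⟨1 + ∫⁻ t in ball (0 : ℝ) 1, ‖t‖ₑ ^ (-θ), ENNReal.add_ne_top.2 ⟨ENNReal.one_ne_top,
    (setLIntegral_ball_enorm_rpow_neg_lt_top volume (by simp) (by simpa) 1).ne⟩, fun z => ?_⟩
  calc ∫⁻ s in Set.Icc (0 : ℝ) 1, ‖(s : ℂ) - z‖ₑ ^ (-θ)
      ≤ ∫⁻ s in Set.Icc (0 : ℝ) 1, (1 + f (s - z.re)) := lintegral_mono (hpoint z)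
    _ = 1 + ∫⁻ s in Set.Icc (0 : ℝ) 1, f (s - z.re) := by
        rw [lintegral_add_left measurable_const]
        simp
    _ ≤ 1 + ∫⁻ s, f (s - z.re) := by
        gcongr
        exact Measure.restrict_le_self
    _ = 1 + ∫⁻ t in ball (0 : ℝ) 1, ‖t‖ₑ ^ (-θ) := by
        rw [lintegral_sub_right_eq_self f, hf, lintegral_indicator measurableSet_ball]

theorem exists_forall_setLIntegral_enorm_rpow_neg_le (ι : Type*) [Finite ι] {N : ℕ} {γ : ℝ}
    (hγ : 0 ≤ γ) (hNγ : N * γ < 1) :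
    ∃ K : ℝ≥0∞, K ≠ ⊤ ∧ ∀ (r : ι → ℂ) (A : ℂ) (u : ℝ → ℂ),
      (∀ s : ℝ, ∃ i, ‖A‖ * ‖(s : ℂ) - r i‖ ^ N ≤ ‖u s‖) →
        ∫⁻ s in Set.Icc (0 : ℝ) 1, ‖u s‖ₑ ^ (-γ) ≤ ‖A‖ₑ ^ (-γ) * K := by
  have := Fintype.ofFinite ι
  obtain ⟨K, hK, hroot⟩ := exists_forall_setLIntegral_enorm_sub_rpow_neg_le
    (mul_nonneg N.cast_nonneg hγ) hNγ
  refine ⟨Fintype.card ι * K, ENNReal.mul_ne_top (ENNReal.natCast_ne_top _) hK, fun r A u hu => ?_⟩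
  have hpoint (s : ℝ) :
      ‖u s‖ₑ ^ (-γ) ≤ ‖A‖ₑ ^ (-γ) * ∑ i, ‖(s : ℂ) - r i‖ₑ ^ (-(N * γ)) := by
    obtain ⟨i, hi⟩ := hu s
    rw [← norm_pow, ← norm_mul, ← enorm_le_iff_norm_le, enorm_mul, enorm_pow] at hi
    calc ‖u s‖ₑ ^ (-γ) ≤ (‖A‖ₑ * ‖(s : ℂ) - r i‖ₑ ^ N) ^ (-γ) := rpow_neg_antitone hγ hi
      _ = ‖A‖ₑ ^ (-γ) * ‖(s : ℂ) - r i‖ₑ ^ (-(N * γ)) := by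
          rw [ENNReal.mul_rpow_of_ne_top (by finiteness) (by finiteness), ← ENNReal.rpow_natCast,
            ← ENNReal.rpow_mul, mul_neg]
      _ ≤ ‖A‖ₑ ^ (-γ) * ∑ i, ‖(s : ℂ) - r i‖ₑ ^ (-(N * γ)) := by
          gcongr
          exact Finset.single_le_sum (f := fun i => ‖(s : ℂ) - r i‖ₑ ^ (-(N * γ)))
            (fun _ _ => zero_le) (Finset.mem_univ i)
  calc ∫⁻ s in Set.Icc (0 : ℝ) 1, ‖u s‖ₑ ^ (-γ)
      ≤ ∫⁻ s in Set.Icc (0 : ℝ) 1, ‖A‖ₑ ^ (-γ) * ∑ i, ‖(s : ℂ) - r i‖ₑ ^ (-(N * γ)) :=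
        lintegral_mono hpoint
    _ = ‖A‖ₑ ^ (-γ) * ∑ i, ∫⁻ s in Set.Icc (0 : ℝ) 1, ‖(s : ℂ) - r i‖ₑ ^ (-(N * γ)) := by
        rw [lintegral_const_mul _ (by fun_prop), lintegral_finsetSum _ fun i _ => by fun_prop]
    _ ≤ ‖A‖ₑ ^ (-γ) * (Fintype.card ι * K) := by
        gcongr
        calc ∑ i, ∫⁻ s in Set.Icc (0 : ℝ) 1, ‖(s : ℂ) - r i‖ₑ ^ (-(N * γ)) ≤ ∑ _i : ι, K :=
              Finset.sum_le_sum fun i _ => hroot (r i)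
          _ = Fintype.card ι * K := by simp

theorem setLIntegral_ball_le_setLIntegral_segment {E : Type*} [NormedAddCommGroup E]
    [NormedSpace ℝ E] [MeasurableSpace E] [BorelSpace E] [SecondCountableTopology E]
    (μ : Measure E) [SFinite μ] [μ.IsAddRightInvariant] {f : E → ℝ≥0∞} (hf : Measurable f)
    (v : E) (R : ℝ) :
    ∫⁻ x in ball 0 R, f x ∂μ ≤
      ∫⁻ z in ball 0 (R + ‖v‖), ∫⁻ s in Set.Icc (0 : ℝ) 1, f (z + s • v) ∂volume ∂μ := by
  rw [lintegral_lintegral_swap (by fun_prop)]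
  have htranslate {s : ℝ} (hs : s ∈ Set.Icc (0 : ℝ) 1) :
      ∫⁻ x in ball 0 R, f x ∂μ ≤ ∫⁻ z in ball 0 (R + ‖v‖), f (z + s • v) ∂μ := by
    rw [← lintegral_indicator measurableSet_ball, ← lintegral_indicator measurableSet_ball,
      ← lintegral_add_right_eq_self _ (s • v)]
    refine lintegral_mono fun z => ?_
    by_cases hz : z + s • v ∈ ball (0 : E) R
    · have hz' : z ∈ ball (0 : E) (R + ‖v‖) := by
        rw [mem_ball_zero_iff] at hz ⊢
        calc ‖z‖ ≤ ‖z + s • v‖ + ‖s • v‖ := norm_le_add_norm_add z (s • v)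
          _ < R + ‖v‖ := add_lt_add_of_lt_of_le hz <| by
            rw [norm_smul, Real.norm_of_nonneg hs.1]
            exact mul_le_of_le_one_left (norm_nonneg _) hs.2
      rw [Set.indicator_of_mem hz, Set.indicator_of_mem hz']
    · rw [Set.indicator_of_notMem hz]
      exact zero_le
  calc ∫⁻ x in ball 0 R, f x ∂μ = ∫⁻ _s in Set.Icc (0 : ℝ) 1, ∫⁻ x in ball 0 R, f x ∂μ := by
        simp
    _ ≤ _ := setLIntegral_mono' measurableSet_Icc fun s hs => htranslate hs

end LineIntegrals

section LineRestrictionIntegrals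
open Polynomial
open scoped ENNReal

theorem exists_eval_leadingForm_ne_zero {σ R : Type*} [CommRing R] [IsDomain R] [Infinite R]
    {p : MvPolynomial σ R} (hp : p ≠ 0) :
    ∃ v : σ → R, MvPolynomial.eval v (leadingForm p) ≠ 0 := by
  by_contra! h
  exact leadingForm_ne_zero hp (MvPolynomial.funext fun v => by rw [h v, map_zero])

/-- The one-variable polynomial `s ↦ p(z + s v)` for fixed `z` and `v`, with its coefficients
regarded as complex numbers so that it splits. -/
noncomputable def complexLine {σ : Type*} (v z : σ → ℝ) (p : MvPolynomial σ ℝ) : ℂ[X] :=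
  (lineSubst v p).map ((algebraMap ℝ ℂ).comp (MvPolynomial.eval z))

theorem enorm_complex_ofReal (x : ℝ) : ‖(x : ℂ)‖ₑ = ‖x‖ₑ := by
  simp only [enorm, Complex.nnnorm_real]

variable {σ : Type*} {v : σ → ℝ} {p : MvPolynomial σ ℝ}

theorem eval_complexLine (v z : σ → ℝ) (p : MvPolynomial σ ℝ) (s : ℝ) :
    (complexLine v z p).eval (s : ℂ) = MvPolynomial.eval (fun i => z i + s * v i) p := by
  rw [complexLine, ← Polynomial.map_map, ← eval_map_lineSubst]
  exact eval_map_apply (algebraMap ℝ ℂ) s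

theorem exists_complexLine_eq_C_mul_nodal (hv : MvPolynomial.eval v (leadingForm p) ≠ 0)
    (z : σ → ℝ) :
    ∃ r : Fin p.totalDegree → ℂ, complexLine v z p =
      C ((MvPolynomial.eval v (leadingForm p) : ℝ) : ℂ) * Lagrange.nodal Finset.univ r := by
  set φ := (algebraMap ℝ ℂ).comp (MvPolynomial.eval z)
  have hlead : φ (lineSubst v p).leadingCoeff =
      ((MvPolynomial.eval v (leadingForm p) : ℝ) : ℂ) := by
    simp [φ, leadingCoeff_lineSubst hv]
  have hlead_ne : φ (lineSubst v p).leadingCoeff ≠ 0 := by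
    rwa [hlead, Complex.ofReal_ne_zero]
  rw [← hlead, ← leadingCoeff_map_of_leadingCoeff_ne_zero φ hlead_ne]
  exact exists_eq_C_mul_nodal (IsAlgClosed.splits _) <|
    (natDegree_map_of_leadingCoeff_ne_zero φ hlead_ne).trans (natDegree_lineSubst hv)

theorem exists_forall_setLIntegral_line_le (hv : MvPolynomial.eval v (leadingForm p) ≠ 0)
    (hdeg : p.totalDegree ≠ 0) {γ : ℝ} (hγ : 0 ≤ γ) (hdeg_lt : p.totalDegree * γ < 1) :
    ∃ K : ℝ≥0∞, K ≠ ⊤ ∧ ∀ z : σ → ℝ,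
      ∫⁻ s in Set.Icc (0 : ℝ) 1, ‖MvPolynomial.eval (fun i => z i + s * v i) p‖ₑ ^ (-γ) ≤ K := by
  have : NeZero p.totalDegree := ⟨hdeg⟩
  obtain ⟨K, hK, hbound⟩ :=
    exists_forall_setLIntegral_enorm_rpow_neg_le (Fin p.totalDegree) hγ hdeg_lt
  set c : ℂ := ((MvPolynomial.eval v (leadingForm p) : ℝ) : ℂ) with hc
  refine ⟨‖c‖ₑ ^ (-γ) * K, ENNReal.mul_ne_top ?_ hK, fun z => ?_⟩
  · exact ENNReal.rpow_ne_top_of_ne_zero (by simpa [hc] using hv) (by finiteness)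
  obtain ⟨r, hr⟩ := exists_complexLine_eq_C_mul_nodal hv z
  have := hbound r c (fun s => (complexLine v z p).eval (s : ℂ)) fun s => by
    rw [hr]
    simpa only [Fintype.card_fin] using exists_norm_mul_norm_sub_pow_le c r (s : ℂ)
  simpa only [eval_complexLine, enorm_complex_ofReal] using this

theorem exists_forall_setLIntegral_line_le_lineDiscr
    (hv : MvPolynomial.eval v (leadingForm p) ≠ 0) (hdeg : p.totalDegree ≠ 0) {γ : ℝ} (hγ : 0 ≤ γ)
    (hdeg_lt : (p.totalDegree * (p.totalDegree - 1) : ℕ) * γ < 1) :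
    ∃ K : ℝ≥0∞, K ≠ ⊤ ∧ ∀ z : σ → ℝ,
      ∫⁻ s in Set.Icc (0 : ℝ) 1, ‖MvPolynomial.eval (fun i => z i + s * v i) p‖ₑ ^
          (-((2 * (p.totalDegree - 1) : ℕ) * γ)) ≤
        ‖MvPolynomial.eval z (lineDiscr v p)‖ₑ ^ (-γ) * K := by
  have : NeZero p.totalDegree := ⟨hdeg⟩
  obtain ⟨K, hK, hbound⟩ :=
    exists_forall_setLIntegral_enorm_rpow_neg_le (Fin p.totalDegree) hγ hdeg_lt
  set k := p.totalDegree
  set c : ℂ := ((MvPolynomial.eval v (leadingForm p) : ℝ) : ℂ)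
  have hc_ne : c ≠ 0 := Complex.ofReal_ne_zero.2 hv
  set B : ℂ := (c * 2 ^ (k * (k - 1)))⁻¹ with hB
  have hB_ne : B ≠ 0 := by simp [hB, hc_ne]
  refine ⟨‖B‖ₑ ^ (-γ) * K, ENNReal.mul_ne_top ?_ hK, fun z => ?_⟩
  · exact ENNReal.rpow_ne_top_of_ne_zero (by simpa using hB_ne) (by finiteness)
  set D := MvPolynomial.eval z (lineDiscr v p)
  obtain ⟨r, hr⟩ := exists_complexLine_eq_C_mul_nodal hv z
  have hDr : (D : ℂ) = resultant (complexLine v z p) (derivative (complexLine v z p)) k (k - 1) :=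
    map_lineDiscr ((algebraMap ℝ ℂ).comp (MvPolynomial.eval z)) v p
  have hroot (s : ℝ) : ∃ i, ‖(D : ℂ) * B‖ * ‖(s : ℂ) - r i‖ ^ (k * (k - 1)) ≤
      ‖(complexLine v z p).eval (s : ℂ) ^ (2 * (k - 1))‖ := by
    obtain ⟨i, hi⟩ := exists_norm_resultant_derivative_mul_norm_sub_pow_le hc_ne r (s : ℂ)
    rw [← hr, Fintype.card_fin, ← hDr] at hi
    refine ⟨i, ?_⟩
    have hpos : 0 < ‖c‖ * 2 ^ (k * (k - 1)) := by positivity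
    rw [norm_mul, hB, norm_inv, norm_mul, norm_pow, norm_pow, Complex.norm_two, mul_right_comm,
      ← div_eq_mul_inv, div_le_iff₀' hpos]
    exact hi
  have := hbound r (D * B) _ hroot
  simp only [eval_complexLine, enorm_mul, enorm_pow, enorm_complex_ofReal, ← ENNReal.rpow_natCast,
    ← ENNReal.rpow_mul, mul_neg] at this
  rwa [ENNReal.mul_rpow_of_ne_top (by finiteness) (by finiteness), mul_assoc] at this

end LineRestrictionIntegrals

section LocalIntegrability
open scoped ENNReal

variable {n : ℕ} {P : MvPolynomial (Fin n) ℝ}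

theorem continuous_polyFun (P : MvPolynomial (Fin n) ℝ) : Continuous (polyFun P) :=
  (MvPolynomial.continuous_eval P).comp (by fun_prop)

theorem lintegral_ball_enorm_polyFun_rpow_le (P : MvPolynomial (Fin n) ℝ) (a : ℝ)
    (v : Fin n → ℝ) (R : ℝ) :
    ∫⁻ x in ball 0 R, ‖polyFun P x‖ₑ ^ a ≤
      ∫⁻ z in ball (0 : EuclideanSpace ℝ (Fin n)) (R + ‖WithLp.toLp 2 v‖),
        ∫⁻ s in Set.Icc (0 : ℝ) 1, ‖MvPolynomial.eval (fun i => z i + s * v i) P‖ₑ ^ a :=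
  setLIntegral_ball_le_setLIntegral_segment _
    ((continuous_polyFun P).measurable.enorm.pow_const a) (WithLp.toLp 2 v) R

theorem lintegral_ball_enorm_polyFun_rpow_neg_lt_top (hP : P ≠ 0) {γ : ℝ} (hγ : 0 ≤ γ)
    (hdeg : P.totalDegree * γ < 1) (R : ℝ) : ∫⁻ x in ball 0 R, ‖polyFun P x‖ₑ ^ (-γ) < ⊤ := by
  rcases eq_or_ne P.totalDegree 0 with h0 | h0
  · obtain ⟨c, rfl⟩ : ∃ c, P = MvPolynomial.C c :=
      ⟨_, MvPolynomial.totalDegree_eq_zero_iff_eq_C.1 h0⟩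
    have hc : ‖c‖ₑ ≠ 0 := by simpa using hP
    simp only [polyFun, MvPolynomial.eval_C, setLIntegral_const]
    exact ENNReal.mul_lt_top (ENNReal.rpow_ne_top_of_ne_zero hc (by finiteness)).lt_top
      measure_ball_lt_top
  obtain ⟨v, hv⟩ := exists_eval_leadingForm_ne_zero hP
  obtain ⟨K, hK, hline⟩ := exists_forall_setLIntegral_line_le hv h0 hγ hdeg
  calc ∫⁻ x in ball 0 R, ‖polyFun P x‖ₑ ^ (-γ)
      ≤ ∫⁻ _z in ball (0 : EuclideanSpace ℝ (Fin n)) (R + ‖WithLp.toLp 2 v‖), K :=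
        (lintegral_ball_enorm_polyFun_rpow_le P _ v R).trans (lintegral_mono fun z => hline z)
    _ < ⊤ := by
        rw [setLIntegral_const]
        exact ENNReal.mul_lt_top hK.lt_top measure_ball_lt_top

theorem lintegral_ball_enorm_polyFun_rpow_neg_two_mul_lt_top (hP : Squarefree P)
    (h0 : P.totalDegree ≠ 0) {γ : ℝ} (hγ : 0 ≤ γ)
    (hdeg : (P.totalDegree * (P.totalDegree - 1) : ℕ) * γ < 1) (R : ℝ) :
    ∫⁻ x in ball 0 R, ‖polyFun P x‖ₑ ^ (-((2 * (P.totalDegree - 1) : ℕ) * γ)) < ⊤ := by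
  obtain ⟨v, hv⟩ := exists_eval_leadingForm_ne_zero hP.ne_zero
  obtain ⟨K, hK, hline⟩ := exists_forall_setLIntegral_line_le_lineDiscr hv h0 hγ hdeg
  have hdiscr : (lineDiscr v P).totalDegree * γ < 1 :=
    (mul_le_mul_of_nonneg_right (Nat.cast_le.2 (totalDegree_lineDiscr_le v P)) hγ).trans_lt hdeg
  calc ∫⁻ x in ball 0 R, ‖polyFun P x‖ₑ ^ (-((2 * (P.totalDegree - 1) : ℕ) * γ))
      ≤ ∫⁻ z in ball (0 : EuclideanSpace ℝ (Fin n)) (R + ‖WithLp.toLp 2 v‖),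
          ‖polyFun (lineDiscr v P) z‖ₑ ^ (-γ) * K :=
        (lintegral_ball_enorm_polyFun_rpow_le P _ v R).trans (lintegral_mono fun z => hline z)
    _ = (∫⁻ z in ball (0 : EuclideanSpace ℝ (Fin n)) (R + ‖WithLp.toLp 2 v‖),
          ‖polyFun (lineDiscr v P) z‖ₑ ^ (-γ)) * K := lintegral_mul_const' _ _ hK
    _ < ⊤ := ENNReal.mul_lt_top
        (lintegral_ball_enorm_polyFun_rpow_neg_lt_top (lineDiscr_ne_zero hP hv) hγ hdiscr _)
        hK.lt_top

theorem lintegral_ball_enorm_polyFun_rpow_neg_lt_top_of_squarefree (hP : Squarefree P) {θ : ℝ}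
    (hθ₀ : 0 ≤ θ) (hθ₁ : θ < 1) (hdeg : P.totalDegree * θ < 2) (R : ℝ) :
    ∫⁻ x in ball 0 R, ‖polyFun P x‖ₑ ^ (-θ) < ⊤ := by
  rcases lt_or_ge P.totalDegree 2 with hlt | hge
  · have hdeg_le : (P.totalDegree : ℝ) ≤ 1 := by exact_mod_cast Nat.le_of_lt_succ hlt
    exact lintegral_ball_enorm_polyFun_rpow_neg_lt_top hP.ne_zero hθ₀
      ((mul_le_of_le_one_left hθ₀ hdeg_le).trans_lt hθ₁) R
  set m := P.totalDegree - 1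
  have hm_pos : (0 : ℝ) < m := Nat.cast_pos.2 (by omega)
  have hexp : ((2 * m : ℕ) : ℝ) * (θ / (2 * m)) = θ := by
    push_cast
    field_simp
  have hdeg_discr : ((P.totalDegree * m : ℕ) : ℝ) * (θ / (2 * m)) < 1 := by
    have : ((P.totalDegree * m : ℕ) : ℝ) * (θ / (2 * m)) = P.totalDegree * θ / 2 := by
      push_cast
      field_simp
    linarith
  rw [← hexp]
  exact lintegral_ball_enorm_polyFun_rpow_neg_two_mul_lt_top hP (by omega) (by positivity)
    hdeg_discr R

theorem harmonic_polynomial_weight_integrable_general (hP : Squarefree P) {a : ℝ}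
    (ha : -1 < a) (hdeg : -2 < a * P.totalDegree) :
    LocallyIntegrable fun x => |polyFun P x| ^ a := by
  rcases le_or_gt 0 a with ha₀ | ha₀
  · exact ((continuous_polyFun P).abs.rpow_const fun _ => .inr ha₀).locallyIntegrable
  refine locallyIntegrable_iff.2 fun S hS => ?_
  obtain ⟨R, hR⟩ := hS.isBounded.subset_ball 0
  refine IntegrableOn.mono_set ⟨?_, ?_⟩ hR
  · exact ((continuous_polyFun P).measurable.norm.pow_const a).aestronglyMeasurable
  · rw [hasFiniteIntegral_iff_enorm]
    calc ∫⁻ x in ball 0 R, ‖|polyFun P x| ^ a‖ₑ ≤ ∫⁻ x in ball 0 R, ‖polyFun P x‖ₑ ^ (- -a) :=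
          lintegral_mono fun x => by
            rw [neg_neg]
            exact enorm_norm_rpow_le (polyFun P x) ha₀
      _ < ⊤ := lintegral_ball_enorm_polyFun_rpow_neg_lt_top_of_squarefree hP (by linarith)
          (by linarith) (by linarith) R

end LocalIntegrability

/-- **Integrability of the weight** (Lemma 3.1(i)): for a nonzero harmonic polynomial `P`
of degree `k ≥ 1` on ℝⁿ (`n ≥ 2`) and every `a > -min(1, 2/k)`, the function `|P|^a` is
integrable on the unit ball. -/
theorem harmonic_polynomial_weight_integrable (n : ℕ) (hn : 2 ≤ n)
    (P : MvPolynomial (Fin n) ℝ) (hP0 : P ≠ 0) (hP : IsHarmonicPoly P)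
    (k : ℕ) (hk : 1 ≤ k) (hdeg : P.totalDegree = k)
    (a : ℝ) (ha : -min 1 (2 / (k : ℝ)) < a) :
    IntegrableOn (fun x => |polyFun P x| ^ a)
      (ball (0 : EuclideanSpace ℝ (Fin n)) 1) := by
  rw [neg_lt, lt_min_iff, lt_div_iff₀ (by exact_mod_cast hk)] at ha
  have hloc : LocallyIntegrable fun x => |polyFun P x| ^ a :=
    harmonic_polynomial_weight_integrable_general (hP.squarefree hP0) (by linarith)
      (by rw [hdeg]; linarith)
  exact (hloc.integrableOn_isCompact (isCompact_closedBall 0 1)).mono_set ball_subset_closedBall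
end
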